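/- H_n^f is a Frobenius superalgebra: there is an even isomorphism of left H_n^f-modules H_n^f ≅ Hom_F(H_n^f, F) between the left regular module and the F-linear dual of the right regular module. -/

import Mathlib

set_option maxHeartbeats 1000000

namespace HC

/-- Generators of the affine Hecke–Clifford superalgebra `H_n`. -/
inductive Gen (n : ℕ) : Type
  | X : Fin n → Gen n
  | Xinv : Fin n → Gen n
  | C : Fin n → Gen n
  | T : Fin (n - 1) → Gen n

/-- The node `i` of `Fin n`, for `i : Fin (n-1)` (1-based: the node `i`). -/
def lo {n : ℕ} (i : Fin (n - 1)) : Fin n :=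
  ⟨i.val, by have := i.isLt; omega⟩

/-- The node `i+1` of `Fin n`, for `i : Fin (n-1)`. -/
def hi {n : ℕ} (i : Fin (n - 1)) : Fin n :=
  ⟨i.val + 1, by have := i.isLt; omega⟩

variable (F : Type) [Field F]

/-- The free algebra on the generators. -/
abbrev FA (n : ℕ) : Type := FreeAlgebra F (Gen n)

noncomputable def fx {n : ℕ} (i : Fin n) : FA F n := FreeAlgebra.ι F (Gen.X i)
noncomputable def fxinv {n : ℕ} (i : Fin n) : FA F n := FreeAlgebra.ι F (Gen.Xinv i)
noncomputable def fc {n : ℕ} (i : Fin n) : FA F n := FreeAlgebra.ι F (Gen.C i)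
noncomputable def ft {n : ℕ} (i : Fin (n - 1)) : FA F n := FreeAlgebra.ι F (Gen.T i)

/-- The defining relations of the affine Hecke–Clifford superalgebra, with parameter
`q` and `ξ = q - q⁻¹`. -/
inductive Rel (q : F) (n : ℕ) : FA F n → FA F n → Prop
  | XXinv (i : Fin n) : Rel q n (fx F i * fxinv F i) 1
  | XinvX (i : Fin n) : Rel q n (fxinv F i * fx F i) 1
  | XX (i j : Fin n) : Rel q n (fx F i * fx F j) (fx F j * fx F i)
  | XiXi (i j : Fin n) : Rel q n (fxinv F i * fxinv F j) (fxinv F j * fxinv F i)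
  | XXi (i j : Fin n) (h : i ≠ j) : Rel q n (fx F i * fxinv F j) (fxinv F j * fx F i)
  | CC (i : Fin n) : Rel q n (fc F i * fc F i) 1
  | Canti (i j : Fin n) (h : i ≠ j) : Rel q n (fc F i * fc F j) (-(fc F j * fc F i))
  | CX (i : Fin n) : Rel q n (fc F i * fx F i) (fxinv F i * fc F i)
  | CXi (i : Fin n) : Rel q n (fc F i * fxinv F i) (fx F i * fc F i)
  | CXo (i j : Fin n) (h : i ≠ j) : Rel q n (fc F i * fx F j) (fx F j * fc F i)
  | CXio (i j : Fin n) (h : i ≠ j) : Rel q n (fc F i * fxinv F j) (fxinv F j * fc F i)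
  | Tquad (i : Fin (n - 1)) : Rel q n (ft F i * ft F i) ((q - q⁻¹) • ft F i + 1)
  | Tbraid (i j : Fin (n - 1)) (h : (j : ℕ) = (i : ℕ) + 1) :
      Rel q n (ft F i * ft F j * ft F i) (ft F j * ft F i * ft F j)
  | TTfar (i j : Fin (n - 1)) (h : (i : ℕ) + 1 < (j : ℕ)) :
      Rel q n (ft F i * ft F j) (ft F j * ft F i)
  | TC (i : Fin (n - 1)) : Rel q n (ft F i * fc F (lo i)) (fc F (hi i) * ft F i)
  | TCo (i : Fin (n - 1)) (j : Fin n) (h1 : j ≠ lo i) (h2 : j ≠ hi i) :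
      Rel q n (ft F i * fc F j) (fc F j * ft F i)
  | TXo (i : Fin (n - 1)) (j : Fin n) (h1 : j ≠ lo i) (h2 : j ≠ hi i) :
      Rel q n (ft F i * fx F j) (fx F j * ft F i)
  | TXio (i : Fin (n - 1)) (j : Fin n) (h1 : j ≠ lo i) (h2 : j ≠ hi i) :
      Rel q n (ft F i * fxinv F j) (fxinv F j * ft F i)
  | cross (i : Fin (n - 1)) :
      Rel q n ((ft F i + (q - q⁻¹) • (fc F (lo i) * fc F (hi i))) * fx F (lo i) * ft F i)
        (fx F (hi i))

/-- The affine Hecke–Clifford superalgebra `H_n` over `F` with parameter `q`. -/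
abbrev H (q : F) (n : ℕ) : Type := RingQuot (Rel F q n)

noncomputable def X (q : F) {n : ℕ} (i : Fin n) : H F q n :=
  RingQuot.mkAlgHom F (Rel F q n) (fx F i)

noncomputable def Xinv (q : F) {n : ℕ} (i : Fin n) : H F q n :=
  RingQuot.mkAlgHom F (Rel F q n) (fxinv F i)

noncomputable def C (q : F) {n : ℕ} (i : Fin n) : H F q n :=
  RingQuot.mkAlgHom F (Rel F q n) (fc F i)

noncomputable def T (q : F) {n : ℕ} (i : Fin (n - 1)) : H F q n :=
  RingQuot.mkAlgHom F (Rel F q n) (ft F i)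

/-- `q` is either a primitive root of unity of odd order (including `q = 1`)
or not a root of unity at all (and `q ≠ 0`). -/
def GoodParam (q : F) : Prop :=
  q ≠ 0 ∧ ((∃ m : ℕ, Odd m ∧ IsPrimitiveRoot q m) ∨ ∀ m : ℕ, 0 < m → q ^ m ≠ 1)

/-- `X_i^a` for an integer exponent `a ∈ ℤ`. -/
noncomputable def XZ (q : F) {n : ℕ} (i : Fin n) (a : ℤ) : H F q n :=
  if 0 ≤ a then X F q i ^ a.toNat else Xinv F q i ^ (-a).toNat

/-- The monomial `X^α = X_1^{α_1} ⋯ X_n^{α_n}` for `α ∈ ℤ^n`. -/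
noncomputable def Xmon (q : F) {n : ℕ} (α : Fin n → ℤ) : H F q n :=
  ((List.finRange n).map fun i => XZ F q i (α i)).prod

/-- The monomial `C^β = C_1^{β_1} ⋯ C_n^{β_n}` for `β ∈ {0,1}^n`. -/
noncomputable def Cmon (q : F) {n : ℕ} (β : Fin n → Bool) : H F q n :=
  ((List.finRange n).map fun i => if β i then C F q i else 1).prod

/-- The basic transposition `s_i = (i, i+1)` of `S_n`. -/
def s {n : ℕ} (i : Fin (n - 1)) : Equiv.Perm (Fin n) := Equiv.swap (lo i) (hi i)

/-- The Coxeter length (number of inversions) of a permutation of `Fin n`. -/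
def len {n : ℕ} (w : Equiv.Perm (Fin n)) : ℕ :=
  ((Finset.univ : Finset (Fin n × Fin n)).filter fun p => p.1 < p.2 ∧ w p.2 < w p.1).card

/-- `Tw` is the family of standard basis elements `T_w`, `w ∈ S_n`: it satisfies
`T_1 = 1`, `T_{s_i} = T_i`, and `T_{s_i w} = T_i T_w` whenever `ℓ(s_i w) = ℓ(w) + 1`.
These conditions determine the family uniquely. -/
def IsTFam (q : F) {n : ℕ} (Tw : Equiv.Perm (Fin n) → H F q n) : Prop :=
  Tw 1 = 1 ∧ (∀ i : Fin (n - 1), Tw (s i) = T F q i) ∧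
    ∀ (i : Fin (n - 1)) (w : Equiv.Perm (Fin n)),
      len (s i * w) = len w + 1 → Tw (s i * w) = T F q i * Tw w

/-- `h` is the quantum characteristic of `q`:  the smallest positive integer with
`q^{1-h} + q^{3-h} + ⋯ + q^{h-1} = 0`. -/
def qcharEq (q : F) (h : ℕ) : Prop :=
  0 < h ∧ (∑ k ∈ Finset.range h, q ^ (1 - (h : ℤ) + 2 * (k : ℤ))) = 0 ∧
    ∀ h' : ℕ, 0 < h' → h' < h →
      (∑ k ∈ Finset.range h', q ^ (1 - (h' : ℤ) + 2 * (k : ℤ))) ≠ 0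

/-- `i ∈ I = {0, 1, …, ℓ}` where `ℓ = (h-1)/2` (no condition if the quantum
characteristic is infinite). -/
def memI (q : F) (i : ℕ) : Prop := ∀ h : ℕ, qcharEq F q h → 2 * i + 1 ≤ h

/-- `q(i) = 2(q^{2i+1} + q^{-2i-1})/(q + q⁻¹)`. -/
noncomputable def qres (q : F) (i : ℕ) : F :=
  2 * (q ^ (2 * i + 1) + q⁻¹ ^ (2 * i + 1)) / (q + q⁻¹)

/-- Index of the block containing position `k` (0-based), for a composition given as a
list of parts. -/
def blk : List ℕ → ℕ → ℕ
  | [], _ => 0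
  | a :: rest, k => if k < a then 0 else blk rest (k - a) + 1

/-- Membership in the Young subgroup `S_μ ⊆ S_n`. -/
def InYoung {n : ℕ} (μ : List ℕ) (w : Equiv.Perm (Fin n)) : Prop :=
  ∀ k : Fin n, blk μ (w k).val = blk μ k.val

/-- `μ` is a composition of `n`. -/
def IsComposition (μ : List ℕ) (n : ℕ) : Prop := (∀ a ∈ μ, 0 < a) ∧ μ.sum = n

/-- The parabolic subalgebra generated by all `X_i^{±1}`, `C_i`, and the `T_j` with
`j` in a set `J` of admissible indices. -/
def parabolicJ (q : F) {n : ℕ} (J : Set (Fin (n - 1))) : Subalgebra F (H F q n) :=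
  Algebra.adjoin F
    ((Set.range fun i : Fin n => X F q i) ∪ (Set.range fun i : Fin n => Xinv F q i) ∪
      (Set.range fun i : Fin n => C F q i) ∪ {h | ∃ j ∈ J, h = T F q j})

/-- The parabolic subalgebra `H_μ` for a composition `μ`. -/
def parabolicC (q : F) {n : ℕ} (μ : List ℕ) : Subalgebra F (H F q n) :=
  parabolicJ F q {j | InYoung μ (s j)}

/-- The classical parabolic subalgebra `H^cl_μ`, generated by the `T_j` with `s_j ∈ S_μ`. -/
def clparC (q : F) {n : ℕ} (μ : List ℕ) : Subalgebra F (H F q n) :=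
  Algebra.adjoin F {h | ∃ j : Fin (n - 1), InYoung μ (s j) ∧ h = T F q j}

/-- The finite Hecke–Clifford subalgebra `H^fn_n`, generated by all `C_i` and `T_j`. -/
def Hfin (q : F) (n : ℕ) : Subalgebra F (H F q n) :=
  Algebra.adjoin F
    ((Set.range fun i : Fin n => C F q i) ∪ {h | ∃ j : Fin (n - 1), h = T F q j})

/-- `x` is a minimal length `(S_μ, S_ν)`-double coset representative. -/
def IsMinDC {n : ℕ} (μ ν : List ℕ) (x : Equiv.Perm (Fin n)) : Prop :=
  ∀ u v : Equiv.Perm (Fin n), InYoung μ u → InYoung ν v → len x ≤ len (u * x * v)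

/-- `w ∈ S_μ x S_ν`. -/
def InDC {n : ℕ} (μ ν : List ℕ) (x w : Equiv.Perm (Fin n)) : Prop :=
  ∃ u v : Equiv.Perm (Fin n), InYoung μ u ∧ InYoung ν v ∧ w = u * x * v

/-- A covering step in the Bruhat order: multiplication by a reflection increasing length. -/
def BruhatStep {n : ℕ} (v w : Equiv.Perm (Fin n)) : Prop :=
  ∃ a b : Fin n, a ≠ b ∧ w = Equiv.swap a b * v ∧ len v < len w

/-- The Bruhat order on `S_n`. -/
def BruhatLE {n : ℕ} : Equiv.Perm (Fin n) → Equiv.Perm (Fin n) → Prop :=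
  Relation.ReflTransGen BruhatStep

/-- The space of `A`-equivariant linear maps between two representations of the
`F`-algebra `A`. -/
def eqvHoms {A : Type} [Ring A] [Algebra F A] {M N : Type}
    [AddCommGroup M] [Module F M] [AddCommGroup N] [Module F N]
    (ρM : A →ₐ[F] Module.End F M) (ρN : A →ₐ[F] Module.End F N) :
    Submodule F (M →ₗ[F] N) where
  carrier := {f | ∀ (x : A) (m : M), f (ρM x m) = ρN x (f m)}
  add_mem' := by
    intro f g hf hg x m
    simp only [LinearMap.add_apply, hf x m, hg x m, map_add]
  zero_mem' := by
    intro x m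
    simp only [LinearMap.zero_apply, map_zero]
  smul_mem' := by
    intro c f hf x m
    simp only [LinearMap.smul_apply, hf x m, map_smul]

/-- `(E, ρE, ι)` is the module induced along the algebra morphism `φ : B →ₐ A` from
the `B`-representation `(M, ρ)`, i.e. `E = A ⊗_B M`, characterized by its universal
property. -/
def IsInducedAlong {A B : Type} [Ring A] [Ring B] [Algebra F A] [Algebra F B]
    (φ : B →ₐ[F] A) {M : Type} [AddCommGroup M] [Module F M]
    (ρ : B →ₐ[F] Module.End F M) {E : Type} [AddCommGroup E] [Module F E]
    (ρE : A →ₐ[F] Module.End F E) (ι : M →ₗ[F] E) : Prop :=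
  (∀ (b : B) (m : M), ι (ρ b m) = ρE (φ b) (ι m)) ∧
    ∀ (P : Type) [AddCommGroup P] [Module F P],
      ∀ (ρP : A →ₐ[F] Module.End F P) (f : M →ₗ[F] P),
        (∀ (b : B) (m : M), f (ρ b m) = ρP (φ b) (f m)) →
        ∃! g : E →ₗ[F] P,
          (∀ (x : A) (e : E), g (ρE x e) = ρP x (g e)) ∧ ∀ m : M, g (ι m) = f m

/-- `δ` is the grading automorphism of the superalgebra `H_n`
(identity on even generators, `-1` on the odd generators `C_i`). -/
def IsGradingAut (q : F) {n : ℕ} (δ : H F q n →ₐ[F] H F q n) : Prop :=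
  (∀ i : Fin n, δ (X F q i) = X F q i) ∧ (∀ i : Fin n, δ (Xinv F q i) = Xinv F q i) ∧
    (∀ i : Fin n, δ (C F q i) = -C F q i) ∧ ∀ i : Fin (n - 1), δ (T F q i) = T F q i

/-- `τ` is the antiautomorphism of `H_n` with `τ(T_i) = T_i + ξ C_i C_{i+1}`,
`τ(C_j) = C_j`, `τ(X_j) = X_j`. -/
def IsTauAntiAut (q : F) {n : ℕ} (τ : H F q n →ₗ[F] H F q n) : Prop :=
  Function.Bijective τ ∧ (∀ a b : H F q n, τ (a * b) = τ b * τ a) ∧ τ 1 = 1 ∧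
    (∀ i : Fin (n - 1),
      τ (T F q i) = T F q i + (q - q⁻¹) • (C F q (lo i) * C F q (hi i))) ∧
    (∀ j : Fin n, τ (C F q j) = C F q j) ∧ (∀ j : Fin n, τ (X F q j) = X F q j) ∧
    ∀ j : Fin n, τ (Xinv F q j) = Xinv F q j

/-- `ρ'` is the representation of the subalgebra `B` obtained from the
`H_ν`-representation `ρν` by twisting with the isomorphism `φ_{x⁻¹}`
(determined by `X_i ↦ X_{x⁻¹ i}`, `C_i ↦ C_{x⁻¹ i}`, `T_w ↦ T_{x⁻¹ w x}`). -/
def IsTwistedRep (q : F) {n : ℕ} (ν : List ℕ) (x : Equiv.Perm (Fin n))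
    (B : Subalgebra F (H F q n)) {M : Type} [AddCommGroup M] [Module F M]
    (ρν : ↥(parabolicC F q (n := n) ν) →ₐ[F] Module.End F M)
    (ρ' : ↥B →ₐ[F] Module.End F M) : Prop :=
  (∀ (i : Fin n) (a : ↥B) (b : ↥(parabolicC F q (n := n) ν)),
      (a : H F q n) = X F q i → (b : H F q n) = X F q (x⁻¹ i) → ρ' a = ρν b) ∧
  (∀ (i : Fin n) (a : ↥B) (b : ↥(parabolicC F q (n := n) ν)),
      (a : H F q n) = Xinv F q i → (b : H F q n) = Xinv F q (x⁻¹ i) → ρ' a = ρν b) ∧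
  (∀ (i : Fin n) (a : ↥B) (b : ↥(parabolicC F q (n := n) ν)),
      (a : H F q n) = C F q i → (b : H F q n) = C F q (x⁻¹ i) → ρ' a = ρν b) ∧
  ∀ (j j' : Fin (n - 1)) (a : ↥B) (b : ↥(parabolicC F q (n := n) ν)),
      lo j' = x⁻¹ (lo j) → (a : H F q n) = T F q j → (b : H F q n) = T F q j' → ρ' a = ρν b

/-- The element `f = a_d X_1^d + ⋯ + a_1 X_1 + a_0` of `H_n`. -/
noncomputable def felem (q : F) (n d : ℕ) (aa : ℕ → F) : H F q n :=
  if h : 0 < n then ∑ i ∈ Finset.range (d + 1), aa i • X F q (⟨0, h⟩ : Fin n) ^ i else 0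

/-- The conditions on the coefficients of `f`: degree `d ≥ 1`, monic, and
`a_i = a_0 a_{d-i}`. -/
def GoodPoly (d : ℕ) (aa : ℕ → F) : Prop :=
  1 ≤ d ∧ aa d = 1 ∧ (∀ i ≤ d, aa i = aa 0 * aa (d - i)) ∧ ∀ i : ℕ, d < i → aa i = 0

/-- The relation generating the two-sided ideal `I_f` of `H_n`. -/
inductive CycRel (q : F) (n d : ℕ) (aa : ℕ → F) : H F q n → H F q n → Prop
  | rel : CycRel q n d aa (felem F q n d aa) 0

/-- The cyclotomic Hecke–Clifford superalgebra `H_n^f = H_n / I_f`. -/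
abbrev Hf (q : F) (n d : ℕ) (aa : ℕ → F) : Type := RingQuot (CycRel F q n d aa)

/-- The canonical quotient map `H_n → H_n^f`. -/
noncomputable def cyc (q : F) (n d : ℕ) (aa : ℕ → F) : H F q n →ₐ[F] Hf F q n d aa :=
  RingQuot.mkAlgHom F (CycRel F q n d aa)

noncomputable def Xf (q : F) (n d : ℕ) (aa : ℕ → F) (i : Fin n) : Hf F q n d aa :=
  cyc F q n d aa (X F q i)
noncomputable def Xinvf (q : F) (n d : ℕ) (aa : ℕ → F) (i : Fin n) : Hf F q n d aa :=
  cyc F q n d aa (Xinv F q i)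
noncomputable def Cf (q : F) (n d : ℕ) (aa : ℕ → F) (i : Fin n) : Hf F q n d aa :=
  cyc F q n d aa (C F q i)
noncomputable def Tf (q : F) (n d : ℕ) (aa : ℕ → F) (i : Fin (n - 1)) : Hf F q n d aa :=
  cyc F q n d aa (T F q i)

/-- `e` is the canonical embedding `H_k^f → H_N^f` (shifting all indices by `sh`;
for `sh = 0` this is the standard identification of `H_k^f` with a subalgebra of
`H_N^f`). -/
def IsCycEmb (q : F) (k N d : ℕ) (aa : ℕ → F) (sh : ℕ)
    (e : Hf F q k d aa →ₐ[F] Hf F q N d aa) : Prop :=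
  (∀ (i : Fin k) (i' : Fin N), (i' : ℕ) = sh + (i : ℕ) →
      e (Xf F q k d aa i) = Xf F q N d aa i') ∧
  (∀ (i : Fin k) (i' : Fin N), (i' : ℕ) = sh + (i : ℕ) →
      e (Xinvf F q k d aa i) = Xinvf F q N d aa i') ∧
  (∀ (i : Fin k) (i' : Fin N), (i' : ℕ) = sh + (i : ℕ) →
      e (Cf F q k d aa i) = Cf F q N d aa i') ∧
  ∀ (j : Fin (k - 1)) (j' : Fin (N - 1)), (j' : ℕ) = sh + (j : ℕ) →
      e (Tf F q k d aa j) = Tf F q N d aa j'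

/-- `δ` is the grading automorphism of the superalgebra `H_n^f`. -/
def IsCycGrading (q : F) (n d : ℕ) (aa : ℕ → F)
    (δ : Hf F q n d aa →ₐ[F] Hf F q n d aa) : Prop :=
  (∀ i : Fin n, δ (Xf F q n d aa i) = Xf F q n d aa i) ∧
  (∀ i : Fin n, δ (Xinvf F q n d aa i) = Xinvf F q n d aa i) ∧
  (∀ i : Fin n, δ (Cf F q n d aa i) = -Cf F q n d aa i) ∧
  ∀ j : Fin (n - 1), δ (Tf F q n d aa j) = Tf F q n d aa j

/-- The elements `f_1 = f`, `f_{i+1} = (T_i + ξ C_i C_{i+1}) f_i T_i` of `H_n`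
(0-based indexing: `fseq k = f_{k+1}`). -/
noncomputable def fseq (q : F) (n d : ℕ) (aa : ℕ → F) : ℕ → H F q n
  | 0 => felem F q n d aa
  | k + 1 =>
    if h : k < n - 1 then
      (T F q (⟨k, h⟩ : Fin (n - 1)) +
          (q - q⁻¹) • (C F q (lo (⟨k, h⟩ : Fin (n - 1))) *
            C F q (hi (⟨k, h⟩ : Fin (n - 1))))) *
        fseq q n d aa k * T F q (⟨k, h⟩ : Fin (n - 1))
    else 0

/-- `f_Z = f_{z_1} ⋯ f_{z_u}` for `Z = {z_1 < ⋯ < z_u} ⊆ {1,…,n}` (0-based). -/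
noncomputable def fZ (q : F) (n d : ℕ) (aa : ℕ → F) (Z : Finset (Fin n)) : H F q n :=
  ((Z.sort (· ≤ ·)).map fun z => fseq F q n d aa (z : ℕ)).prod

/-!
The algebra `H_{n+1}^f` is generated by the `T_i` and the two odd involutions `C_1` and `C_1 X_1`,
with relations that involve only neighbouring strands. Let `K = H_1^f`, and let `A = H_n^f` act on
the strands `2, …, n + 1`. The sum of copies `T_k ⋯ T_1 (K ⊗ A)`, `k ≤ n`, satisfies these
relations, and the orbit map of `1 ⊗ 1` from `H_{n+1}^f` into it is injective. Hence `H_{n+1}^f`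
behaves like a sum of copies of `K ⊗ A`, without any appeal to a basis theorem.

In rank one, the coefficient of `1` in the basis `X_1^m`, `X_1^m C_1`, `m < d`, is a Frobenius form
`res`, because `X_1` is invertible. Given a Frobenius form `λ` on `A`, apply `res ⊗ λ` to the
coordinate `k = 0`. A submodule `U` on which this functional vanishes is zero: nondegeneracy of `λ`
shows that `res` annihilates the first tensor factor of the coordinates of `U`, the involutions
`C_1` and `C_1 X_1` replace `res` by its products with all elements of `K`, and the `T_i` move every
coordinate to the coordinate `0`. Rank zero is the field itself.
-/

/-! ### Hecke–Clifford systems -/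

section Conjugation

variable {E : Type*} [Ring E]

/-- Two elements of a ring anticommute. -/
def Anticommute (x y : E) : Prop := x * y = -(y * x)

theorem Anticommute.symm {x y : E} (h : Anticommute x y) : Anticommute y x := by
  rw [Anticommute, h, neg_neg]

theorem Anticommute.semiconjBy_neg {x y : E} (h : Anticommute x y) :
    SemiconjBy x y (-y) :=
  h.trans (neg_mul y x).symm

theorem Anticommute.mul_commute {x y z : E} (hx : Anticommute x z) (hy : Anticommute y z) :
    Commute (x * y) z := by
  rw [Commute, SemiconjBy, mul_assoc, hy, mul_neg, ← mul_assoc, hx, neg_mul, neg_neg, mul_assoc]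

theorem Anticommute.mul_left_of_commute {x y z : E} (hx : Anticommute x z) (hy : Commute y z) :
    Anticommute (x * y) z := by
  rw [Anticommute, mul_assoc, hy.eq, ← mul_assoc, hx, neg_mul, mul_assoc]

theorem Anticommute.mul_left_of_commute_left {x y z : E} (hx : Commute x z)
    (hy : Anticommute y z) : Anticommute (x * y) z := by
  rw [Anticommute, mul_assoc, hy, mul_neg, ← mul_assoc, hx.eq, mul_assoc]

theorem Anticommute.sub_left {x y z : E} (hx : Anticommute x z) (hy : Anticommute y z) :
    Anticommute (x - y) z := by
  rw [Anticommute, sub_mul, mul_sub, hx, hy, neg_sub, neg_sub_neg]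

theorem eq_of_semiconjBy_unit {u : Eˣ} {x y y' : E} (h : SemiconjBy (u : E) x y)
    (h' : SemiconjBy (u : E) x y') : y = y' :=
  u.isUnit.mul_left_injective (h.eq.symm.trans h'.eq)

theorem commute_of_semiconjBy_unit {u : Eˣ} {x y x' y' : E} (hx : SemiconjBy (u : E) x x')
    (hy : SemiconjBy (u : E) y y') (h : Commute x y) : Commute x' y' :=
  eq_of_semiconjBy_unit (hx.mul_right hy) (h.eq ▸ hy.mul_right hx)

theorem Anticommute.of_semiconjBy_unit {u : Eˣ} {x y x' y' : E} (h : Anticommute x y)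
    (hx : SemiconjBy (u : E) x x') (hy : SemiconjBy (u : E) y y') : Anticommute x' y' :=
  eq_of_semiconjBy_unit (hx.mul_right hy) (h ▸ (hy.mul_right hx).neg_right)

theorem commute_of_semiconjBy_family {n : ℕ} {g : ℕ → Eˣ} {s : ℕ → E}
    (braid : ∀ i, i + 2 < n → g i * g (i + 1) * g i = g (i + 1) * g i * g (i + 1))
    (far : ∀ i j, i + 1 < j → j + 1 < n → Commute (g i) (g j))
    (step : ∀ i, i + 1 < n → SemiconjBy (g i : E) (s i) (s (i + 1)))
    (base : ∀ i, 0 < i → i + 1 < n → Commute (g i : E) (s 0)) {i j : ℕ}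
    (hj : j < n) (hi : i + 1 < n) (hji : j ≠ i) (hji' : j ≠ i + 1) :
    Commute (g i : E) (s j) := by
  induction j using Nat.strong_induction_on generalizing i with
  | _ j ih =>
    rcases j with _ | j
    · exact base i (by omega) hi
    by_cases hj_succ : j = i + 1
    · subst hj_succ
      have semiconj_s : SemiconjBy ((g (i + 1) * g i : Eˣ) : E) (s i) (s (i + 2)) := by
        rw [Units.val_mul]
        exact (step (i + 1) hj).mul_left (step i hi)
      have semiconj_g : SemiconjBy ((g (i + 1) * g i : Eˣ) : E) (g (i + 1)) (g i) := by
        rw [SemiconjBy]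
        norm_cast
        rw [← braid i hj, mul_assoc]
      exact commute_of_semiconjBy_unit semiconj_g semiconj_s
        (ih i (by omega) (by omega) hj (by omega) (by omega))
    · have commute_g : Commute (g j : E) (g i) := by
        rcases lt_or_gt_of_ne hji with h | h
        · exact (far j i h hi).map (Units.coeHom E)
        · exact (far i j (by omega) hj).symm.map (Units.coeHom E)
      exact commute_of_semiconjBy_unit commute_g (step j hj)
        (ih j (by omega) (by omega) hi (by omega) hj_succ)

theorem anticommute_of_semiconjBy_families {n : ℕ} {g g' : ℕ → Eˣ} {s s' : ℕ → E}
    (step : ∀ i, i + 1 < n → SemiconjBy (g i : E) (s i) (s (i + 1)))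
    (step' : ∀ i, i + 1 < n → SemiconjBy (g' i : E) (s' i) (s' (i + 1)))
    (comm : ∀ i, 0 < i → i + 1 < n → Commute (g' i : E) (s 0))
    (comm' : ∀ i j, i + 1 < j → j < n → Commute (g i : E) (s' j))
    (base : 1 < n → Anticommute (s 0) (s' 1)) {i j : ℕ} (hij : i < j) (hj : j < n) :
    Anticommute (s i) (s' j) := by
  have anticommute_zero (k : ℕ) (hk : k + 1 < n) : Anticommute (s 0) (s' (k + 1)) := by
    induction k with
    | zero => exact base hk
    | succ k ih =>
      exact (ih (by omega)).of_semiconjBy_unit (comm (k + 1) (by omega) hk) (step' _ hk)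
  induction i with
  | zero =>
    obtain ⟨k, rfl⟩ := Nat.exists_eq_add_one.mpr hij
    exact anticommute_zero k hj
  | succ i ih =>
    exact (ih (by omega)).of_semiconjBy_unit (step i (by omega)) (comm' i j hij hj)

theorem mul_mul_mul_eq_one_of_involutions {x y : E} (hx : x * x = 1) (hy : y * y = 1) :
    x * y * (y * x) = 1 := by
  rw [mul_assoc, ← mul_assoc y, hy, one_mul, hx]

/-- The family of conjugates `s_{i+1} = g_i s_i g_i⁻¹`. -/
def conjFamily (g : ℕ → Eˣ) (s : E) : ℕ → E
  | 0 => s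
  | i + 1 => g i * conjFamily g s i * (g i)⁻¹.val

theorem conjFamily_semiconjBy (g : ℕ → Eˣ) (s : E) (i : ℕ) :
    SemiconjBy (g i : E) (conjFamily g s i) (conjFamily g s (i + 1)) :=
  Units.mk_semiconjBy (g i) (conjFamily g s i)

theorem conjFamily_mul_self (g : ℕ → Eˣ) {s : E} (h : s * s = 1) (i : ℕ) :
    conjFamily g s i * conjFamily g s i = 1 := by
  induction i with
  | zero => exact h
  | succ i ih =>
    have semiconj := conjFamily_semiconjBy g s i
    exact eq_of_semiconjBy_unit (ih ▸ semiconj.mul_right semiconj) (SemiconjBy.one_right _)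

end Conjugation

section HeckeCliffordSystem

variable {F} {E : Type*} [Ring E] [Algebra F E]

/-- Elements satisfying a presentation of the cyclotomic Hecke–Clifford superalgebra of rank `n`:
Hecke generators `t i = T_{i+1}` together with the two odd involutions `c = C_1`, `e = C_1 X_1`,
so that `X_1 = c * e`. Here `ξ = q - q⁻¹`, and `t 0 - ξ • 1 = T_1⁻¹`; the last three relations say
that `C_1` and `C_1 X_1` anticommute with the conjugate `C_2` of `C_1`, and that `C_1 X_1`
anticommutes with its conjugate by `T_1`. -/
structure HeckeCliffordSystem (ξ : F) (d : ℕ) (aa : ℕ → F) (n : ℕ) (t : ℕ → E) (c e : E) :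
    Prop where
  c_mul_c : c * c = 1
  e_mul_e : e * e = 1
  poly : ∑ i ∈ Finset.range (d + 1), aa i • (c * e) ^ i = 0
  t_mul_t : ∀ i, i + 1 < n → t i * t i = ξ • t i + 1
  t_braid : ∀ i, i + 2 < n → t i * t (i + 1) * t i = t (i + 1) * t i * t (i + 1)
  t_comm : ∀ i j, i + 1 < j → j + 1 < n → t i * t j = t j * t i
  t_mul_c : ∀ i, 0 < i → i + 1 < n → t i * c = c * t i
  t_mul_e : ∀ i, 0 < i → i + 1 < n → t i * e = e * t i
  c_anticommute_c : 1 < n → Anticommute c (t 0 * c * (t 0 - ξ • 1))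
  e_anticommute_e : 1 < n → Anticommute e (t 0 * e * (t 0 - ξ • 1))
  e_anticommute_c : 1 < n → Anticommute e (t 0 * c * (t 0 - ξ • 1))

/-- A solution of the quadratic Hecke relation `t² = ξ t + 1`, as a unit with inverse `t - ξ`. -/
def unitOfQuadratic (ξ : F) (t : E) (h : t * t = ξ • t + 1) : Eˣ where
  val := t
  inv := t - ξ • 1
  val_inv := by simp [mul_sub, h]
  inv_val := by simp [sub_mul, h]

namespace HeckeCliffordSystem

variable {ξ : F} {d : ℕ} {aa : ℕ → F} {n : ℕ} {t : ℕ → E} {c e : E}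

theorem of_le (S : HeckeCliffordSystem ξ d aa n t c e) {k : ℕ} (hk : k ≤ n) :
    HeckeCliffordSystem ξ d aa k t c e where
  c_mul_c := S.c_mul_c
  e_mul_e := S.e_mul_e
  poly := S.poly
  t_mul_t i hi := S.t_mul_t i (by omega)
  t_braid i hi := S.t_braid i (by omega)
  t_comm i j hij hj := S.t_comm i j hij (by omega)
  t_mul_c i h₀ hi := S.t_mul_c i h₀ (by omega)
  t_mul_e i h₀ hi := S.t_mul_e i h₀ (by omega)
  c_anticommute_c h := S.c_anticommute_c (by omega)
  e_anticommute_e h := S.e_anticommute_e (by omega)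
  e_anticommute_c h := S.e_anticommute_c (by omega)

theorem neg (S : HeckeCliffordSystem ξ d aa n t c e) :
    HeckeCliffordSystem ξ d aa n t (-c) (-e) where
  c_mul_c := by simpa using S.c_mul_c
  e_mul_e := by simpa using S.e_mul_e
  poly := by simpa using S.poly
  t_mul_t := S.t_mul_t
  t_braid := S.t_braid
  t_comm := S.t_comm
  t_mul_c i h₀ hi := by simpa using S.t_mul_c i h₀ hi
  t_mul_e i h₀ hi := by simpa using S.t_mul_e i h₀ hi
  c_anticommute_c h := by simpa [Anticommute] using S.c_anticommute_c h
  e_anticommute_e h := by simpa [Anticommute] using S.e_anticommute_e h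
  e_anticommute_c h := by simpa [Anticommute] using S.e_anticommute_c h

/-- The unit `T_{i+1}` of a system, with value `1` outside the range of the Hecke generators. -/
def heckeUnit (S : HeckeCliffordSystem ξ d aa n t c e) (i : ℕ) : Eˣ :=
  if h : i + 1 < n then unitOfQuadratic ξ (t i) (S.t_mul_t i h) else 1

variable (S : HeckeCliffordSystem ξ d aa n t c e)
include S

theorem val_heckeUnit {i : ℕ} (h : i + 1 < n) : (S.heckeUnit i : E) = t i := by
  simp [heckeUnit, h, unitOfQuadratic]

theorem val_inv_heckeUnit {i : ℕ} (h : i + 1 < n) :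
    ((S.heckeUnit i)⁻¹.val : E) = t i - ξ • 1 := by
  rw [heckeUnit, dif_pos h]
  rfl

theorem heckeUnit_braid (i : ℕ) (h : i + 2 < n) :
    S.heckeUnit i * S.heckeUnit (i + 1) * S.heckeUnit i =
      S.heckeUnit (i + 1) * S.heckeUnit i * S.heckeUnit (i + 1) := by
  ext
  push_cast
  rw [S.val_heckeUnit (show i + 1 < n by omega), S.val_heckeUnit h, S.t_braid i h]

theorem heckeUnit_commute (i j : ℕ) (hij : i + 1 < j) (hj : j + 1 < n) :
    Commute (S.heckeUnit i) (S.heckeUnit j) := by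
  ext
  push_cast
  rw [S.val_heckeUnit (show i + 1 < n by omega), S.val_heckeUnit hj, S.t_comm i j hij hj]

/-- The Clifford generators `cSeq i = C_{i+1}` of a system. -/
def cSeq : ℕ → E := conjFamily S.heckeUnit c

/-- The involutions `eSeq i = C_{i+1} X_{i+1}` of a system; as
`C_{i+1} X_{i+1} = T_i⁻¹ C_i X_i T_i`, they are conjugates by the inverse Hecke generators. -/
def eSeq : ℕ → E := conjFamily (fun i => (S.heckeUnit i)⁻¹) e

theorem cSeq_semiconjBy (i : ℕ) : SemiconjBy (S.heckeUnit i : E) (S.cSeq i) (S.cSeq (i + 1)) :=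
  conjFamily_semiconjBy S.heckeUnit c i

theorem eSeq_semiconjBy (i : ℕ) :
    SemiconjBy ((S.heckeUnit i)⁻¹.val : E) (S.eSeq i) (S.eSeq (i + 1)) :=
  conjFamily_semiconjBy (fun i => (S.heckeUnit i)⁻¹) e i

theorem heckeUnit_commute_cSeq {i j : ℕ} (hj : j < n) (hi : i + 1 < n) (hji : j ≠ i)
    (hji' : j ≠ i + 1) : Commute (S.heckeUnit i : E) (S.cSeq j) :=
  commute_of_semiconjBy_family S.heckeUnit_braid S.heckeUnit_commute
    (fun i _ => S.cSeq_semiconjBy i)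
    (fun i h₀ hi => by rw [S.val_heckeUnit hi]; exact S.t_mul_c i h₀ hi) hj hi hji hji'

theorem inv_heckeUnit_commute_eSeq {i j : ℕ} (hj : j < n) (hi : i + 1 < n) (hji : j ≠ i)
    (hji' : j ≠ i + 1) : Commute ((S.heckeUnit i)⁻¹.val : E) (S.eSeq j) :=
  commute_of_semiconjBy_family (g := fun i => (S.heckeUnit i)⁻¹)
    (fun i h => by
      simpa only [mul_inv_rev, ← mul_assoc] using congrArg Inv.inv (S.heckeUnit_braid i h))
    (fun i j hij hj => (S.heckeUnit_commute i j hij hj).inv_inv)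
    (fun i _ => S.eSeq_semiconjBy i)
    (fun i h₀ hi => Commute.units_inv_left <| by
      rw [S.val_heckeUnit hi]; exact S.t_mul_e i h₀ hi) hj hi hji hji'

theorem heckeUnit_commute_eSeq {i j : ℕ} (hj : j < n) (hi : i + 1 < n) (hji : j ≠ i)
    (hji' : j ≠ i + 1) : Commute (S.heckeUnit i : E) (S.eSeq j) := by
  simpa using (S.inv_heckeUnit_commute_eSeq hj hi hji hji').units_inv_left

theorem t_commute_cSeq {i j : ℕ} (hj : j < n) (hi : i + 1 < n) (hji : j ≠ i)
    (hji' : j ≠ i + 1) : Commute (t i) (S.cSeq j) :=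
  S.val_heckeUnit hi ▸ S.heckeUnit_commute_cSeq hj hi hji hji'

theorem t_commute_eSeq {i j : ℕ} (hj : j < n) (hi : i + 1 < n) (hji : j ≠ i)
    (hji' : j ≠ i + 1) : Commute (t i) (S.eSeq j) :=
  S.val_heckeUnit hi ▸ S.heckeUnit_commute_eSeq hj hi hji hji'

theorem t_mul_cSeq {i : ℕ} (hi : i + 1 < n) : t i * S.cSeq i = S.cSeq (i + 1) * t i :=
  S.val_heckeUnit hi ▸ (S.cSeq_semiconjBy i).eq

theorem eSeq_mul_t {i : ℕ} (hi : i + 1 < n) : S.eSeq i * t i = t i * S.eSeq (i + 1) := by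
  have semiconj := (S.eSeq_semiconjBy i).units_inv_symm_left
  rw [inv_inv, S.val_heckeUnit hi] at semiconj
  exact semiconj.eq.symm

theorem cSeq_mul_self (i : ℕ) : S.cSeq i * S.cSeq i = 1 :=
  conjFamily_mul_self _ S.c_mul_c i

theorem eSeq_mul_self (i : ℕ) : S.eSeq i * S.eSeq i = 1 :=
  conjFamily_mul_self _ S.e_mul_e i

theorem cSeq_anticommute_cSeq {i j : ℕ} (hi : i < n) (hj : j < n) (hij : i ≠ j) :
    Anticommute (S.cSeq i) (S.cSeq j) := by
  wlog hlt : i < j generalizing i j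
  · exact (this hj hi hij.symm (by omega)).symm
  refine anticommute_of_semiconjBy_families (fun i _ => S.cSeq_semiconjBy i)
    (fun i _ => S.cSeq_semiconjBy i)
    (fun i _ hi => S.heckeUnit_commute_cSeq (by omega) hi (by omega) (by omega))
    (fun i j _ hj => S.heckeUnit_commute_cSeq hj (by omega) (by omega) (by omega))
    (fun h => ?_) hlt hj
  have base := S.c_anticommute_c h
  rwa [← S.val_inv_heckeUnit h, ← S.val_heckeUnit h] at base

theorem eSeq_anticommute_eSeq {i j : ℕ} (hi : i < n) (hj : j < n) (hij : i ≠ j) :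
    Anticommute (S.eSeq i) (S.eSeq j) := by
  wlog hlt : i < j generalizing i j
  · exact (this hj hi hij.symm (by omega)).symm
  refine anticommute_of_semiconjBy_families (fun i _ => S.eSeq_semiconjBy i)
    (fun i _ => S.eSeq_semiconjBy i)
    (fun i _ hi => S.inv_heckeUnit_commute_eSeq (by omega) hi (by omega) (by omega))
    (fun i j _ hj => S.inv_heckeUnit_commute_eSeq hj (by omega) (by omega) (by omega))
    (fun h => ?_) hlt hj
  have base := S.e_anticommute_e h
  rw [← S.val_inv_heckeUnit h, ← S.val_heckeUnit h] at base
  exact (base.of_semiconjBy_unit (S.eSeq_semiconjBy 0)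
    (Units.mk_semiconjBy (S.heckeUnit 0) e).units_inv_symm_left).symm

theorem eSeq_anticommute_cSeq_of_lt {i j : ℕ} (hij : i < j) (hj : j < n) :
    Anticommute (S.eSeq i) (S.cSeq j) := by
  refine anticommute_of_semiconjBy_families (fun i _ => S.eSeq_semiconjBy i)
    (fun i _ => S.cSeq_semiconjBy i)
    (fun i _ hi => S.heckeUnit_commute_eSeq (by omega) hi (by omega) (by omega))
    (fun i j _ hj =>
      (S.heckeUnit_commute_cSeq hj (by omega) (by omega) (by omega)).units_inv_left)
    (fun h => ?_) hij hj
  have base := S.e_anticommute_c h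
  rwa [← S.val_inv_heckeUnit h, ← S.val_heckeUnit h] at base

theorem cSeq_anticommute_eSeq_of_lt {i j : ℕ} (hij : i < j) (hj : j < n) :
    Anticommute (S.cSeq i) (S.eSeq j) := by
  refine anticommute_of_semiconjBy_families (fun i _ => S.cSeq_semiconjBy i)
    (fun i _ => S.eSeq_semiconjBy i)
    (fun i _ hi =>
      (S.heckeUnit_commute_cSeq (by omega) hi (by omega) (by omega)).units_inv_left)
    (fun i j _ hj => S.heckeUnit_commute_eSeq hj (by omega) (by omega) (by omega))
    (fun h => ?_) hij hj
  exact ((S.eSeq_anticommute_cSeq_of_lt zero_lt_one h).of_semiconjBy_unit (S.eSeq_semiconjBy 0)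
    (S.cSeq_semiconjBy 0).units_inv_symm_left).symm

theorem cSeq_anticommute_eSeq {i j : ℕ} (hi : i < n) (hj : j < n) (hij : i ≠ j) :
    Anticommute (S.cSeq i) (S.eSeq j) := by
  rcases lt_or_gt_of_ne hij with h | h
  · exact S.cSeq_anticommute_eSeq_of_lt h hj
  · exact (S.eSeq_anticommute_cSeq_of_lt h hi).symm

theorem cSeq_mul_eSeq_commute_cSeq {i j : ℕ} (hi : i < n) (hj : j < n) (hij : i ≠ j) :
    Commute (S.cSeq i * S.eSeq i) (S.cSeq j) :=
  (S.cSeq_anticommute_cSeq hi hj hij).mul_commute (S.cSeq_anticommute_eSeq hj hi hij.symm).symm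

theorem cSeq_mul_eSeq_commute_eSeq {i j : ℕ} (hi : i < n) (hj : j < n) (hij : i ≠ j) :
    Commute (S.cSeq i * S.eSeq i) (S.eSeq j) :=
  (S.cSeq_anticommute_eSeq hi hj hij).mul_commute (S.eSeq_anticommute_eSeq hi hj hij)

theorem eSeq_mul_cSeq_commute_cSeq {i j : ℕ} (hi : i < n) (hj : j < n) (hij : i ≠ j) :
    Commute (S.eSeq i * S.cSeq i) (S.cSeq j) :=
  (S.cSeq_anticommute_eSeq hj hi hij.symm).symm.mul_commute (S.cSeq_anticommute_cSeq hi hj hij)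

theorem eSeq_mul_cSeq_commute_eSeq {i j : ℕ} (hi : i < n) (hj : j < n) (hij : i ≠ j) :
    Commute (S.eSeq i * S.cSeq i) (S.eSeq j) :=
  (S.eSeq_anticommute_eSeq hi hj hij).mul_commute (S.cSeq_anticommute_eSeq hi hj hij)

theorem cSeq_mul_eSeq_commute {i j : ℕ} (hi : i < n) (hj : j < n) :
    Commute (S.cSeq i * S.eSeq i) (S.cSeq j * S.eSeq j) := by
  rcases eq_or_ne i j with rfl | hij
  · exact Commute.refl _
  · exact (S.cSeq_mul_eSeq_commute_cSeq hi hj hij).mul_right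
      (S.cSeq_mul_eSeq_commute_eSeq hi hj hij)

theorem eSeq_mul_cSeq_commute {i j : ℕ} (hi : i < n) (hj : j < n) :
    Commute (S.eSeq i * S.cSeq i) (S.eSeq j * S.cSeq j) := by
  rcases eq_or_ne i j with rfl | hij
  · exact Commute.refl _
  · exact (S.eSeq_mul_cSeq_commute_eSeq hi hj hij).mul_right
      (S.eSeq_mul_cSeq_commute_cSeq hi hj hij)

theorem t_inv_mul_t {i : ℕ} (hi : i + 1 < n) : (t i - ξ • 1) * t i = 1 :=
  (unitOfQuadratic ξ (t i) (S.t_mul_t i hi)).inv_mul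

theorem cross {i : ℕ} (hi : i + 1 < n) :
    (t i + ξ • (S.cSeq i * S.cSeq (i + 1))) * (S.cSeq i * S.eSeq i) * t i =
      S.cSeq (i + 1) * S.eSeq (i + 1) := by
  have first_factor : t i + ξ • (S.cSeq i * S.cSeq (i + 1)) =
      S.cSeq (i + 1) * (t i - ξ • 1) * S.cSeq i := by
    rw [S.cSeq_anticommute_cSeq (by omega) hi (by omega), mul_sub, sub_mul, mul_assoc,
      S.t_mul_cSeq hi, ← mul_assoc, S.cSeq_mul_self]
    simp [sub_eq_add_neg]
  calc _ = S.cSeq (i + 1) * (t i - ξ • 1) * (S.cSeq i * S.cSeq i) * (S.eSeq i * t i) := by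
        simp only [first_factor, mul_assoc]
    _ = S.cSeq (i + 1) * ((t i - ξ • 1) * t i) * S.eSeq (i + 1) := by
        rw [S.cSeq_mul_self, S.eSeq_mul_t hi]; simp only [mul_assoc, mul_one]
    _ = _ := by rw [S.t_inv_mul_t hi, mul_one]

end HeckeCliffordSystem

end HeckeCliffordSystem

/-! ### The cyclotomic algebra -/

/-- The algebra `H_n^f`, as a type of its own: sealing the ring structure of the iterated quotient
`Hf` keeps elaboration fast. -/
def CycAlg (q : F) (d : ℕ) (aa : ℕ → F) (n : ℕ) : Type := Hf F q n d aa

noncomputable instance (q : F) (d : ℕ) (aa : ℕ → F) (n : ℕ) : Ring (CycAlg F q d aa n) :=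
  inferInstanceAs (Ring (Hf F q n d aa))

noncomputable instance (q : F) (d : ℕ) (aa : ℕ → F) (n : ℕ) : Algebra F (CycAlg F q d aa n) :=
  inferInstanceAs (Algebra F (Hf F q n d aa))

/-- The quotient map from the affine algebra onto `H_n^f`. -/
noncomputable def toCycAlg (q : F) (d : ℕ) (aa : ℕ → F) (n : ℕ) : H F q n →ₐ[F] CycAlg F q d aa n :=
  cyc F q n d aa

section Relations

variable {F} {q : F} {d : ℕ} {aa : ℕ → F} {n : ℕ}

theorem toCycAlg_surjective : Function.Surjective (toCycAlg F q d aa n) :=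
  RingQuot.mkAlgHom_surjective F (CycRel F q n d aa)

theorem toCycAlg_felem : toCycAlg F q d aa n (felem F q n d aa) = 0 :=
  (RingQuot.mkAlgHom_rel F CycRel.rel).trans (map_zero _)

theorem toCycAlg_mkAlgHom_of_rel {x y : FA F n} (h : Rel F q n x y) :
    toCycAlg F q d aa n (RingQuot.mkAlgHom F (Rel F q n) x) =
      toCycAlg F q d aa n (RingQuot.mkAlgHom F (Rel F q n) y) :=
  congrArg _ (RingQuot.mkAlgHom_rel F h)

/-- The generator `X_{i+1}` of `H_n^f`. -/
noncomputable def cycX (i : Fin n) : CycAlg F q d aa n := toCycAlg F q d aa n (X F q i)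

/-- The generator `X_{i+1}⁻¹` of `H_n^f`. -/
noncomputable def cycXinv (i : Fin n) : CycAlg F q d aa n := toCycAlg F q d aa n (Xinv F q i)

/-- The generator `C_{i+1}` of `H_n^f`. -/
noncomputable def cycC (i : Fin n) : CycAlg F q d aa n := toCycAlg F q d aa n (C F q i)

/-- The generator `T_{i+1}` of `H_n^f`. -/
noncomputable def cycT (i : Fin (n - 1)) : CycAlg F q d aa n := toCycAlg F q d aa n (T F q i)

theorem cycC_mul_self (i : Fin n) : (cycC i * cycC i : CycAlg F q d aa n) = 1 := by
  simpa [cycC, C] using toCycAlg_mkAlgHom_of_rel (Rel.CC (F := F) (q := q) i)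

theorem cycXinv_mul_cycX (i : Fin n) : (cycXinv i * cycX i : CycAlg F q d aa n) = 1 := by
  simpa [cycX, X, cycXinv, Xinv] using
    toCycAlg_mkAlgHom_of_rel (Rel.XinvX (F := F) (q := q) i)

theorem cycC_mul_cycX (i : Fin n) :
    (cycC i * cycX i : CycAlg F q d aa n) = cycXinv i * cycC i := by
  simpa [cycX, X, cycXinv, Xinv, cycC, C] using
    toCycAlg_mkAlgHom_of_rel (Rel.CX (F := F) (q := q) i)

theorem cycC_commute_cycX {i j : Fin n} (h : i ≠ j) :
    Commute (cycC i : CycAlg F q d aa n) (cycX j) := by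
  simpa [Commute, SemiconjBy, cycX, X, cycC, C] using
    toCycAlg_mkAlgHom_of_rel (Rel.CXo (F := F) (q := q) i j h)

theorem cycX_commute (i j : Fin n) : Commute (cycX i : CycAlg F q d aa n) (cycX j) := by
  simpa [Commute, SemiconjBy, cycX, X] using toCycAlg_mkAlgHom_of_rel (Rel.XX (F := F) (q := q) i j)

theorem cycC_anticommute {i j : Fin n} (h : i ≠ j) :
    Anticommute (cycC i : CycAlg F q d aa n) (cycC j) := by
  simpa [Anticommute, cycC, C] using toCycAlg_mkAlgHom_of_rel (Rel.Canti (F := F) (q := q) i j h)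

theorem cycT_mul_self (i : Fin (n - 1)) :
    (cycT i * cycT i : CycAlg F q d aa n) = (q - q⁻¹) • cycT i + 1 := by
  simpa only [map_mul, map_add, map_smul, map_one, cycT, T] using
    toCycAlg_mkAlgHom_of_rel (Rel.Tquad (F := F) (q := q) i)

theorem cycT_braid (i j : Fin (n - 1)) (h : (j : ℕ) = (i : ℕ) + 1) :
    (cycT i * cycT j * cycT i : CycAlg F q d aa n) = cycT j * cycT i * cycT j := by
  simpa [cycT, T] using toCycAlg_mkAlgHom_of_rel (Rel.Tbraid (F := F) (q := q) i j h)

theorem cycT_commute (i j : Fin (n - 1)) (h : (i : ℕ) + 1 < (j : ℕ)) :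
    Commute (cycT i : CycAlg F q d aa n) (cycT j) := by
  simpa [Commute, SemiconjBy, cycT, T] using
    toCycAlg_mkAlgHom_of_rel (Rel.TTfar (F := F) (q := q) i j h)

theorem cycT_mul_cycC (i : Fin (n - 1)) :
    (cycT i * cycC (lo i) : CycAlg F q d aa n) = cycC (hi i) * cycT i := by
  simpa [cycT, T, cycC, C] using toCycAlg_mkAlgHom_of_rel (Rel.TC (F := F) (q := q) i)

theorem cycT_commute_cycC {i : Fin (n - 1)} {j : Fin n} (hlo : j ≠ lo i) (hhi : j ≠ hi i) :
    Commute (cycT i : CycAlg F q d aa n) (cycC j) := by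
  simpa [Commute, SemiconjBy, cycT, T, cycC, C] using
    toCycAlg_mkAlgHom_of_rel (Rel.TCo (F := F) (q := q) i j hlo hhi)

theorem cycT_commute_cycX {i : Fin (n - 1)} {j : Fin n} (hlo : j ≠ lo i) (hhi : j ≠ hi i) :
    Commute (cycT i : CycAlg F q d aa n) (cycX j) := by
  simpa [Commute, SemiconjBy, cycT, T, cycX, X] using
    toCycAlg_mkAlgHom_of_rel (Rel.TXo (F := F) (q := q) i j hlo hhi)

theorem cycT_cross (i : Fin (n - 1)) :
    ((cycT i + (q - q⁻¹) • (cycC (lo i) * cycC (hi i))) * cycX (lo i) * cycT i :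
      CycAlg F q d aa n) = cycX (hi i) := by
  simpa only [map_mul, map_add, map_smul, cycT, T, cycX, X, cycC, C] using
    toCycAlg_mkAlgHom_of_rel (Rel.cross (F := F) (q := q) i)

theorem sum_smul_cycX_pow (m : ℕ) :
    ∑ i ∈ Finset.range (d + 1), aa i • (cycX 0 : CycAlg F q d aa (m + 1)) ^ i = 0 := by
  simpa [felem, cycX] using toCycAlg_felem (q := q) (d := d) (aa := aa) (n := m + 1)

theorem cycT_mul_inv (i : Fin (n - 1)) :
    cycT i * (cycT i - (q - q⁻¹) • 1 : CycAlg F q d aa n) = 1 :=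
  (unitOfQuadratic _ _ (cycT_mul_self i)).mul_inv

theorem cycT_conj_cycC (i : Fin (n - 1)) :
    (cycT i * cycC (lo i) * (cycT i - (q - q⁻¹) • 1) : CycAlg F q d aa n) = cycC (hi i) := by
  rw [cycT_mul_cycC, mul_assoc, cycT_mul_inv, mul_one]

theorem lo_ne_hi (i : Fin (n - 1)) : lo i ≠ hi i := by simp [lo, hi, Fin.ext_iff]

theorem cycCX_anticommute_cycC {i j : Fin n} (h : i ≠ j) :
    Anticommute (cycC i * cycX i : CycAlg F q d aa n) (cycC j) :=
  (cycC_anticommute h).mul_left_of_commute (cycC_commute_cycX h.symm).symm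

theorem cycCX_anticommute {i j : Fin n} (h : i ≠ j) :
    Anticommute (cycC i * cycX i : CycAlg F q d aa n) (cycC j * cycX j) :=
  ((cycCX_anticommute_cycC h).symm.mul_left_of_commute
    ((cycC_commute_cycX h).mul_left (cycX_commute i j)).symm).symm

theorem cycT_semiconjBy_cycCX (i : Fin (n - 1)) :
    SemiconjBy (cycT i : CycAlg F q d aa n) (cycC (hi i) * cycX (hi i))
      (cycC (lo i) * cycX (lo i)) := by
  have cycC_mul_factor : (cycC (hi i) *
      (cycT i + (q - q⁻¹) • (cycC (lo i) * cycC (hi i))) : CycAlg F q d aa n) =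
      (cycT i - (q - q⁻¹) • 1) * cycC (lo i) := by
    rw [cycC_anticommute (lo_ne_hi i), mul_add, ← cycT_mul_cycC, sub_mul, mul_smul_comm, mul_neg,
      ← mul_assoc, cycC_mul_self]
    simp [sub_eq_add_neg]
  rw [SemiconjBy, ← cycT_cross i, ← mul_assoc (cycC _), ← mul_assoc (cycC _), cycC_mul_factor,
    ← mul_assoc, ← mul_assoc, ← mul_assoc, cycT_mul_inv, one_mul]

/-- The Hecke generator `tGen i = T_{i+1}` of `H_n^f`, with value `1` for `i + 1 ≥ n`. -/
noncomputable def tGen (i : ℕ) : CycAlg F q d aa n :=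
  if h : i < n - 1 then cycT ⟨i, h⟩ else 1

/-- The odd involution `C_1` of `H_{m+1}^f`. -/
noncomputable def cGen {m : ℕ} : CycAlg F q d aa (m + 1) := cycC 0

/-- The odd involution `C_1 X_1` of `H_{m+1}^f`. -/
noncomputable def eGen {m : ℕ} : CycAlg F q d aa (m + 1) := cycC 0 * cycX 0

theorem tGen_eq_cycT {i : ℕ} (h : i < n - 1) : (tGen i : CycAlg F q d aa n) = cycT ⟨i, h⟩ :=
  dif_pos h

theorem cGen_mul_eGen {m : ℕ} : (cGen * eGen : CycAlg F q d aa (m + 1)) = cycX 0 := by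
  rw [cGen, eGen, ← mul_assoc, cycC_mul_self, one_mul]

theorem eGen_mul_eGen {m : ℕ} : (eGen * eGen : CycAlg F q d aa (m + 1)) = 1 := by
  rw [eGen]
  nth_rewrite 1 [cycC_mul_cycX]
  rw [mul_assoc, ← mul_assoc (cycC _), cycC_mul_self, one_mul, cycXinv_mul_cycX]

theorem eGen_anticommute_conj {m : ℕ} (h : 0 < m) :
    Anticommute (eGen : CycAlg F q d aa (m + 1)) (tGen 0 * eGen * (tGen 0 - (q - q⁻¹) • 1)) := by
  let u := unitOfQuadratic (q - q⁻¹) (cycT ⟨0, h⟩ : CycAlg F q d aa (m + 1)) (cycT_mul_self _)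
  rw [tGen_eq_cycT h]
  exact ((cycCX_anticommute (lo_ne_hi ⟨0, h⟩)).of_semiconjBy_unit (u := u)
    (Units.mk_semiconjBy u eGen) (cycT_semiconjBy_cycCX ⟨0, h⟩)).symm

theorem heckeCliffordSystem_cycAlg (q : F) (d : ℕ) (aa : ℕ → F) (m : ℕ) :
    HeckeCliffordSystem (q - q⁻¹) d aa (m + 1) (tGen : ℕ → CycAlg F q d aa (m + 1))
      cGen eGen where
  c_mul_c := cycC_mul_self 0
  e_mul_e := eGen_mul_eGen
  poly := by rw [cGen_mul_eGen, sum_smul_cycX_pow]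
  t_mul_t i hi := by rw [tGen_eq_cycT (by omega), cycT_mul_self]
  t_braid i hi := by
    rw [tGen_eq_cycT (i := i) (by omega), tGen_eq_cycT (i := i + 1) (by omega), cycT_braid _ _ rfl]
  t_comm i j hij hj := by
    rw [tGen_eq_cycT (i := i) (by omega), tGen_eq_cycT (i := j) (by omega)]
    exact cycT_commute _ _ hij
  t_mul_c i h₀ hi := by
    rw [tGen_eq_cycT (by omega)]
    exact cycT_commute_cycC (by simp [lo, Fin.ext_iff]; omega) (by simp [HC.hi, Fin.ext_iff])
  t_mul_e i h₀ hi := by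
    have hlo : (0 : Fin (m + 1)) ≠ lo ⟨i, by omega⟩ := by simp [lo, Fin.ext_iff]; omega
    have hhi : (0 : Fin (m + 1)) ≠ HC.hi ⟨i, by omega⟩ := by simp [HC.hi, Fin.ext_iff]
    rw [tGen_eq_cycT (by omega)]
    exact (cycT_commute_cycC hlo hhi).mul_right (cycT_commute_cycX hlo hhi)
  c_anticommute_c h := by
    rw [tGen_eq_cycT (by omega)]
    have hanti := cycC_anticommute (F := F) (q := q) (d := d) (aa := aa)
      (lo_ne_hi (⟨0, by omega⟩ : Fin (m + 1 - 1)))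
    rwa [← cycT_conj_cycC] at hanti
  e_anticommute_e h := eGen_anticommute_conj (by omega)
  e_anticommute_c h := by
    rw [tGen_eq_cycT (by omega)]
    have hanti := cycCX_anticommute_cycC (F := F) (q := q) (d := d) (aa := aa)
      (lo_ne_hi (⟨0, by omega⟩ : Fin (m + 1 - 1)))
    rwa [← cycT_conj_cycC] at hanti

end Relations

section Universal

variable {F} {q : F} {d : ℕ} {aa : ℕ → F} {n : ℕ}

namespace HeckeCliffordSystem

variable {E : Type*} [Ring E] [Algebra F E] {t : ℕ → E} {c e : E}
  (S : HeckeCliffordSystem (q - q⁻¹) d aa n t c e)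
include S

/-- The values of a system on the generators of the affine algebra. -/
noncomputable def genValue : Gen n → E
  | Gen.X i => S.cSeq i * S.eSeq i
  | Gen.Xinv i => S.eSeq i * S.cSeq i
  | Gen.C i => S.cSeq i
  | Gen.T i => t i

theorem lift_genValue_of_rel {x y : FA F n} (h : Rel F q n x y) :
    FreeAlgebra.lift F S.genValue x = FreeAlgebra.lift F S.genValue y := by
  have succ_lt (i : Fin (n - 1)) : (i : ℕ) + 1 < n := by omega
  induction h <;> simp only [fx, fxinv, fc, ft, map_mul, map_add, map_neg, map_smul, map_one,
    FreeAlgebra.lift_ι_apply, genValue]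
  case XXinv i => exact mul_mul_mul_eq_one_of_involutions (S.cSeq_mul_self i) (S.eSeq_mul_self i)
  case XinvX i => exact mul_mul_mul_eq_one_of_involutions (S.eSeq_mul_self i) (S.cSeq_mul_self i)
  case XX i j => exact S.cSeq_mul_eSeq_commute i.2 j.2
  case XiXi i j => exact S.eSeq_mul_cSeq_commute i.2 j.2
  case XXi i j h =>
    exact (S.cSeq_mul_eSeq_commute_eSeq i.2 j.2 (Fin.val_ne_of_ne h)).mul_right
      (S.cSeq_mul_eSeq_commute_cSeq i.2 j.2 (Fin.val_ne_of_ne h))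
  case CC i => exact S.cSeq_mul_self i
  case Canti i j h => exact S.cSeq_anticommute_cSeq i.2 j.2 (Fin.val_ne_of_ne h)
  case CX i => rw [← mul_assoc, S.cSeq_mul_self, mul_assoc, S.cSeq_mul_self, one_mul, mul_one]
  case CXi i => rw [mul_assoc]
  case CXo i j h => exact (S.cSeq_mul_eSeq_commute_cSeq j.2 i.2 (Fin.val_ne_of_ne h.symm)).symm
  case CXio i j h => exact (S.eSeq_mul_cSeq_commute_cSeq j.2 i.2 (Fin.val_ne_of_ne h.symm)).symm
  case Tquad i => exact S.t_mul_t i (succ_lt i)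
  case Tbraid i j h => rw [h, S.t_braid i (by omega)]
  case TTfar i j h => exact S.t_comm i j h (succ_lt j)
  case TC i => exact S.t_mul_cSeq (succ_lt i)
  case TCo i j hlo hhi =>
    exact S.t_commute_cSeq j.2 (succ_lt i) (Fin.val_ne_of_ne hlo) (Fin.val_ne_of_ne hhi)
  case TXo i j hlo hhi =>
    exact (S.t_commute_cSeq j.2 (succ_lt i) (Fin.val_ne_of_ne hlo)
      (Fin.val_ne_of_ne hhi)).mul_right
      (S.t_commute_eSeq j.2 (succ_lt i) (Fin.val_ne_of_ne hlo) (Fin.val_ne_of_ne hhi))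
  case TXio i j hlo hhi =>
    exact (S.t_commute_eSeq j.2 (succ_lt i) (Fin.val_ne_of_ne hlo)
      (Fin.val_ne_of_ne hhi)).mul_right
      (S.t_commute_cSeq j.2 (succ_lt i) (Fin.val_ne_of_ne hlo) (Fin.val_ne_of_ne hhi))
  case cross i => exact S.cross (succ_lt i)

/-- The morphism from the affine algebra attached to a system. -/
noncomputable def affineLift : H F q n →ₐ[F] E :=
  RingQuot.liftAlgHom F ⟨FreeAlgebra.lift F S.genValue, fun _ _ h => S.lift_genValue_of_rel h⟩

theorem affineLift_felem : S.affineLift (felem F q n d aa) = 0 := by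
  rw [felem]
  split_ifs with h
  · have affineLift_X : S.affineLift (X F q ⟨0, h⟩) = c * e := by
      simp [affineLift, X, fx, genValue, cSeq, eSeq, conjFamily]
    simp only [map_sum, map_smul, map_pow, affineLift_X, S.poly]
  · exact map_zero _

/-- The morphism from the cyclotomic algebra attached to a system. -/
noncomputable def lift : CycAlg F q d aa n →ₐ[F] E :=
  RingQuot.liftAlgHom F (s := CycRel F q n d aa) ⟨S.affineLift, fun _ _ h => by
    cases h
    rw [S.affineLift_felem, map_zero]⟩

theorem lift_toCycAlg (x : H F q n) : S.lift (toCycAlg F q d aa n x) = S.affineLift x :=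
  RingQuot.liftAlgHom_mkAlgHom_apply F (s := CycRel F q n d aa) _ _ x

theorem lift_cycT (i : Fin (n - 1)) : S.lift (cycT i) = t i := by
  simp [cycT, lift_toCycAlg, affineLift, T, ft, genValue]

theorem lift_cycC (i : Fin n) : S.lift (cycC i) = S.cSeq i := by
  simp [cycC, lift_toCycAlg, affineLift, C, fc, genValue]

theorem lift_cycX (i : Fin n) : S.lift (cycX i) = S.cSeq i * S.eSeq i := by
  simp [cycX, lift_toCycAlg, affineLift, X, fx, genValue]

theorem lift_tGen {i : ℕ} (hi : i + 1 < n) : S.lift (tGen i) = t i := by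
  rw [tGen_eq_cycT (by omega), S.lift_cycT]

omit S in
theorem lift_cGen {m : ℕ} (S : HeckeCliffordSystem (q - q⁻¹) d aa (m + 1) t c e) :
    S.lift cGen = c :=
  S.lift_cycC 0

omit S in
theorem lift_eGen {m : ℕ} (S : HeckeCliffordSystem (q - q⁻¹) d aa (m + 1) t c e) :
    S.lift eGen = e := by
  rw [eGen, map_mul, S.lift_cycC, S.lift_cycX, ← mul_assoc, S.cSeq_mul_self, one_mul]
  rfl

end HeckeCliffordSystem

theorem subalgebra_cycAlg_eq_top (B : Subalgebra F (CycAlg F q d aa n))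
    (hX : ∀ i, cycX i ∈ B) (hXinv : ∀ i, cycXinv i ∈ B)
    (hC : ∀ i, cycC i ∈ B) (hT : ∀ i, cycT i ∈ B) : B = ⊤ := by
  rw [Algebra.eq_top_iff]
  intro x
  obtain ⟨y, rfl⟩ := toCycAlg_surjective x
  obtain ⟨z, rfl⟩ := RingQuot.mkAlgHom_surjective F (Rel F q n) y
  induction z using FreeAlgebra.induction with
  | grade0 r => simp only [AlgHom.commutes]; exact B.algebraMap_mem r
  | grade1 g =>
    cases g with
    | X i => exact hX i
    | Xinv i => exact hXinv i
    | C i => exact hC i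
    | T i => exact hT i
  | mul a b ha hb => rw [map_mul, map_mul]; exact B.mul_mem ha hb
  | add a b ha hb => rw [map_add, map_add]; exact B.add_mem ha hb

variable (F) in
/-- The elements `c`, `e` and `t i`, for `i + 1 < n`, generate the algebra `E`. -/
def Generates {E : Type*} [Ring E] [Algebra F E] (n : ℕ) (t : ℕ → E) (c e : E) : Prop :=
  Algebra.adjoin F ({c, e} ∪ t '' {i | i + 1 < n}) = ⊤

namespace Generates

variable {E : Type*} [Ring E] [Algebra F E] {t : ℕ → E} {c e : E}

theorem hom_ext {E' : Type*} [Ring E'] [Algebra F E'] (h : Generates F n t c e)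
    {φ ψ : E →ₐ[F] E'} (hc : φ c = ψ c) (he : φ e = ψ e)
    (ht : ∀ i, i + 1 < n → φ (t i) = ψ (t i)) : φ = ψ := by
  refine AlgHom.ext_of_adjoin_eq_top h ?_
  rintro x ((rfl | rfl) | ⟨i, hi, rfl⟩)
  exacts [hc, he, ht i hi]

theorem semiconjBy {E' : Type*} [Ring E'] [Algebra F E'] (h : Generates F n t c e)
    {φ ψ : E →ₐ[F] E'} {u : E'} (hc : SemiconjBy u (φ c) (ψ c)) (he : SemiconjBy u (φ e) (ψ e))
    (ht : ∀ i, i + 1 < n → SemiconjBy u (φ (t i)) (ψ (t i))) (x : E) :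
    SemiconjBy u (φ x) (ψ x) := by
  induction (h ▸ Algebra.mem_top : x ∈ Algebra.adjoin F ({c, e} ∪ t '' {i | i + 1 < n}))
    using Algebra.adjoin_induction with
  | mem x hx =>
    rcases hx with (rfl | rfl) | ⟨i, hi, rfl⟩
    exacts [hc, he, ht i hi]
  | algebraMap r => simpa [SemiconjBy] using (Algebra.commutes r u).symm
  | add x y _ _ hx hy => simpa using hx.add_right hy
  | mul x y _ _ hx hy => simpa using hx.mul_right hy

theorem mul_mem (h : Generates F n t c e) {W : Submodule F E} (hc : ∀ w ∈ W, c * w ∈ W)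
    (he : ∀ w ∈ W, e * w ∈ W) (ht : ∀ i, i + 1 < n → ∀ w ∈ W, t i * w ∈ W) (x : E) {w : E}
    (hw : w ∈ W) : x * w ∈ W := by
  induction (h ▸ Algebra.mem_top : x ∈ Algebra.adjoin F ({c, e} ∪ t '' {i | i + 1 < n}))
    using Algebra.adjoin_induction generalizing w with
  | mem x hx =>
    rcases hx with (rfl | rfl) | ⟨i, hi, rfl⟩
    exacts [hc w hw, he w hw, ht i hi w hw]
  | algebraMap r => rw [← Algebra.smul_def]; exact W.smul_mem r hw
  | add x y _ _ hx hy => rw [add_mul]; exact W.add_mem (hx hw) (hy hw)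
  | mul x y _ _ hx hy => rw [mul_assoc]; exact hx (hy hw)

theorem submodule_eq_top (h : Generates F n t c e) (W : Submodule F E) (one : 1 ∈ W)
    (hc : ∀ w ∈ W, c * w ∈ W) (he : ∀ w ∈ W, e * w ∈ W)
    (ht : ∀ i, i + 1 < n → ∀ w ∈ W, t i * w ∈ W) : W = ⊤ :=
  eq_top_iff.2 fun x _ => mul_one x ▸ h.mul_mem hc he ht x one

end Generates

theorem cycC_mem_and_cycX_mem {m : ℕ} {B : Subalgebra F (CycAlg F q d aa (m + 1))}
    (hc : cGen ∈ B) (he : eGen ∈ B) (ht : ∀ i, cycT i ∈ B) (i : ℕ) (hi : i < m + 1) :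
    cycC ⟨i, hi⟩ ∈ B ∧ cycX ⟨i, hi⟩ ∈ B := by
  induction i with
  | zero => exact ⟨hc, (cGen_mul_eGen (F := F)) ▸ B.mul_mem hc he⟩
  | succ i ih =>
    obtain ⟨cycC_mem, cycX_mem⟩ := ih (by omega)
    let k : Fin (m + 1 - 1) := ⟨i, by omega⟩
    have cycC_succ_mem : cycC (HC.hi k) ∈ B := cycT_conj_cycC (F := F) k ▸
      B.mul_mem (B.mul_mem (ht k) cycC_mem) (B.sub_mem (ht k) (B.smul_mem B.one_mem _))
    exact ⟨cycC_succ_mem, cycT_cross (F := F) k ▸ B.mul_mem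
      (B.mul_mem (B.add_mem (ht k) (B.smul_mem (B.mul_mem cycC_mem cycC_succ_mem) _)) cycX_mem)
      (ht k)⟩

theorem generates_cycAlg (q : F) (d : ℕ) (aa : ℕ → F) (m : ℕ) :
    Generates F (m + 1) (tGen : ℕ → CycAlg F q d aa (m + 1)) cGen eGen := by
  set B := Algebra.adjoin F ({cGen, eGen} ∪ (tGen : ℕ → CycAlg F q d aa (m + 1)) ''
    {i | i + 1 < m + 1})
  have hc : cGen ∈ B := Algebra.subset_adjoin (by simp)
  have he : eGen ∈ B := Algebra.subset_adjoin (by simp)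
  have ht (i : Fin (m + 1 - 1)) : cycT i ∈ B :=
    Algebra.subset_adjoin (Or.inr ⟨i, by simp, tGen_eq_cycT i.2⟩)
  have cycC_mem (i : Fin (m + 1)) : cycC i ∈ B := (cycC_mem_and_cycX_mem hc he ht i i.2).1
  have cycX_mem (i : Fin (m + 1)) : cycX i ∈ B := (cycC_mem_and_cycX_mem hc he ht i i.2).2
  refine subalgebra_cycAlg_eq_top B cycX_mem (fun i => ?_) cycC_mem ht
  have cycXinv_eq : (cycXinv i : CycAlg F q d aa (m + 1)) = cycC i * cycX i * cycC i := by
    rw [cycC_mul_cycX, mul_assoc, cycC_mul_self, mul_one]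
  exact cycXinv_eq ▸ B.mul_mem (B.mul_mem (cycC_mem i) (cycX_mem i)) (cycC_mem i)

end Universal

/-! ### Rank one -/

section DefiningPolynomial

open scoped Polynomial

variable {F} {d : ℕ} {aa : ℕ → F}

/-- The polynomial `f` with coefficients `aa 0, …, aa d`. -/
noncomputable def definingPoly (d : ℕ) (aa : ℕ → F) : F[X] :=
  ∑ i ∈ Finset.range (d + 1), Polynomial.C (aa i) * Polynomial.X ^ i

theorem aeval_definingPoly {K : Type*} [Ring K] [Algebra F K] (x : K) :
    Polynomial.aeval x (definingPoly d aa) = ∑ i ∈ Finset.range (d + 1), aa i • x ^ i := by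
  simp [definingPoly, Algebra.smul_def]

/-- A polynomial giving the inverse of any root of `f`: from `f = X g + aa 0` and `(aa 0)² = 1`, the
inverse of a root `x` is `-aa 0 • g(x)`. -/
noncomputable def inversePoly (d : ℕ) (aa : ℕ → F) : F[X] :=
  -aa 0 • (definingPoly d aa).divX

namespace GoodPoly

theorem coeff_definingPoly (hf : GoodPoly F d aa) (i : ℕ) : (definingPoly d aa).coeff i = aa i := by
  simp only [definingPoly, Polynomial.finsetSum_coeff, Polynomial.coeff_C_mul_X_pow,
    Finset.sum_ite_eq, Finset.mem_range]
  split_ifs with hi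
  · rfl
  · exact (hf.2.2.2 i (by omega)).symm

theorem natDegree_definingPoly (hf : GoodPoly F d aa) : (definingPoly d aa).natDegree = d := by
  refine Polynomial.natDegree_eq_of_le_of_coeff_ne_zero ?_ ?_
  · exact Polynomial.natDegree_le_iff_coeff_eq_zero.2 fun i hi => by
      rw [hf.coeff_definingPoly, hf.2.2.2 i hi]
  · rw [hf.coeff_definingPoly, hf.2.1]
    exact one_ne_zero

theorem monic_definingPoly (hf : GoodPoly F d aa) : (definingPoly d aa).Monic := by
  rw [Polynomial.Monic, Polynomial.leadingCoeff, hf.natDegree_definingPoly, hf.coeff_definingPoly,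
    hf.2.1]

theorem natDegree_modByMonic_definingPoly_lt (hf : GoodPoly F d aa) (g : F[X]) :
    (g %ₘ definingPoly d aa).natDegree < d := by
  have definingPoly_ne_one : definingPoly d aa ≠ 1 := fun h => by
    have natDegree_eq := hf.natDegree_definingPoly
    rw [h, Polynomial.natDegree_one] at natDegree_eq
    exact absurd hf.1 (by omega)
  simpa only [hf.natDegree_definingPoly] using
    Polynomial.natDegree_modByMonic_lt g hf.monic_definingPoly definingPoly_ne_one

theorem coeff_zero_mul_self (hf : GoodPoly F d aa) : aa 0 * aa 0 = 1 := by
  have h := hf.2.2.1 d le_rfl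
  rw [Nat.sub_self, hf.2.1] at h
  exact h.symm

theorem aeval_inversePoly_mul (hf : GoodPoly F d aa) {K : Type*} [Ring K] [Algebra F K] {x : K}
    (hx : Polynomial.aeval x (definingPoly d aa) = 0) :
    Polynomial.aeval x (inversePoly d aa) * x = 1 := by
  have aeval_divX : Polynomial.aeval x (definingPoly d aa).divX * x = -algebraMap F K (aa 0) := by
    rw [← Polynomial.divX_mul_X_add (definingPoly d aa), hf.coeff_definingPoly] at hx
    simpa [eq_neg_iff_add_eq_zero] using hx
  rw [inversePoly, map_smul, smul_mul_assoc, aeval_divX, smul_neg, neg_smul, neg_neg,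
    Algebra.smul_def, ← map_mul, hf.coeff_zero_mul_self, map_one]

theorem reverse_definingPoly (hf : GoodPoly F d aa) :
    (definingPoly d aa).reverse = Polynomial.C (aa 0) * definingPoly d aa := by
  ext i
  rw [Polynomial.coeff_reverse, hf.natDegree_definingPoly, Polynomial.coeff_C_mul,
    hf.coeff_definingPoly, hf.coeff_definingPoly]
  rcases le_or_gt i d with hi | hi
  · rw [Polynomial.revAt_le hi, hf.2.2.1 _ (Nat.sub_le d i), Nat.sub_sub_self hi]
  · rw [Polynomial.revAt_eq_self_of_lt hi, hf.2.2.2 i hi, mul_zero]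

theorem aeval_eq_zero_of_mul_eq_one (hf : GoodPoly F d aa) {L : Type*} [CommRing L] [Algebra F L]
    {x y : L} (hxy : x * y = 1) (hx : Polynomial.aeval x (definingPoly d aa) = 0) :
    Polynomial.aeval y (definingPoly d aa) = 0 := by
  let : Invertible x := invertibleOfRightInverse x y hxy
  have aeval_reverse : Polynomial.aeval y (definingPoly d aa).reverse = 0 :=
    (Polynomial.eval₂_reverse_eq_zero_iff (algebraMap F L) x _).2 hx
  rw [hf.reverse_definingPoly, map_mul, Polynomial.aeval_C, ← Algebra.smul_def] at aeval_reverse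
  exact (smul_eq_zero_iff_right (left_ne_zero_of_mul_eq_one hf.coeff_zero_mul_self)).1 aeval_reverse

theorem exists_inversion (hf : GoodPoly F d aa) :
    ∃ ι : AdjoinRoot (definingPoly d aa) →ₐ[F] AdjoinRoot (definingPoly d aa),
      (∀ z, ι (ι z) = z) ∧
        AdjoinRoot.root (definingPoly d aa) * ι (AdjoinRoot.root (definingPoly d aa)) = 1 := by
  set x := AdjoinRoot.root (definingPoly d aa)
  have aeval_x : Polynomial.aeval x (definingPoly d aa) = 0 := by
    rw [AdjoinRoot.aeval_eq, AdjoinRoot.mk_self]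
  set y := Polynomial.aeval x (inversePoly d aa)
  have hyx : y * x = 1 := hf.aeval_inversePoly_mul aeval_x
  have aeval_y := hf.aeval_eq_zero_of_mul_eq_one ((mul_comm x y).trans hyx) aeval_x
  let ι := AdjoinRoot.liftAlgHom (definingPoly d aa) (Algebra.ofId F _) y aeval_y
  have ι_x : ι x = y := AdjoinRoot.liftAlgHom_root ..
  refine ⟨ι, DFunLike.congr_fun (?_ : ι.comp ι = AlgHom.id F _), by rw [ι_x, mul_comm, hyx]⟩
  have ι_y_mul : ι y * y = 1 := by simpa only [map_mul, ι_x, map_one] using congrArg ι hyx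
  refine AdjoinRoot.algHom_ext ?_
  rw [AlgHom.comp_apply, ι_x, AlgHom.id_apply]
  exact left_inv_eq_right_inv ι_y_mul hyx

end GoodPoly
end DefiningPolynomial

section RankOne

open scoped Polynomial

variable {F} {ξ : F} {d : ℕ} {aa : ℕ → F} {n : ℕ} {K : Type*} [Ring K] [Algebra F K]
  {t : ℕ → K} {c e : K}

/-- The monomials `x ^ m` and `x ^ m c`, `m < d`, in `x = c e`: the standard basis of the rank one
cyclotomic algebra. -/
def rankOneMonomials (d : ℕ) (c e : K) : Set K :=
  {k | ∃ m < d, k = (c * e) ^ m ∨ k = (c * e) ^ m * c}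

theorem finite_rankOneMonomials : (rankOneMonomials d c e).Finite := by
  refine (((Set.finite_Iio d).image fun m => (c * e) ^ m).union
    ((Set.finite_Iio d).image fun m => (c * e) ^ m * c)).subset ?_
  rintro _ ⟨m, hm, rfl | rfl⟩
  exacts [Or.inl ⟨m, hm, rfl⟩, Or.inr ⟨m, hm, rfl⟩]

theorem pow_mem_span_rankOneMonomials {m : ℕ} (hm : m < d) :
    (c * e) ^ m ∈ Submodule.span F (rankOneMonomials d c e) :=
  Submodule.subset_span ⟨m, hm, Or.inl rfl⟩

theorem pow_mul_mem_span_rankOneMonomials {m : ℕ} (hm : m < d) :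
    (c * e) ^ m * c ∈ Submodule.span F (rankOneMonomials d c e) :=
  Submodule.subset_span ⟨m, hm, Or.inr rfl⟩

namespace HeckeCliffordSystem

theorem aeval_eq_zero (S : HeckeCliffordSystem ξ d aa n t c e) :
    Polynomial.aeval (c * e) (definingPoly d aa) = 0 :=
  (aeval_definingPoly _).trans S.poly

theorem aeval_modByMonic (S : HeckeCliffordSystem ξ d aa n t c e) (g : F[X]) :
    Polynomial.aeval (c * e) (g %ₘ definingPoly d aa) = Polynomial.aeval (c * e) g :=
  Polynomial.aeval_modByMonic_eq_self_of_root S.aeval_eq_zero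

theorem aeval_inversePoly (S : HeckeCliffordSystem ξ d aa n t c e) (hf : GoodPoly F d aa) :
    Polynomial.aeval (c * e) (inversePoly d aa) = e * c :=
  left_inv_eq_right_inv (hf.aeval_inversePoly_mul S.aeval_eq_zero)
    (mul_mul_mul_eq_one_of_involutions S.c_mul_c S.e_mul_e)

theorem c_mul_aeval (S : HeckeCliffordSystem ξ d aa n t c e) (hf : GoodPoly F d aa) (g : F[X]) :
    c * Polynomial.aeval (c * e) g =
      Polynomial.aeval (c * e) (g.comp (inversePoly d aa)) * c := by
  have semiconj : SemiconjBy c (c * e) (e * c) := by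
    rw [SemiconjBy, ← mul_assoc, S.c_mul_c, one_mul, mul_assoc, S.c_mul_c, mul_one]
  rw [Polynomial.aeval_comp, S.aeval_inversePoly hf]
  simp only [Polynomial.aeval_eq_sum_range, Finset.mul_sum, Finset.sum_mul, mul_smul_comm,
    smul_mul_assoc, (semiconj.pow_right _).eq]

theorem aeval_mem_span_rankOneMonomials (S : HeckeCliffordSystem ξ d aa n t c e)
    (hf : GoodPoly F d aa) (g : F[X]) :
    Polynomial.aeval (c * e) g ∈ Submodule.span F (rankOneMonomials d c e) ∧
      Polynomial.aeval (c * e) g * c ∈ Submodule.span F (rankOneMonomials d c e) := by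
  rw [← S.aeval_modByMonic,
    Polynomial.aeval_eq_sum_range' (hf.natDegree_modByMonic_definingPoly_lt g), Finset.sum_mul]
  constructor <;> refine Submodule.sum_mem _ fun i hi => ?_
  · exact Submodule.smul_mem _ _ (pow_mem_span_rankOneMonomials (Finset.mem_range.1 hi))
  · rw [smul_mul_assoc]
    exact Submodule.smul_mem _ _ (pow_mul_mem_span_rankOneMonomials (Finset.mem_range.1 hi))

theorem span_rankOneMonomials (S : HeckeCliffordSystem ξ d aa n t c e) (hf : GoodPoly F d aa)
    (hgen : Generates F 1 t c e) : Submodule.span F (rankOneMonomials d c e) = ⊤ := by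
  set W := Submodule.span F (rankOneMonomials d c e)
  have c_mul_mem (g : F[X]) : c * Polynomial.aeval (c * e) g ∈ W ∧
      c * (Polynomial.aeval (c * e) g * c) ∈ W := by
    rw [← mul_assoc, S.c_mul_aeval hf, mul_assoc, S.c_mul_c, mul_one]
    exact (S.aeval_mem_span_rankOneMonomials hf _).symm
  have e_mul (k : K) : e * k = c * (c * e * k) := by
    rw [mul_assoc c e, ← mul_assoc c c, S.c_mul_c, one_mul]
  have mul_stable (a : K) (h : ∀ m, a * (c * e) ^ m ∈ W ∧ a * ((c * e) ^ m * c) ∈ W) :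
      ∀ w ∈ W, a * w ∈ W := by
    suffices W ≤ W.comap (LinearMap.mulLeft F a) from this
    refine Submodule.span_le.2 ?_
    rintro _ ⟨m, -, rfl | rfl⟩
    exacts [(h m).1, (h m).2]
  refine hgen.submodule_eq_top W ?_ (mul_stable c fun m => ?_) (mul_stable e fun m => ?_) ?_
  · simpa using pow_mem_span_rankOneMonomials (F := F) (c := c) (e := e) hf.1
  · simpa using c_mul_mem (Polynomial.X ^ m)
  · simpa only [e_mul, ← mul_assoc, ← pow_succ', map_pow, Polynomial.aeval_X] using
      c_mul_mem (Polynomial.X ^ (m + 1))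
  · exact fun i hi => absurd hi (by omega)

theorem exists_aeval_add_aeval_mul (S : HeckeCliffordSystem ξ d aa n t c e)
    (hf : GoodPoly F d aa) (hgen : Generates F 1 t c e) (p : K) :
    ∃ g h : F[X], p = Polynomial.aeval (c * e) g + Polynomial.aeval (c * e) h * c := by
  have mem_span : p ∈ Submodule.span F (rankOneMonomials d c e) :=
    S.span_rankOneMonomials hf hgen ▸ Submodule.mem_top
  induction mem_span using Submodule.span_induction with
  | mem k hk =>
    obtain ⟨m, -, rfl | rfl⟩ := hk
    exacts [⟨Polynomial.X ^ m, 0, by simp⟩, ⟨0, Polynomial.X ^ m, by simp⟩]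
  | zero => exact ⟨0, 0, by simp⟩
  | add _ _ _ _ hk hk' =>
    obtain ⟨g, h, rfl⟩ := hk
    obtain ⟨g', h', rfl⟩ := hk'
    exact ⟨g + g', h + h', by rw [map_add, map_add, add_mul]; abel⟩
  | smul r _ _ hk =>
    obtain ⟨g, h, rfl⟩ := hk
    exact ⟨r • g, r • h, by rw [map_smul, map_smul, smul_add, smul_mul_assoc]⟩

end HeckeCliffordSystem

/-- A residue functional on the rank one algebra: the coefficient of `1` in the basis
`x ^ m`, `x ^ m c`, `m < d`, where `x = c e`. -/
structure IsResidue (d : ℕ) (c e : K) (res : K →ₗ[F] F) : Prop where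
  one : res 1 = 1
  pow : ∀ m, 0 < m → m < d → res ((c * e) ^ m) = 0
  pow_mul : ∀ m, m < d → res ((c * e) ^ m * c) = 0

namespace IsResidue

variable {res : K →ₗ[F] F}

theorem apply_aeval (hres : IsResidue d c e res) {g : F[X]} (hg : g.natDegree < d) :
    res (Polynomial.aeval (c * e) g) = g.coeff 0 := by
  rw [Polynomial.aeval_eq_sum_range' hg, map_sum, Finset.sum_eq_single 0]
  · rw [pow_zero, map_smul, hres.one, smul_eq_mul, mul_one]
  · intro m hm h₀
    rw [map_smul, hres.pow m (by omega) (Finset.mem_range.1 hm), smul_zero]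
  · exact fun h => absurd (Finset.mem_range.2 (by omega)) h

theorem apply_aeval_mul (hres : IsResidue d c e res) (S : HeckeCliffordSystem ξ d aa n t c e)
    (hf : GoodPoly F d aa) (g : F[X]) : res (Polynomial.aeval (c * e) g * c) = 0 := by
  rw [← S.aeval_modByMonic,
    Polynomial.aeval_eq_sum_range' (hf.natDegree_modByMonic_definingPoly_lt g), Finset.sum_mul,
    map_sum]
  refine Finset.sum_eq_zero fun m hm => ?_
  rw [smul_mul_assoc, map_smul, hres.pow_mul m (Finset.mem_range.1 hm), smul_zero]

theorem apply_neg_hom (hres : IsResidue d c e res)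
    (hspan : Submodule.span F (rankOneMonomials d c e) = ⊤) {σ : K →ₐ[F] K} (hσc : σ c = -c)
    (hσe : σ e = -e) (k : K) : res (σ k) = res k := by
  suffices res ∘ₗ σ.toLinearMap = res from LinearMap.congr_fun this k
  refine LinearMap.ext_on hspan ?_
  rintro _ ⟨m, hm, rfl | rfl⟩ <;> simp [hσc, hσe, hres.pow_mul m hm]

theorem aeval_eq_zero (hres : IsResidue d c e res) (S : HeckeCliffordSystem ξ d aa n t c e)
    (hf : GoodPoly F d aa) (g : F[X])
    (h : ∀ g' : F[X], res (Polynomial.aeval (c * e) g' * Polynomial.aeval (c * e) g) = 0) :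
    Polynomial.aeval (c * e) g = 0 := by
  set r := g %ₘ definingPoly d aa with hr
  have natDegree_r : r.natDegree < d := hf.natDegree_modByMonic_definingPoly_lt g
  rw [← S.aeval_modByMonic, ← hr]
  suffices r = 0 by rw [this, map_zero]
  by_contra r_ne_zero
  obtain ⟨m, s, hs, coeff_s⟩ : ∃ m s, r = Polynomial.X ^ m * s ∧ s.coeff 0 ≠ 0 := by
    obtain ⟨s, hs, not_dvd⟩ :=
      Polynomial.exists_eq_pow_rootMultiplicity_mul_and_not_dvd r r_ne_zero 0
    rw [map_zero, sub_zero] at hs not_dvd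
    exact ⟨_, s, hs, mt Polynomial.X_dvd_iff.2 not_dvd⟩
  have natDegree_s : s.natDegree < d := by
    rw [hs, Polynomial.natDegree_X_pow_mul _ (by rintro rfl; simp at coeff_s)] at natDegree_r
    omega
  have aeval_s : Polynomial.aeval (c * e) (inversePoly d aa ^ m) * Polynomial.aeval (c * e) r =
      Polynomial.aeval (c * e) s := by
    rw [hs, map_mul, ← mul_assoc, ← map_mul, ← mul_pow, map_pow, map_mul, Polynomial.aeval_X,
      hf.aeval_inversePoly_mul S.aeval_eq_zero, one_pow, one_mul]
  refine coeff_s ?_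
  rw [← hres.apply_aeval natDegree_s, ← aeval_s, hr, S.aeval_modByMonic]
  exact h _

theorem nondegenerate (hres : IsResidue d c e res) (S : HeckeCliffordSystem ξ d aa n t c e)
    (hf : GoodPoly F d aa) (hgen : Generates F 1 t c e) {p : K} (hp : ∀ k, res (k * p) = 0) :
    p = 0 := by
  obtain ⟨g, h, rfl⟩ := S.exists_aeval_add_aeval_mul hf hgen p
  have aeval_g : Polynomial.aeval (c * e) g = 0 := by
    refine hres.aeval_eq_zero S hf g fun g' => ?_
    have h₀ := hp (Polynomial.aeval (c * e) g')
    rwa [mul_add, map_add, ← mul_assoc, ← map_mul _ g' h, hres.apply_aeval_mul S hf,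
      add_zero] at h₀
  have c_mul_aeval_mul : c * Polynomial.aeval (c * e) h * c =
      Polynomial.aeval (c * e) (h.comp (inversePoly d aa)) := by
    rw [S.c_mul_aeval hf, mul_assoc, S.c_mul_c, mul_one]
  have conj_eq_zero : c * Polynomial.aeval (c * e) h * c = 0 := by
    rw [c_mul_aeval_mul]
    refine hres.aeval_eq_zero S hf _ fun g' => ?_
    have h₀ := hp (Polynomial.aeval (c * e) g' * c)
    rwa [aeval_g, zero_add, mul_assoc, ← mul_assoc c, c_mul_aeval_mul] at h₀
  have aeval_h_mul : Polynomial.aeval (c * e) h * c = c * (c * Polynomial.aeval (c * e) h * c) := by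
    rw [mul_assoc c, ← mul_assoc c c, S.c_mul_c, one_mul]
  rw [aeval_g, zero_add, aeval_h_mul, conj_eq_zero, mul_zero]

end IsResidue

theorem heckeCliffordSystem_of_involution (ξ : F) {B : Type*} [CommRing B] [Algebra F B]
    {τ : B →ₐ[F] B} {x : B} (hτ : ∀ z, τ (τ z) = z) (hx : x * τ x = 1)
    (hroot : Polynomial.aeval x (definingPoly d aa) = 0) :
    HeckeCliffordSystem ξ d aa 1 (fun _ => (1 : Module.End F B)) τ.toLinearMap
      (τ.toLinearMap * Algebra.lmul F B x) where
  c_mul_c := LinearMap.ext hτ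
  e_mul_e := LinearMap.ext fun z => by simp [hτ, ← mul_assoc, hx]
  poly := by
    have c_mul_c : τ.toLinearMap * τ.toLinearMap = 1 := LinearMap.ext hτ
    rw [← mul_assoc, c_mul_c, one_mul, ← aeval_definingPoly, Polynomial.aeval_algHom_apply, hroot,
      map_zero]
  t_mul_t _ _ := by omega
  t_braid _ _ := by omega
  t_comm _ _ _ _ := by omega
  t_mul_c _ _ _ := by omega
  t_mul_e _ _ _ := by omega
  c_anticommute_c _ := by omega
  e_anticommute_e _ := by omega
  e_anticommute_c _ := by omega

theorem GoodPoly.modByMonicHom_root_pow (hf : GoodPoly F d aa) {m : ℕ} (hm : m < d) :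
    AdjoinRoot.modByMonicHom hf.monic_definingPoly (AdjoinRoot.root (definingPoly d aa) ^ m) =
      Polynomial.X ^ m := by
  have natDegree_lt : (Polynomial.X ^ m : F[X]).natDegree < (definingPoly d aa).natDegree := by
    rwa [hf.natDegree_definingPoly, Polynomial.natDegree_X_pow]
  rw [← AdjoinRoot.mk_X, ← map_pow, AdjoinRoot.modByMonicHom_mk,
    (Polynomial.modByMonic_eq_self_iff hf.monic_definingPoly).2]
  exact Polynomial.degree_lt_degree natDegree_lt

/-- The rank one algebra acts on `L × L`, where `L = F[X] / (f)`: the generator `X_1` acts by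
multiplication by the class of `X` on both factors and `C_1` exchanges them, twisted by the
inversion of `L`. -/
theorem exists_isResidue (q : F) (hf : GoodPoly F d aa) :
    ∃ res : CycAlg F q d aa 1 →ₗ[F] F, IsResidue d (cGen : CycAlg F q d aa 1) eGen res := by
  obtain ⟨ι, ι_ι, root_mul⟩ := hf.exists_inversion
  let L := AdjoinRoot (definingPoly d aa)
  let root : L := AdjoinRoot.root (definingPoly d aa)
  let τ : L × L →ₐ[F] L × L :=
    (ι.comp (AlgHom.snd F L L)).prod (ι.comp (AlgHom.fst F L L))
  have aeval_root : Polynomial.aeval root (definingPoly d aa) = 0 := by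
    rw [AdjoinRoot.aeval_eq, AdjoinRoot.mk_self]
  have S := heckeCliffordSystem_of_involution (q - q⁻¹) (τ := τ) (x := (root, root))
    (fun z => Prod.ext (ι_ι _) (ι_ι _)) (Prod.ext root_mul root_mul)
    (by rw [Polynomial.aeval_prod_apply, aeval_root]; rfl)
  let res : CycAlg F q d aa 1 →ₗ[F] F :=
    Polynomial.lcoeff F 0 ∘ₗ AdjoinRoot.modByMonicHom hf.monic_definingPoly ∘ₗ
      LinearMap.fst F L L ∘ₗ LinearMap.applyₗ ((1, 0) : L × L) ∘ₗ S.lift.toLinearMap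
  have res_eq (h : CycAlg F q d aa 1) :
      res h = (AdjoinRoot.modByMonicHom hf.monic_definingPoly (S.lift h (1, 0)).1).coeff 0 := rfl
  have lift_pow (m : ℕ) (z : L × L) :
      S.lift ((cGen * eGen) ^ m) z = (root ^ m * z.1, root ^ m * z.2) := by
    rw [map_pow, map_mul, S.lift_cGen, S.lift_eGen, ← mul_assoc, S.c_mul_c, one_mul, ← map_pow]
    rfl
  have res_pow {m : ℕ} (hm : m < d) :
      res ((cGen * eGen) ^ m) = (Polynomial.X ^ m : F[X]).coeff 0 := by
    rw [res_eq, lift_pow, mul_one, hf.modByMonicHom_root_pow hm]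
  refine ⟨res, ?_, fun m h₀ hm => ?_, fun m _ => ?_⟩
  · simpa using res_pow hf.1
  · rw [res_pow hm, Polynomial.coeff_X_pow, if_neg h₀.ne]
  · rw [res_eq, map_mul, S.lift_cGen, Module.End.mul_apply, lift_pow]
    simp [τ]

theorem finite_cycAlg_one (q : F) (hf : GoodPoly F d aa) : Module.Finite F (CycAlg F q d aa 1) := by
  rw [Module.finite_def, ← (heckeCliffordSystem_cycAlg q d aa 0).span_rankOneMonomials hf
    (generates_cycAlg q d aa 0)]
  exact Submodule.fg_span finite_rankOneMonomials

end RankOne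

/-! ### Induction -/

section CosetSpace

variable {F} {U W : Type*} [AddCommGroup U] [Module F U] [AddCommGroup W] [Module F W]
  {ξ : F} {n : ℕ} {τ : ℕ → Module.End F U}

/-- The underlying space of a representation of rank `n + 1` induced from a representation `U` of
rank `n`, where the latter is attached to the Hecke generators `T_2, …, T_n`: one copy of `U` for
each minimal coset representative `T_k ⋯ T_1` with `k ≤ n`. -/
abbrev CosetSpace (n : ℕ) (U : Type*) : Type _ := Fin (n + 1) → U

variable (F) in
/-- The vector `T_k ⋯ T_1 u` of the induced space, which is `0` for `k > n`. -/
def cosetVec (k : ℕ) : U →ₗ[F] CosetSpace n U :=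
  if h : k < n + 1 then LinearMap.single F (fun _ => U) ⟨k, h⟩ else 0

/-- The linear map on the induced space that sends `cosetVec k u` to `f k u`. -/
def cosetLift (f : ℕ → U →ₗ[F] W) : CosetSpace n U →ₗ[F] W :=
  LinearMap.lsum F (fun _ => U) F fun i => f i

theorem cosetVec_eq_single {k : ℕ} (hk : k < n + 1) (u : U) :
    (cosetVec F k u : CosetSpace n U) = Pi.single ⟨k, hk⟩ u := by
  rw [cosetVec, dif_pos hk, LinearMap.single_apply]

theorem cosetLift_cosetVec (f : ℕ → U →ₗ[F] W) {k : ℕ} (hk : k ≤ n) (u : U) :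
    cosetLift (n := n) f (cosetVec F k u) = f k u := by
  rw [cosetVec_eq_single (Nat.lt_succ_of_le hk), cosetLift, LinearMap.lsum_apply,
    LinearMap.sum_apply, Finset.sum_eq_single ⟨k, Nat.lt_succ_of_le hk⟩]
  · simp
  · intro i _ hi
    simp [hi]
  · simp

theorem cosetSpace_hom_ext {f g : CosetSpace n U →ₗ[F] W}
    (h : ∀ k ≤ n, ∀ u, f (cosetVec F k u) = g (cosetVec F k u)) : f = g :=
  LinearMap.pi_ext fun i u => by
    simpa [cosetVec_eq_single i.2] using h i (Nat.le_of_lt_succ i.2) u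

variable (ξ n τ) in
/-- The action of the Hecke generator `T_{i+1}` on the induced space, where `τ i` is the action of
`T_{i+1}` on `U`. -/
def tOp (i : ℕ) : Module.End F (CosetSpace n U) :=
  cosetLift fun k =>
    if k = i then cosetVec F (i + 1)
    else if k = i + 1 then cosetVec F i + ξ • cosetVec F (i + 1)
    else if k < i then cosetVec F k ∘ₗ τ (i - 1)
    else cosetVec F k ∘ₗ τ i

theorem tOp_cosetVec_self {i : ℕ} (hi : i ≤ n) (u : U) :
    tOp ξ n τ i (cosetVec F i u) = cosetVec F (i + 1) u := by
  simp [tOp, cosetLift_cosetVec _ hi]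

theorem tOp_cosetVec_succ {i : ℕ} (hi : i + 1 ≤ n) (u : U) :
    tOp ξ n τ i (cosetVec F (i + 1) u) = cosetVec F i u + ξ • cosetVec F (i + 1) u := by
  simp [tOp, cosetLift_cosetVec _ hi]

theorem tOp_succ_cosetVec {i k : ℕ} (hk : k ≤ n) (hki : k ≤ i) (u : U) :
    tOp ξ n τ (i + 1) (cosetVec F k u) = cosetVec F k (τ i u) := by
  simp [tOp, cosetLift_cosetVec _ hk, show k ≠ i + 1 by omega, show k ≠ i + 1 + 1 by omega,
    hki]

theorem tOp_cosetVec_of_lt {i k : ℕ} (hk : k ≤ n) (hik : i + 1 < k) (u : U) :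
    tOp ξ n τ i (cosetVec F k u) = cosetVec F k (τ i u) := by
  simp [tOp, cosetLift_cosetVec _ hk, show k ≠ i by omega, show k ≠ i + 1 by omega,
    show ¬ k < i by omega]

/-- The relations of the Hecke algebra of rank `n` for a family of elements `t i = T_{i+1}`. -/
structure IsHeckeFamily {E : Type*} [Ring E] [Algebra F E] (ξ : F) (n : ℕ) (t : ℕ → E) :
    Prop where
  t_mul_t : ∀ i, i + 1 < n → t i * t i = ξ • t i + 1
  t_braid : ∀ i, i + 2 < n → t i * t (i + 1) * t i = t (i + 1) * t i * t (i + 1)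
  t_comm : ∀ i j, i + 1 < j → j + 1 < n → t i * t j = t j * t i

namespace IsHeckeFamily

variable (hτ : IsHeckeFamily ξ n τ)
include hτ

theorem apply_apply {i : ℕ} (hi : i + 1 < n) (u : U) : τ i (τ i u) = ξ • τ i u + u :=
  DFunLike.congr_fun (hτ.t_mul_t i hi) u

theorem apply_braid {i : ℕ} (hi : i + 2 < n) (u : U) :
    τ i (τ (i + 1) (τ i u)) = τ (i + 1) (τ i (τ (i + 1) u)) :=
  DFunLike.congr_fun (hτ.t_braid i hi) u

theorem apply_comm {i j : ℕ} (hij : i + 1 < j) (hj : j + 1 < n) (u : U) :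
    τ i (τ j u) = τ j (τ i u) :=
  DFunLike.congr_fun (hτ.t_comm i j hij hj) u

theorem tOp_mul_tOp (i : ℕ) (hi : i + 1 < n + 1) :
    tOp ξ n τ i * tOp ξ n τ i = ξ • tOp ξ n τ i + 1 := by
  refine cosetSpace_hom_ext fun k hk u => ?_
  simp only [Module.End.mul_apply, LinearMap.add_apply, LinearMap.smul_apply, Module.End.one_apply]
  obtain h | rfl | rfl | h : k < i ∨ k = i ∨ k = i + 1 ∨ i + 1 < k := by omega
  · obtain ⟨i, rfl⟩ := Nat.exists_eq_add_one_of_ne_zero (Nat.ne_zero_of_lt h)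
    simp only [tOp_succ_cosetVec hk (Nat.le_of_lt_succ h), hτ.apply_apply (by omega : i + 1 < n),
      map_add, map_smul]
  · rw [tOp_cosetVec_self hk, tOp_cosetVec_succ (by omega), add_comm]
  · rw [tOp_cosetVec_succ hk, map_add, map_smul, tOp_cosetVec_self (by omega),
      tOp_cosetVec_succ hk, add_comm]
  · simp only [tOp_cosetVec_of_lt hk h, hτ.apply_apply (by omega : i + 1 < n), map_add, map_smul]

theorem tOp_braid (i : ℕ) (hi : i + 2 < n + 1) :
    tOp ξ n τ i * tOp ξ n τ (i + 1) * tOp ξ n τ i =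
      tOp ξ n τ (i + 1) * tOp ξ n τ i * tOp ξ n τ (i + 1) := by
  refine cosetSpace_hom_ext fun k hk u => ?_
  simp only [Module.End.mul_apply]
  have hi₀ : i ≤ n := by omega
  have hi₁ : i + 1 ≤ n := by omega
  have hi₂ : i + 1 + 1 ≤ n := by omega
  obtain h | rfl | rfl | rfl | h :
    k < i ∨ k = i ∨ k = i + 1 ∨ k = i + 1 + 1 ∨ i + 1 + 1 < k := by omega
  · obtain ⟨i, rfl⟩ := Nat.exists_eq_add_one_of_ne_zero (Nat.ne_zero_of_lt h)
    simp only [tOp_succ_cosetVec hk (Nat.le_of_lt_succ h),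
      tOp_succ_cosetVec hk (h.le : k ≤ i + 1), hτ.apply_braid (by omega : i + 2 < n)]
  · rw [tOp_cosetVec_self hi₀, tOp_cosetVec_self hi₁, tOp_cosetVec_of_lt hi₂ (by omega),
      tOp_succ_cosetVec hi₀ le_rfl, tOp_cosetVec_self hi₀, tOp_cosetVec_self hi₁]
  · simp only [map_add, map_smul, tOp_cosetVec_succ hi₁, tOp_cosetVec_succ hi₂,
      tOp_cosetVec_self hi₀, tOp_cosetVec_self hi₁, tOp_succ_cosetVec hi₀ le_rfl,
      tOp_cosetVec_of_lt hi₂ (show i + 1 < i + 1 + 1 by omega)]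
  · simp only [map_add, map_smul, tOp_cosetVec_succ hi₁, tOp_cosetVec_succ hi₂,
      tOp_cosetVec_self hi₁, tOp_succ_cosetVec hi₀ le_rfl,
      tOp_cosetVec_of_lt hi₂ (show i + 1 < i + 1 + 1 by omega),
      hτ.apply_apply (by omega : i + 1 < n)]
    module
  · simp only [tOp_cosetVec_of_lt hk h, tOp_cosetVec_of_lt hk (by omega : i + 1 < k),
      hτ.apply_braid (by omega : i + 2 < n)]

theorem tOp_comm (i j : ℕ) (hij : i + 1 < j) (hj : j + 1 < n + 1) :
    tOp ξ n τ i * tOp ξ n τ j = tOp ξ n τ j * tOp ξ n τ i := by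
  obtain ⟨j, rfl⟩ := Nat.exists_eq_add_one_of_ne_zero (Nat.ne_zero_of_lt hij)
  refine cosetSpace_hom_ext fun k hk u => ?_
  simp only [Module.End.mul_apply]
  obtain h | rfl | rfl | ⟨h, h'⟩ | rfl | rfl | h : k < i ∨ k = i ∨ k = i + 1 ∨
    (i + 1 < k ∧ k ≤ j) ∨ k = j + 1 ∨ k = j + 1 + 1 ∨ j + 1 + 1 < k := by omega
  · obtain ⟨i, rfl⟩ := Nat.exists_eq_add_one_of_ne_zero (Nat.ne_zero_of_lt h)
    simp only [tOp_succ_cosetVec hk (Nat.le_of_lt_succ h), tOp_succ_cosetVec hk (by omega : k ≤ j),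
      hτ.apply_comm (by omega : i + 1 < j) (by omega)]
  · simp only [tOp_succ_cosetVec hk (by omega : k ≤ j), tOp_cosetVec_self hk,
      tOp_succ_cosetVec (by omega : k + 1 ≤ n) (by omega : k + 1 ≤ j)]
  · simp only [tOp_succ_cosetVec hk (by omega : i + 1 ≤ j), tOp_cosetVec_succ hk, map_add, map_smul,
      tOp_succ_cosetVec (by omega : i ≤ n) (by omega : i ≤ j)]
  · simp only [tOp_cosetVec_of_lt hk h, tOp_succ_cosetVec hk h',
      hτ.apply_comm (by omega : i + 1 < j) (by omega)]
  · simp only [tOp_cosetVec_of_lt hk hij, tOp_cosetVec_self hk,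
      tOp_cosetVec_of_lt (by omega : j + 1 + 1 ≤ n) (by omega : i + 1 < j + 1 + 1)]
  · simp only [tOp_cosetVec_of_lt hk (by omega : i + 1 < j + 1 + 1), tOp_cosetVec_succ hk, map_add,
      map_smul, tOp_cosetVec_of_lt (by omega : j + 1 ≤ n) hij]
  · simp only [tOp_cosetVec_of_lt hk h, tOp_cosetVec_of_lt hk (by omega : i + 1 < k),
      hτ.apply_comm hij (by omega)]

theorem isHeckeFamily_tOp : IsHeckeFamily ξ (n + 1) (tOp ξ n τ) where
  t_mul_t := hτ.tOp_mul_tOp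
  t_braid := hτ.tOp_braid
  t_comm := hτ.tOp_comm

end IsHeckeFamily

end CosetSpace

section DescendingProduct

variable {F} {E : Type*} [Ring E] [Algebra F E] {ξ : F} {n : ℕ} {t : ℕ → E}

/-- The product `t_{j-1} ⋯ t_0`. -/
def descProd (t : ℕ → E) : ℕ → E
  | 0 => 1
  | j + 1 => t j * descProd t j

namespace IsHeckeFamily

variable (ht : IsHeckeFamily ξ n t)
include ht

theorem commute_descProd {i j : ℕ} (hji : j < i) (hi : i + 1 < n) :
    Commute (t i) (descProd t j) := by
  induction j with
  | zero => exact Commute.one_right _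
  | succ j ih =>
    have step : Commute (t j) (t i) := ht.t_comm j i hji hi
    exact step.symm.mul_right (ih (by omega))

theorem semiconjBy_descProd {i j : ℕ} (hij : i + 2 ≤ j) (hj : j < n) :
    SemiconjBy (descProd t j) (t (i + 1)) (t i) := by
  induction j, hij using Nat.le_induction with
  | base =>
    have braid : SemiconjBy (t (i + 1) * t i) (t (i + 1)) (t i) := by
      rw [SemiconjBy, ← ht.t_braid i hj, mul_assoc]
    simpa only [descProd, mul_assoc] using
      braid.mul_left (ht.commute_descProd (Nat.lt_succ_self i) hj).symm
  | succ j hij ih =>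
    have step : Commute (t i) (t j) := ht.t_comm i j hij hj
    exact SemiconjBy.mul_left step.symm (ih (by omega))

end IsHeckeFamily

end DescendingProduct

section TwistedOperators

variable {F} {U : Type*} [AddCommGroup U] [Module F U] {ξ : F} {n : ℕ} {τ : ℕ → Module.End F U}

theorem Anticommute.apply {f g : Module.End F U} (h : Anticommute f g) (u : U) :
    f (g u) = -g (f u) :=
  LinearMap.congr_fun h u

theorem end_apply_comm {f g : Module.End F U} (h : Commute f g) (u : U) : f (g u) = g (f u) :=
  LinearMap.congr_fun h u

/-- The data of an odd involution of the induced space: its action `χ` on the base copy of `U`,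
its diagonal action `γ` on all other copies, and a projection `π` of `U` which enters the term
that arises when the involution is moved past `T_k ⋯ T_1`. -/
structure Twist (F : Type) [Field F] (U : Type*) [AddCommGroup U] [Module F U] where
  (χ γ π : Module.End F U)

/-- The correction from the `k`-th copy of `U` to the base copy, up to `T_k ⋯ T_2`. -/
def Twist.ρ (W : Twist F U) : Module.End F U := W.χ * W.π - W.π * W.γ

/-- The axioms which turn a twist into an involution commuting with `T_2, …, T_n`. -/
structure Twist.IsInvolutive (n : ℕ) (τ : ℕ → Module.End F U) (W : Twist F U) : Prop where
  χ_mul_χ : W.χ * W.χ = 1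
  γ_mul_γ : W.γ * W.γ = 1
  commute_χ : ∀ i, i + 1 < n → Commute (τ i) W.χ
  commute_γ : ∀ i, 0 < i → i + 1 < n → Commute (τ i) W.γ
  commute_π : ∀ i, 0 < i → i + 1 < n → Commute (τ i) W.π

variable (ξ n τ) in
/-- The operator on the induced space given by a twist. -/
def twistedOp (W : Twist F U) : Module.End F (CosetSpace n U) :=
  cosetLift fun
    | 0 => cosetVec F 0 ∘ₗ W.χ
    | k + 1 => cosetVec F (k + 1) ∘ₗ W.γ + ξ • cosetVec F 0 ∘ₗ (descProd τ k * W.ρ)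

theorem twistedOp_cosetVec_zero (W : Twist F U) (u : U) :
    twistedOp ξ n τ W (cosetVec F 0 u) = cosetVec F 0 (W.χ u) := by
  rw [twistedOp, cosetLift_cosetVec _ (Nat.zero_le n), LinearMap.comp_apply]

theorem twistedOp_cosetVec_succ (W : Twist F U) {k : ℕ} (hk : k + 1 ≤ n) (u : U) :
    twistedOp ξ n τ W (cosetVec F (k + 1) u) =
      cosetVec F (k + 1) (W.γ u) + ξ • cosetVec F 0 (descProd τ k (W.ρ u)) := by
  rw [twistedOp, cosetLift_cosetVec _ hk]
  rfl

namespace Twist.IsInvolutive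

variable {W : Twist F U} (hW : W.IsInvolutive n τ)
include hW

theorem commute_descProd {j : ℕ} (hj : j < n) : Commute (descProd τ j) W.χ := by
  induction j with
  | zero => exact Commute.one_left _
  | succ j ih => exact (hW.commute_χ j hj).mul_left (ih (by omega))

theorem ρ_mul_γ : W.ρ * W.γ = -(W.χ * W.ρ) := by
  simp [Twist.ρ, sub_mul, mul_sub, mul_assoc, hW.γ_mul_γ, ← mul_assoc W.χ W.χ, hW.χ_mul_χ]

theorem commute_ρ {i : ℕ} (hi₀ : 0 < i) (hi : i + 1 < n) : Commute (τ i) W.ρ :=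
  ((hW.commute_χ i hi).mul_right (hW.commute_π i hi₀ hi)).sub_right
    ((hW.commute_π i hi₀ hi).mul_right (hW.commute_γ i hi₀ hi))

theorem twistedOp_mul_self : twistedOp ξ n τ W * twistedOp ξ n τ W = 1 := by
  refine cosetSpace_hom_ext fun k hk u => ?_
  simp only [Module.End.mul_apply, Module.End.one_apply]
  have χ_χ (u : U) : W.χ (W.χ u) = u := LinearMap.congr_fun hW.χ_mul_χ u
  have γ_γ (u : U) : W.γ (W.γ u) = u := LinearMap.congr_fun hW.γ_mul_γ u
  have ρ_γ (u : U) : W.ρ (W.γ u) = -W.χ (W.ρ u) := LinearMap.congr_fun hW.ρ_mul_γ u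
  rcases k with _ | k
  · simp only [twistedOp_cosetVec_zero, χ_χ]
  · simp only [twistedOp_cosetVec_succ _ hk, twistedOp_cosetVec_zero, map_add, map_smul, γ_γ, ρ_γ,
      map_neg, ← end_apply_comm (hW.commute_descProd hk)]
    module

theorem tOp_commute_twistedOp (hτ : IsHeckeFamily ξ n τ) {i : ℕ} (hi : i + 1 < n) :
    Commute (tOp ξ n τ (i + 1)) (twistedOp ξ n τ W) := by
  refine cosetSpace_hom_ext fun k hk u => ?_
  simp only [Module.End.mul_apply]
  have hn : 0 ≤ n := Nat.zero_le n
  obtain _ | k := k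
  · simp only [tOp_succ_cosetVec hn (Nat.zero_le i), twistedOp_cosetVec_zero,
      end_apply_comm (hW.commute_χ i hi)]
  have Q_succ (u : U) := twistedOp_cosetVec_succ (ξ := ξ) (τ := τ) W hk u
  have T_zero (u : U) := tOp_succ_cosetVec (ξ := ξ) (τ := τ) hn (Nat.zero_le i) u
  obtain h | rfl | rfl | h : k < i ∨ k = i ∨ k = i + 1 ∨ i + 1 < k := by omega
  · have h₀ : 0 < i := by omega
    simp only [tOp_succ_cosetVec hk h, Q_succ, T_zero, map_add, map_smul,
      end_apply_comm (hW.commute_γ i h₀ hi), end_apply_comm (hτ.commute_descProd h hi),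
      end_apply_comm (hW.commute_ρ h₀ hi)]
  · simp only [Q_succ, tOp_cosetVec_self hk, T_zero, map_add, map_smul,
      twistedOp_cosetVec_succ W (by omega : k + 1 + 1 ≤ n), descProd, Module.End.mul_apply]
  · simp only [Q_succ, tOp_cosetVec_succ hk, T_zero, map_add, map_smul,
      twistedOp_cosetVec_succ W (by omega : i + 1 ≤ n), descProd, Module.End.mul_apply,
      hτ.apply_apply hi]
    module
  · have slide (u : U) : τ i (descProd τ k u) = descProd τ k (τ (i + 1) u) :=
      (LinearMap.congr_fun (hτ.semiconjBy_descProd (by omega : i + 2 ≤ k) hk) u).symm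
    simp only [Q_succ, tOp_cosetVec_of_lt hk (by omega : i + 1 + 1 < k + 1), T_zero, map_add,
      map_smul, end_apply_comm (hW.commute_γ (i + 1) (by omega) (by omega)), slide,
      end_apply_comm (hW.commute_ρ (by omega : 0 < i + 1) (by omega))]

end Twist.IsInvolutive

variable (ξ n τ) in
/-- The conjugate of an operator on the induced space by `T_1`. -/
def conjOp (Q : Module.End F (CosetSpace n U)) : Module.End F (CosetSpace n U) :=
  tOp ξ n τ 0 * Q * (tOp ξ n τ 0 - ξ • 1)

theorem tOp_sub_cosetVec_zero (u : U) :
    (tOp ξ n τ 0 - ξ • 1) (cosetVec F 0 u) = cosetVec F 1 u - ξ • cosetVec F 0 u := by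
  simp [tOp_cosetVec_self]

theorem tOp_sub_cosetVec_one (hn : 0 < n) (u : U) :
    (tOp ξ n τ 0 - ξ • 1) (cosetVec F 1 u) = cosetVec F 0 u := by
  simp [tOp_cosetVec_succ (i := 0) hn]

theorem tOp_sub_cosetVec_two (hn : 1 < n) (u : U) :
    (tOp ξ n τ 0 - ξ • 1) (cosetVec F 2 u) = cosetVec F 2 ((τ 0 - ξ • 1) u) := by
  simp [tOp_cosetVec_of_lt hn]

theorem conjOp_twistedOp_cosetVec_one (hn : 0 < n) (W : Twist F U) (u : U) :
    conjOp ξ n τ (twistedOp ξ n τ W) (cosetVec F 1 u) = cosetVec F 1 (W.χ u) := by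
  simp only [conjOp, Module.End.mul_apply, tOp_sub_cosetVec_one hn, twistedOp_cosetVec_zero,
    tOp_cosetVec_self hn.le]

/-- The discrepancy between the conjugate of `twistedOp W` by `T_1` and the diagonal action of `W`
on the base copy. -/
def Twist.defect (W : Twist F U) : Module.End F U := W.γ + W.ρ - W.χ

theorem conjOp_twistedOp_cosetVec_zero (hn : 0 < n) (W : Twist F U) (u : U) :
    conjOp ξ n τ (twistedOp ξ n τ W) (cosetVec F 0 u) =
      cosetVec F 0 (W.γ u) + ξ • cosetVec F 1 (W.defect u) := by
  have defect_apply : W.defect u = W.γ u + W.ρ u - W.χ u := rfl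
  simp only [conjOp, Module.End.mul_apply, tOp_sub_cosetVec_zero, map_sub, map_smul,
    twistedOp_cosetVec_zero, twistedOp_cosetVec_succ (k := 0) W hn, descProd, Module.End.one_apply,
    map_add, tOp_cosetVec_self hn.le, tOp_cosetVec_succ (i := 0) hn, defect_apply]
  module

theorem conjOp_twistedOp_cosetVec_two (hn : 1 < n) (W : Twist F U) (u : U) :
    conjOp ξ n τ (twistedOp ξ n τ W) (cosetVec F 2 u) =
      cosetVec F 2 ((τ 0 * W.γ * (τ 0 - ξ • 1)) u) +
        ξ • cosetVec F 1 ((τ 0 * W.ρ * (τ 0 - ξ • 1)) u) := by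
  simp only [conjOp, Module.End.mul_apply, tOp_sub_cosetVec_two hn,
    twistedOp_cosetVec_succ (k := 1) W hn, descProd, map_add, map_smul, Module.End.one_apply,
    tOp_cosetVec_of_lt hn (by omega : 0 + 1 < 2), tOp_cosetVec_self (Nat.zero_le n)]

theorem anticommute_of_cosetVec {P Q : Module.End F (CosetSpace n U)}
    (hP : ∀ i, i + 2 < n → Commute (tOp ξ n τ (i + 2)) P)
    (hQ : ∀ i, i + 2 < n → Commute (tOp ξ n τ (i + 2)) Q)
    (h : ∀ k ≤ 2, k ≤ n → ∀ u, P (Q (cosetVec F k u)) = -Q (P (cosetVec F k u))) :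
    Anticommute P Q := by
  refine cosetSpace_hom_ext fun k hk u => ?_
  simp only [Module.End.mul_apply, LinearMap.neg_apply]
  induction k with
  | zero => exact h 0 (by omega) hk u
  | succ k ih =>
    by_cases hk₂ : k + 1 ≤ 2
    · exact h _ hk₂ hk u
    · obtain ⟨i, rfl⟩ : ∃ i, k = i + 2 := ⟨k - 2, by omega⟩
      rw [← tOp_cosetVec_self (ξ := ξ) (τ := τ) (by omega : i + 2 ≤ n),
        ← end_apply_comm (hQ i hk), ← end_apply_comm (hP i hk), ih (by omega), map_neg,
        end_apply_comm (hQ i hk), end_apply_comm (hP i hk)]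

/-- The relations between twists `W` and `W'` which make `twistedOp W` anticommute with the
conjugate of `twistedOp W'` by `T_1`. -/
structure Twist.AnticommutesWithConj (ξ : F) (n : ℕ) (τ : ℕ → Module.End F U) (W W' : Twist F U) :
    Prop where
  χ_anticommute_γ : Anticommute W.χ W'.γ
  γ_anticommute_χ : Anticommute W.γ W'.χ
  ρ_mul_χ : W.ρ * W'.χ = -(W'.γ * W.ρ)
  defect_mul_χ : W'.defect * W.χ = -(W.γ * W'.defect)
  defect_mul_ρ : W'.defect * W.ρ = 0
  ρ_mul_defect : W.ρ * W'.defect = 0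
  defect_mul_τ_mul_ρ : 1 < n → W'.defect * τ 0 * W.ρ = 0
  γ_anticommute_conj_γ : 1 < n → Anticommute W.γ (τ 0 * W'.γ * (τ 0 - ξ • 1))
  γ_anticommute_conj_ρ : 1 < n → Anticommute W.γ (τ 0 * W'.ρ * (τ 0 - ξ • 1))
  ρ_mul_conj : 1 < n → τ 0 * W.ρ * (τ 0 * W'.γ * (τ 0 - ξ • 1)) =
    -(W'.γ * (τ 0 * W.ρ)) - ξ • (W.ρ * (τ 0 * W'.ρ * (τ 0 - ξ • 1)))

theorem tOp_commute_conjOp (hτ : IsHeckeFamily ξ n τ) {Q : Module.End F (CosetSpace n U)} {i : ℕ}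
    (hi : i + 2 < n) (hQ : Commute (tOp ξ n τ (i + 2)) Q) :
    Commute (tOp ξ n τ (i + 2)) (conjOp ξ n τ Q) := by
  have comm : Commute (tOp ξ n τ (i + 2)) (tOp ξ n τ 0) :=
    (hτ.tOp_comm 0 (i + 2) (by omega) (by omega)).symm
  exact (comm.mul_right hQ).mul_right (comm.sub_right ((Commute.one_right _).smul_right ξ))

theorem Twist.AnticommutesWithConj.anticommute (hτ : IsHeckeFamily ξ n τ) (hn : 0 < n)
    {W W' : Twist F U} (hW : W.IsInvolutive n τ) (hW' : W'.IsInvolutive n τ)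
    (h : W.AnticommutesWithConj ξ n τ W') :
    Anticommute (twistedOp ξ n τ W) (conjOp ξ n τ (twistedOp ξ n τ W')) := by
  refine anticommute_of_cosetVec (fun i hi => hW.tOp_commute_twistedOp hτ hi)
    (fun i hi => tOp_commute_conjOp hτ hi (hW'.tOp_commute_twistedOp hτ hi)) fun k hk₂ hk u => ?_
  have P_one (u : U) : twistedOp ξ n τ W (cosetVec F 1 u) =
      cosetVec F 1 (W.γ u) + ξ • cosetVec F 0 (W.ρ u) :=
    twistedOp_cosetVec_succ W hn u
  interval_cases k
  · have defect_χ : W'.defect (W.χ u) = -W.γ (W'.defect u) := LinearMap.congr_fun h.defect_mul_χ u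
    have ρ_defect : W.ρ (W'.defect u) = 0 := LinearMap.congr_fun h.ρ_mul_defect u
    simp only [conjOp_twistedOp_cosetVec_zero hn, twistedOp_cosetVec_zero, map_add, map_smul, P_one,
      h.χ_anticommute_γ.apply, defect_χ, ρ_defect, map_neg, map_zero]
    module
  · have ρ_χ : W.ρ (W'.χ u) = -W'.γ (W.ρ u) := LinearMap.congr_fun h.ρ_mul_χ u
    have defect_ρ : W'.defect (W.ρ u) = 0 := LinearMap.congr_fun h.defect_mul_ρ u
    simp only [conjOp_twistedOp_cosetVec_one hn, conjOp_twistedOp_cosetVec_zero hn, P_one, map_add,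
      map_smul, h.γ_anticommute_χ.apply, ρ_χ, defect_ρ, map_neg, map_zero]
    module
  · have defect_ρ : W'.defect (τ 0 (W.ρ u)) = 0 := LinearMap.congr_fun (h.defect_mul_τ_mul_ρ hk) u
    have ρ_conj : τ 0 (W.ρ ((τ 0 * W'.γ * (τ 0 - ξ • 1)) u)) =
        -W'.γ (τ 0 (W.ρ u)) - ξ • W.ρ ((τ 0 * W'.ρ * (τ 0 - ξ • 1)) u) :=
      LinearMap.congr_fun (h.ρ_mul_conj hk) u
    have P_two (u : U) : twistedOp ξ n τ W (cosetVec F 2 u) =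
        cosetVec F 2 (W.γ u) + ξ • cosetVec F 0 (τ 0 (W.ρ u)) := by
      rw [twistedOp_cosetVec_succ W hk, descProd, descProd, mul_one]
    simp only [conjOp_twistedOp_cosetVec_zero hn, conjOp_twistedOp_cosetVec_two hk, P_one, P_two,
      map_add, map_sub, map_smul, (h.γ_anticommute_conj_γ hk).apply,
      (h.γ_anticommute_conj_ρ hk).apply, defect_ρ, ρ_conj, map_neg, map_zero]
    module

theorem Twist.ρ_mul_χ {W W' : Twist F U} (χ_anticommute_γ : Anticommute W.χ W'.γ)
    (γ_anticommute_χ : Anticommute W.γ W'.χ) (π_mul_χ : W.π * W'.χ = W'.γ * W.π) :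
    W.ρ * W'.χ = -(W'.γ * W.ρ) := by
  rw [Twist.ρ, sub_mul, mul_assoc, π_mul_χ, mul_assoc, γ_anticommute_χ, ← mul_assoc,
    χ_anticommute_γ, mul_neg, ← mul_assoc, π_mul_χ]
  noncomm_ring

theorem Twist.IsInvolutive.ρ_mul_χ_of_π_eq_one {W : Twist F U} (hW : W.IsInvolutive n τ)
    (hπ : W.π = 1) : W.ρ * W.χ = -(W.γ * W.ρ) := by
  rw [Twist.ρ, hπ, mul_one, one_mul, sub_mul, mul_sub, hW.χ_mul_χ, hW.γ_mul_γ, neg_sub]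

theorem Twist.IsInvolutive.conj_ρ_of_π_eq_one (hτ : IsHeckeFamily ξ n τ) {C : Twist F U}
    (hC : C.IsInvolutive n τ) (hπ : C.π = 1) (h : 1 < n) :
    τ 0 * C.ρ * (τ 0 - ξ • 1) = C.χ - τ 0 * C.γ * (τ 0 - ξ • 1) := by
  have inv : τ 0 * (τ 0 - ξ • 1) = 1 := (unitOfQuadratic ξ (τ 0) (hτ.t_mul_t 0 h)).mul_inv
  rw [Twist.ρ, hπ, mul_one, one_mul, mul_sub (τ 0), sub_mul (τ 0 * C.χ), (hC.commute_χ 0 h).eq,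
    mul_assoc C.χ, inv, mul_one]

theorem Twist.IsInvolutive.ρ_anticommute_conj (hτ : IsHeckeFamily ξ n τ) {W : Twist F U}
    (hW : W.IsInvolutive n τ) (h : 1 < n) {g : Module.End F U} (χ_anticommute : Anticommute W.χ g)
    (γ_anticommute_conj : Anticommute W.γ (τ 0 * g * (τ 0 - ξ • 1)))
    (π_commute_conj : Commute W.π (τ 0 * g * (τ 0 - ξ • 1))) :
    Anticommute W.ρ (τ 0 * g * (τ 0 - ξ • 1)) := by
  let T := unitOfQuadratic ξ (τ 0) (hτ.t_mul_t 0 h)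
  have χ_conj : Anticommute W.χ (τ 0 * g * (τ 0 - ξ • 1)) :=
    χ_anticommute.of_semiconjBy_unit (u := T) (hW.commute_χ 0 h) (Units.mk_semiconjBy T g)
  rw [Anticommute, Twist.ρ, sub_mul, mul_assoc, π_commute_conj.eq, ← mul_assoc, χ_conj,
    mul_assoc W.π, γ_anticommute_conj, mul_neg, ← mul_assoc W.π, π_commute_conj.eq]
  noncomm_ring

theorem Twist.IsInvolutive.anticommutesWithConj_of_π_eq_one (hτ : IsHeckeFamily ξ n τ)
    {W C : Twist F U} (hW : W.IsInvolutive n τ) (hC : C.IsInvolutive n τ) (hπ : C.π = 1)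
    (χ_anticommute_γ : Anticommute W.χ C.γ) (γ_anticommute_χ : Anticommute W.γ C.χ)
    (ρ_mul_χ : W.ρ * C.χ = -(C.γ * W.ρ))
    (γ_anticommute_conj_γ : 1 < n → Anticommute W.γ (τ 0 * C.γ * (τ 0 - ξ • 1)))
    (π_commute_conj_γ : 1 < n → Commute W.π (τ 0 * C.γ * (τ 0 - ξ • 1))) :
    W.AnticommutesWithConj ξ n τ C := by
  have ρ_eq : C.ρ = C.χ - C.γ := by rw [Twist.ρ, hπ, mul_one, one_mul]
  have defect_eq : C.defect = 0 := by rw [Twist.defect, ρ_eq]; abel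
  have conj_ρ (h : 1 < n) := hC.conj_ρ_of_π_eq_one hτ hπ h
  have ρ_conj (h : 1 < n) : W.ρ * (τ 0 * C.γ * (τ 0 - ξ • 1)) =
      -(τ 0 * C.γ * (τ 0 - ξ • 1) * W.ρ) :=
    hW.ρ_anticommute_conj hτ h χ_anticommute_γ (γ_anticommute_conj_γ h) (π_commute_conj_γ h)
  exact {
    χ_anticommute_γ := χ_anticommute_γ
    γ_anticommute_χ := γ_anticommute_χ
    ρ_mul_χ := ρ_mul_χ
    defect_mul_χ := by simp [defect_eq]
    defect_mul_ρ := by simp [defect_eq]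
    ρ_mul_defect := by simp [defect_eq]
    defect_mul_τ_mul_ρ := by simp [defect_eq]
    γ_anticommute_conj_γ := γ_anticommute_conj_γ
    γ_anticommute_conj_ρ h :=
      conj_ρ h ▸ (γ_anticommute_χ.symm.sub_left (γ_anticommute_conj_γ h).symm).symm
    ρ_mul_conj h := by
      have slide : (τ 0 - ξ • 1) * (τ 0 * C.γ * (τ 0 - ξ • 1)) = C.γ * (τ 0 - ξ • 1) := by
        have inv : (τ 0 - ξ • 1) * τ 0 = 1 := (unitOfQuadratic ξ (τ 0) (hτ.t_mul_t 0 h)).inv_mul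
        rw [← mul_assoc, ← mul_assoc, inv, one_mul]
      rw [conj_ρ h, mul_sub W.ρ, ρ_mul_χ, ρ_conj h, mul_assoc (τ 0), ρ_conj h]
      generalize τ 0 * C.γ * (τ 0 - ξ • 1) = γ₂ at slide ⊢
      have slide_ρ := congrArg (· * W.ρ) slide
      simp only [sub_mul, mul_sub, mul_assoc, smul_mul_assoc, mul_smul_comm, one_mul] at slide_ρ
      rw [mul_neg, sub_eq_iff_eq_add.mp slide_ρ]
      module }

namespace Twist.IsInvolutive

variable {W : Twist F U} (χ_anticommute_γ : Anticommute W.χ W.γ)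
  (π_mul_χ : W.π * W.χ = W.γ * W.π) (hW : W.IsInvolutive n τ) (π_mul_π : W.π * W.π = W.π)
include χ_anticommute_γ π_mul_χ hW π_mul_π

theorem ρ_mul_mul_ρ {x : Module.End F U} (hχ : Commute x W.χ) (hπ : W.π * x * W.π = x * W.π) :
    W.ρ * x * W.ρ = (W.χ - W.γ) * x * W.ρ := by
  have π_x_π (u : U) : W.π (x (W.π u)) = x (W.π u) := LinearMap.congr_fun hπ u
  have x_χ (u : U) : x (W.χ u) = W.χ (x u) := end_apply_comm hχ u
  have χ_χ (u : U) : W.χ (W.χ u) = u := LinearMap.congr_fun hW.χ_mul_χ u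
  have γ_γ (u : U) : W.γ (W.γ u) = u := LinearMap.congr_fun hW.γ_mul_γ u
  have π_χ (u : U) : W.π (W.χ u) = W.γ (W.π u) := LinearMap.congr_fun π_mul_χ u
  have π_γ_x_π (u : U) : W.π (W.γ (x (W.π u))) = W.γ (x (W.π u)) := by
    have γ_x_π : W.γ (x (W.π u)) = W.π (W.χ (x (W.π u))) := by rw [π_χ, π_x_π]
    rw [γ_x_π]
    exact LinearMap.congr_fun π_mul_π _
  ext u
  simp only [Twist.ρ, Module.End.mul_apply, LinearMap.sub_apply, map_sub, x_χ, π_χ, π_x_π, χ_χ,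
    χ_anticommute_γ.symm.apply, map_neg, π_γ_x_π, γ_γ]
  abel

theorem defect_mul_mul_ρ {x : Module.End F U} (hχ : Commute x W.χ)
    (hπ : W.π * x * W.π = x * W.π) : W.defect * x * W.ρ = 0 := by
  rw [defect, sub_mul, add_mul, sub_mul, add_mul,
    ρ_mul_mul_ρ χ_anticommute_γ π_mul_χ hW π_mul_π hχ hπ]
  noncomm_ring

end Twist.IsInvolutive

theorem Twist.IsInvolutive.γ_anticommute_conj_ρ (hτ : IsHeckeFamily ξ n τ) {W : Twist F U}
    (hW : W.IsInvolutive n τ) (χ_anticommute_γ : Anticommute W.χ W.γ) (h : 1 < n)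
    (γ_anticommute_conj_γ : Anticommute W.γ (τ 0 * W.γ * (τ 0 - ξ • 1)))
    (conj_γ_commute_π : Commute ((τ 0 - ξ • 1) * W.γ * τ 0) W.π) :
    Anticommute W.γ (τ 0 * W.ρ * (τ 0 - ξ • 1)) := by
  let T := unitOfQuadratic ξ (τ 0) (hτ.t_mul_t 0 h)
  have γ_conj_π : Commute W.γ (τ 0 * W.π * (τ 0 - ξ • 1)) := by
    have inv : τ 0 * (τ 0 - ξ • 1) = 1 := T.mul_inv
    refine commute_of_semiconjBy_unit (u := T) ?_ (Units.mk_semiconjBy T W.π) conj_γ_commute_π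
    change SemiconjBy (τ 0) _ _
    rw [SemiconjBy, ← mul_assoc, ← mul_assoc, inv, one_mul]
  have conj_ρ : τ 0 * W.ρ * (τ 0 - ξ • 1) = W.χ * (τ 0 * W.π * (τ 0 - ξ • 1)) -
      τ 0 * W.π * (τ 0 - ξ • 1) * (τ 0 * W.γ * (τ 0 - ξ • 1)) := by
    have inv : (τ 0 - ξ • 1) * τ 0 = 1 := T.inv_mul
    generalize τ 0 - ξ • 1 = T' at inv
    rw [Twist.ρ, mul_sub, ← mul_assoc, (hW.commute_χ 0 h).eq, sub_mul, mul_assoc _ T',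
      ← mul_assoc T', ← mul_assoc T', inv]
    simp only [mul_assoc, one_mul]
  rw [conj_ρ]
  exact ((χ_anticommute_γ.mul_left_of_commute γ_conj_π.symm).sub_left
    (.mul_left_of_commute_left γ_conj_π.symm γ_anticommute_conj_γ.symm)).symm

theorem Twist.IsInvolutive.ρ_mul_conj (hτ : IsHeckeFamily ξ n τ) {W : Twist F U}
    (hW : W.IsInvolutive n τ) (h : 1 < n)
    (γ_anticommute_conj_ρ : Anticommute W.γ (τ 0 * W.ρ * (τ 0 - ξ • 1)))
    (ρ_τ_ρ : W.ρ * τ 0 * W.ρ = (W.χ - W.γ) * τ 0 * W.ρ) :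
    τ 0 * W.ρ * (τ 0 * W.γ * (τ 0 - ξ • 1)) =
      -(W.γ * (τ 0 * W.ρ)) - ξ • (W.ρ * (τ 0 * W.ρ * (τ 0 - ξ • 1))) := by
  have conj : τ 0 * W.ρ * τ 0 * W.γ = -(W.γ * (τ 0 * W.ρ) * τ 0) - ξ • (W.ρ * τ 0 * W.ρ) := by
    have τ_ρ_γ : τ 0 * W.ρ * W.γ = -(W.χ * τ 0 * W.ρ) := by
      rw [mul_assoc, hW.ρ_mul_γ, mul_neg, ← mul_assoc, (hW.commute_χ 0 h).eq]
    have anticomm := γ_anticommute_conj_ρ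
    simp only [Anticommute, mul_sub, sub_mul, mul_smul_comm, smul_mul_assoc, mul_one, τ_ρ_γ]
      at anticomm
    rw [ρ_τ_ρ, mul_assoc W.γ, sub_mul, sub_mul, mul_assoc W.γ]
    linear_combination (norm := module) anticomm
  have inv : τ 0 * (τ 0 - ξ • 1) = 1 := (unitOfQuadratic ξ (τ 0) (hτ.t_mul_t 0 h)).mul_inv
  calc τ 0 * W.ρ * (τ 0 * W.γ * (τ 0 - ξ • 1))
      = τ 0 * W.ρ * τ 0 * W.γ * (τ 0 - ξ • 1) := by noncomm_ring
    _ = -(W.γ * (τ 0 * W.ρ) * (τ 0 * (τ 0 - ξ • 1))) -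
        ξ • (W.ρ * (τ 0 * W.ρ * (τ 0 - ξ • 1))) := by
      rw [conj, sub_mul, neg_mul, smul_mul_assoc]
      simp only [mul_assoc]
    _ = _ := by rw [inv, mul_one]

theorem Twist.IsInvolutive.anticommutesWithConj_self (hτ : IsHeckeFamily ξ n τ)
    {W : Twist F U} (hW : W.IsInvolutive n τ) (χ_anticommute_γ : Anticommute W.χ W.γ)
    (π_mul_χ : W.π * W.χ = W.γ * W.π) (π_mul_π : W.π * W.π = W.π)
    (π_mul_τ_mul_π : 1 < n → W.π * τ 0 * W.π = τ 0 * W.π)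
    (γ_anticommute_conj_γ : 1 < n → Anticommute W.γ (τ 0 * W.γ * (τ 0 - ξ • 1)))
    (conj_γ_commute_π : 1 < n → Commute ((τ 0 - ξ • 1) * W.γ * τ 0) W.π) :
    W.AnticommutesWithConj ξ n τ W := by
  have ρ_χ : W.ρ * W.χ = -(W.γ * W.ρ) := Twist.ρ_mul_χ χ_anticommute_γ χ_anticommute_γ.symm π_mul_χ
  have ρ_ρ : W.ρ * W.ρ = (W.χ - W.γ) * W.ρ := by
    simpa using ρ_mul_mul_ρ χ_anticommute_γ π_mul_χ hW π_mul_π (Commute.one_left _) (by simpa)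
  have γ_anticommute_conj_ρ (h : 1 < n) : Anticommute W.γ (τ 0 * W.ρ * (τ 0 - ξ • 1)) :=
    hW.γ_anticommute_conj_ρ hτ χ_anticommute_γ h (γ_anticommute_conj_γ h) (conj_γ_commute_π h)
  exact {
    χ_anticommute_γ := χ_anticommute_γ
    γ_anticommute_χ := χ_anticommute_γ.symm
    ρ_mul_χ := ρ_χ
    defect_mul_χ := by
      rw [defect, sub_mul, add_mul, ρ_χ, mul_sub, mul_add, hW.χ_mul_χ, hW.γ_mul_γ]
      abel
    defect_mul_ρ := by
      simpa using
        defect_mul_mul_ρ χ_anticommute_γ π_mul_χ hW π_mul_π (Commute.one_left _) (by simpa)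
    ρ_mul_defect := by
      rw [defect, mul_sub, mul_add, hW.ρ_mul_γ, ρ_ρ, ρ_χ]
      noncomm_ring
    defect_mul_τ_mul_ρ h :=
      defect_mul_mul_ρ χ_anticommute_γ π_mul_χ hW π_mul_π (hW.commute_χ 0 h)
        (π_mul_τ_mul_π h)
    γ_anticommute_conj_γ := γ_anticommute_conj_γ
    γ_anticommute_conj_ρ := γ_anticommute_conj_ρ
    ρ_mul_conj h :=
      hW.ρ_mul_conj hτ h (γ_anticommute_conj_ρ h) <|
        ρ_mul_mul_ρ χ_anticommute_γ π_mul_χ hW π_mul_π (hW.commute_χ 0 h) (π_mul_τ_mul_π h) }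

end TwistedOperators

section Induction

open scoped TensorProduct

variable {F} {ξ : F} {d : ℕ} {aa : ℕ → F} {n : ℕ} {K A : Type*} [Ring K] [Algebra F K] [Ring A]
  [Algebra F A]

/-- The data from which a Hecke–Clifford system of rank `n + 1` is induced: the rank one algebra
`K` with its grading automorphism `σ`, an algebra `A` containing a system of rank `n`, and the
canonical map `κ : K → A`. -/
structure InductionDatum (ξ : F) (d : ℕ) (aa : ℕ → F) (n : ℕ) (K A : Type*) [Ring K]
    [Algebra F K] [Ring A] [Algebra F A] where
  (cK eK : K)
  (tK : ℕ → K)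
  (t : ℕ → A)
  (c e : A)
  (σ : K →ₐ[F] K)
  (κ : K →ₐ[F] A)
  generates : Generates F 1 tK cK eK
  systemK : HeckeCliffordSystem ξ d aa 1 tK cK eK
  system : HeckeCliffordSystem ξ d aa n t c e
  σ_cK : σ cK = -cK
  σ_eK : σ eK = -eK
  κ_cK : κ cK = c
  κ_eK : κ eK = e
  n_pos : 0 < n

variable (F K) in
/-- The action of `A` on the second factor of `K ⊗ A`. -/
noncomputable def evenMul : A →ₐ[F] Module.End F (K ⊗[F] A) :=
  (Module.End.lTensorAlgHom F A K).comp (Algebra.lmul F A)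

theorem evenMul_tmul (x : A) (p : K) (a : A) : evenMul F K x (p ⊗ₜ a) = p ⊗ₜ[F] (x * a) := rfl

theorem HeckeCliffordSystem.isHeckeFamily {E : Type*} [Ring E] [Algebra F E] {t : ℕ → E}
    {c e : E} (S : HeckeCliffordSystem ξ d aa n t c e) : IsHeckeFamily ξ n t :=
  ⟨S.t_mul_t, S.t_braid, S.t_comm⟩

theorem IsHeckeFamily.map {E E' : Type*} [Ring E] [Algebra F E] [Ring E'] [Algebra F E']
    {t : ℕ → E} (ht : IsHeckeFamily ξ n t) (φ : E →ₐ[F] E') :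
    IsHeckeFamily ξ n fun i => φ (t i) where
  t_mul_t i hi := by simp [← map_mul, ht.t_mul_t i hi]
  t_braid i hi := by simp [← map_mul, ht.t_braid i hi]
  t_comm i j hij hj := by simp [← map_mul, ht.t_comm i j hij hj]

theorem sum_pow_apply {V : Type*} [AddCommGroup V] [Module F V] {P : Module.End F V} {y : A}
    {f : A →ₗ[F] V} (h : ∀ a, P (f a) = f (y * a)) (a : A) :
    (∑ i ∈ Finset.range (d + 1), aa i • P ^ i) (f a) =
      f ((∑ i ∈ Finset.range (d + 1), aa i • y ^ i) * a) := by
  have pow_apply (i : ℕ) : (P ^ i) (f a) = f (y ^ i * a) := by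
    induction i with
    | zero => simp
    | succ i ih => rw [pow_succ', Module.End.mul_apply, ih, h, pow_succ', mul_assoc]
  simp [LinearMap.sum_apply, pow_apply, Finset.sum_mul, map_sum]

theorem twistedOp_tOp_sub_cosetVec_zero {U : Type*} [AddCommGroup U] [Module F U]
    {τ : ℕ → Module.End F U} (hn : 0 < n) {W : Twist F U} {u : U} (hu : W.ρ u = W.χ u - W.γ u) :
    twistedOp ξ n τ W ((tOp ξ n τ 0 - ξ • 1) (cosetVec F 0 u)) =
      (tOp ξ n τ 0 - ξ • 1) (cosetVec F 0 (W.γ u)) := by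
  simp only [tOp_sub_cosetVec_zero, map_sub, map_smul, twistedOp_cosetVec_zero,
    twistedOp_cosetVec_succ W hn (k := 0), descProd, Module.End.one_apply, hu]
  module

namespace InductionDatum

variable (I : InductionDatum ξ d aa n K A)

theorem σ_σ (p : K) : I.σ (I.σ p) = p := by
  have σ_comp_σ : I.σ.comp I.σ = AlgHom.id F K :=
    I.generates.hom_ext (by simp [I.σ_cK]) (by simp [I.σ_eK]) fun i hi => absurd hi (by omega)
  exact DFunLike.congr_fun σ_comp_σ p

theorem t_commute_κ {i : ℕ} (hi₀ : 0 < i) (hi : i + 1 < n) (p : K) :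
    Commute (I.t i) (I.κ p) :=
  I.generates.semiconjBy (by rw [I.κ_cK]; exact I.system.t_mul_c i hi₀ hi)
    (by rw [I.κ_eK]; exact I.system.t_mul_e i hi₀ hi) (fun i hi => absurd hi (by omega)) p

theorem semiconjBy_κ_of_anticommute {x : A} (hc : Anticommute x I.c) (he : Anticommute x I.e)
    (p : K) : SemiconjBy x (I.κ p) (I.κ (I.σ p)) := by
  refine I.generates.semiconjBy (ψ := I.κ.comp I.σ) ?_ ?_ (fun i hi => absurd hi (by omega)) p
  · rw [AlgHom.comp_apply, I.σ_cK, map_neg, I.κ_cK]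
    exact hc.semiconjBy_neg
  · rw [AlgHom.comp_apply, I.σ_eK, map_neg, I.κ_eK]
    exact he.semiconjBy_neg

theorem conj_c_semiconjBy_κ (hn : 1 < n) (p : K) :
    SemiconjBy (I.t 0 * I.c * (I.t 0 - ξ • 1)) (I.κ p) (I.κ (I.σ p)) :=
  I.semiconjBy_κ_of_anticommute (I.system.c_anticommute_c hn).symm
    (I.system.e_anticommute_c hn).symm p

theorem conj_inv_e_semiconjBy_κ (hn : 1 < n) (p : K) :
    SemiconjBy ((I.t 0 - ξ • 1) * I.e * I.t 0) (I.κ p) (I.κ (I.σ p)) := by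
  let T := unitOfQuadratic ξ (I.t 0) (I.system.t_mul_t 0 hn)
  have conj_inv (x : A) : SemiconjBy (T⁻¹ : Aˣ).val (I.t 0 * x * (I.t 0 - ξ • 1)) x :=
    (Units.mk_semiconjBy T x).units_inv_symm_left
  have inv_conj : SemiconjBy (T⁻¹ : Aˣ).val I.e ((I.t 0 - ξ • 1) * I.e * I.t 0) :=
    Units.mk_semiconjBy T⁻¹ I.e
  exact I.semiconjBy_κ_of_anticommute
    ((I.system.e_anticommute_c hn).of_semiconjBy_unit inv_conj (conj_inv I.c))
    ((I.system.e_anticommute_e hn).of_semiconjBy_unit inv_conj (conj_inv I.e)) p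

/-- The action on `K ⊗ A` of an odd element of `A`, with the sign from passing it through `K`. -/
noncomputable def oddMul (x : A) : Module.End F (K ⊗[F] A) :=
  TensorProduct.map I.σ.toLinearMap (LinearMap.mulLeft F x)

theorem oddMul_tmul (x : A) (p : K) (a : A) : I.oddMul x (p ⊗ₜ a) = I.σ p ⊗ₜ (x * a) := rfl

/-- The endomorphism `p ⊗ a ↦ 1 ⊗ κ(p) a` of `K ⊗ A`. -/
noncomputable def absorb : Module.End F (K ⊗[F] A) :=
  TensorProduct.mk F K A 1 ∘ₗ LinearMap.mul' F A ∘ₗ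
    TensorProduct.map I.κ.toLinearMap LinearMap.id

theorem absorb_tmul (p : K) (a : A) : I.absorb (p ⊗ₜ a) = 1 ⊗ₜ (I.κ p * a) := rfl

theorem evenMul_mul_oddMul_mul_evenMul (x y z : A) :
    evenMul F K x * I.oddMul y * evenMul F K z = I.oddMul (x * y * z) :=
  TensorProduct.ext' fun p a => by simp [evenMul_tmul, oddMul_tmul, mul_assoc]

theorem oddMul_anticommute {x y : A} (h : Anticommute x y) :
    Anticommute (I.oddMul x) (I.oddMul y) :=
  TensorProduct.ext' fun p a => by
    have xy : x * (y * a) = -(y * (x * a)) := by rw [← mul_assoc, h, neg_mul, mul_assoc]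
    simp [oddMul_tmul, xy, TensorProduct.tmul_neg]

theorem commute_evenMul_oddMul {x y : A} (h : Commute x y) :
    Commute (evenMul F K x) (I.oddMul y) :=
  TensorProduct.ext' fun p a => by simp [evenMul_tmul, oddMul_tmul, ← mul_assoc, h.eq]

theorem absorb_mul_absorb : I.absorb * I.absorb = I.absorb :=
  TensorProduct.ext' fun p a => by simp [absorb_tmul]

theorem absorb_mul_evenMul_mul_absorb (x : A) :
    I.absorb * evenMul F K x * I.absorb = evenMul F K x * I.absorb :=
  TensorProduct.ext' fun p a => by simp [absorb_tmul, evenMul_tmul]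

theorem commute_evenMul_absorb {x : A} (h : ∀ p, Commute x (I.κ p)) :
    Commute (evenMul F K x) I.absorb :=
  TensorProduct.ext' fun p a => by simp [absorb_tmul, evenMul_tmul, ← mul_assoc, (h p).eq]

theorem commute_oddMul_absorb {x : A} (h : ∀ p, SemiconjBy x (I.κ p) (I.κ (I.σ p))) :
    Commute (I.oddMul x) I.absorb :=
  TensorProduct.ext' fun p a => by simp [absorb_tmul, oddMul_tmul, ← mul_assoc, (h p).eq]

/-- The twist with base action `k ∈ K`, diagonal action `x ∈ A` and projection `π`. -/
noncomputable def twist (k : K) (x : A) (π : Module.End F (K ⊗[F] A)) : Twist F (K ⊗[F] A) where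
  χ := (LinearMap.mulLeft F k).rTensor A
  γ := I.oddMul x
  π := π

theorem twist_χ_tmul (k : K) (x : A) (π : Module.End F (K ⊗[F] A)) (p : K) (a : A) :
    (I.twist k x π).χ (p ⊗ₜ a) = (k * p) ⊗ₜ a := rfl

theorem isInvolutive_twist {k : K} (hk : k * k = 1) {x : A} (hx : x * x = 1)
    (ht : ∀ i, 0 < i → i + 1 < n → I.t i * x = x * I.t i) {π : Module.End F (K ⊗[F] A)}
    (hπ : ∀ i, 0 < i → i + 1 < n → Commute (evenMul F K (I.t i)) π) :
    (I.twist k x π).IsInvolutive n fun i => evenMul F K (I.t i) where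
  χ_mul_χ := TensorProduct.ext' fun p a => by simp [twist_χ_tmul, ← mul_assoc, hk]
  γ_mul_γ := TensorProduct.ext' fun p a => by
    simp [twist, oddMul_tmul, ← mul_assoc, hx, I.σ_σ]
  commute_χ i _ := TensorProduct.ext' fun p a => by simp [twist_χ_tmul, evenMul_tmul]
  commute_γ i hi₀ hi := I.commute_evenMul_oddMul (ht i hi₀ hi)
  commute_π := hπ

theorem twist_χ_anticommute_oddMul {k : K} (hk : I.σ k = -k) (x y : A)
    (π : Module.End F (K ⊗[F] A)) : Anticommute (I.twist k x π).χ (I.oddMul y) :=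
  TensorProduct.ext' fun p a => by
    simp [twist_χ_tmul, oddMul_tmul, hk, TensorProduct.neg_tmul]

theorem absorb_mul_twist_χ {k : K} {x : A} (hx : I.κ k = x)
    (π : Module.End F (K ⊗[F] A)) :
    I.absorb * (I.twist k x π).χ = I.oddMul x * I.absorb :=
  TensorProduct.ext' fun p a => by
    simp [twist_χ_tmul, oddMul_tmul, absorb_tmul, hx, mul_assoc]

/-- The twist for `C_1`. -/
noncomputable def cTwist : Twist F (K ⊗[F] A) := I.twist I.cK I.c 1

/-- The twist for `C_1 X_1`. -/
noncomputable def eTwist : Twist F (K ⊗[F] A) := I.twist I.eK I.e I.absorb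

/-- The action of the Hecke generators on `K ⊗ A`. -/
noncomputable def τ (i : ℕ) : Module.End F (K ⊗[F] A) := evenMul F K (I.t i)

theorem isHeckeFamily_τ : IsHeckeFamily ξ n I.τ := I.system.isHeckeFamily.map (evenMul F K)

theorem isInvolutive_cTwist : I.cTwist.IsInvolutive n I.τ :=
  I.isInvolutive_twist I.systemK.c_mul_c I.system.c_mul_c I.system.t_mul_c
    fun _ _ _ => Commute.one_right _

theorem isInvolutive_eTwist : I.eTwist.IsInvolutive n I.τ :=
  I.isInvolutive_twist I.systemK.e_mul_e I.system.e_mul_e I.system.t_mul_e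
    fun _ hi₀ hi => I.commute_evenMul_absorb (I.t_commute_κ hi₀ hi)

theorem evenMul_sub (x : A) : evenMul F K x - ξ • 1 = evenMul F K (x - ξ • 1) := by simp

theorem conj_oddMul (x : A) : I.τ 0 * I.oddMul x * (I.τ 0 - ξ • 1) =
    I.oddMul (I.t 0 * x * (I.t 0 - ξ • 1)) := by
  rw [τ, evenMul_sub, evenMul_mul_oddMul_mul_evenMul]

theorem conj_inv_oddMul (x : A) : (I.τ 0 - ξ • 1) * I.oddMul x * I.τ 0 =
    I.oddMul ((I.t 0 - ξ • 1) * x * I.t 0) := by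
  rw [τ, evenMul_sub, evenMul_mul_oddMul_mul_evenMul]

theorem cTwist_anticommutesWithConj_cTwist : I.cTwist.AnticommutesWithConj ξ n I.τ I.cTwist :=
  I.isInvolutive_cTwist.anticommutesWithConj_of_π_eq_one I.isHeckeFamily_τ I.isInvolutive_cTwist
    rfl (I.twist_χ_anticommute_oddMul I.σ_cK I.c I.c 1)
    (I.twist_χ_anticommute_oddMul I.σ_cK I.c I.c 1).symm
    (I.isInvolutive_cTwist.ρ_mul_χ_of_π_eq_one rfl)
    (fun hn => I.conj_oddMul I.c ▸ I.oddMul_anticommute (I.system.c_anticommute_c hn))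
    fun _ => Commute.one_left _

theorem eTwist_anticommutesWithConj_cTwist : I.eTwist.AnticommutesWithConj ξ n I.τ I.cTwist :=
  I.isInvolutive_eTwist.anticommutesWithConj_of_π_eq_one I.isHeckeFamily_τ I.isInvolutive_cTwist
    rfl (I.twist_χ_anticommute_oddMul I.σ_eK I.e I.c I.absorb)
    (I.twist_χ_anticommute_oddMul I.σ_cK I.c I.e 1).symm
    (Twist.ρ_mul_χ (I.twist_χ_anticommute_oddMul I.σ_eK I.e I.c I.absorb)
      (I.twist_χ_anticommute_oddMul I.σ_cK I.c I.e 1).symm (I.absorb_mul_twist_χ I.κ_cK 1))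
    (fun hn => I.conj_oddMul I.c ▸ I.oddMul_anticommute (I.system.e_anticommute_c hn))
    fun hn => I.conj_oddMul I.c ▸ (I.commute_oddMul_absorb (I.conj_c_semiconjBy_κ hn)).symm

theorem eTwist_anticommutesWithConj_eTwist : I.eTwist.AnticommutesWithConj ξ n I.τ I.eTwist :=
  I.isInvolutive_eTwist.anticommutesWithConj_self I.isHeckeFamily_τ
    (I.twist_χ_anticommute_oddMul I.σ_eK I.e I.e I.absorb)
    (I.absorb_mul_twist_χ I.κ_eK I.absorb) I.absorb_mul_absorb
    (fun _ => I.absorb_mul_evenMul_mul_absorb (I.t 0))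
    (fun hn => I.conj_oddMul I.e ▸ I.oddMul_anticommute (I.system.e_anticommute_e hn))
    fun hn => I.conj_inv_oddMul I.e ▸ I.commute_oddMul_absorb (I.conj_inv_e_semiconjBy_κ hn)

/-- The action of the Hecke generators on the induced space. -/
noncomputable def tInd (i : ℕ) : Module.End F (CosetSpace n (K ⊗[F] A)) := tOp ξ n I.τ i

/-- The action of `C_1` on the induced space. -/
noncomputable def cInd : Module.End F (CosetSpace n (K ⊗[F] A)) := twistedOp ξ n I.τ I.cTwist

/-- The action of `C_1 X_1` on the induced space. -/
noncomputable def eInd : Module.End F (CosetSpace n (K ⊗[F] A)) := twistedOp ξ n I.τ I.eTwist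

theorem isHeckeFamily_tInd : IsHeckeFamily ξ (n + 1) I.tInd := I.isHeckeFamily_τ.isHeckeFamily_tOp

theorem tInd_commute_cInd {i : ℕ} (hi₀ : 0 < i) (hi : i < n) : Commute (I.tInd i) I.cInd := by
  obtain ⟨i, rfl⟩ := Nat.exists_eq_add_one.mpr hi₀
  exact I.isInvolutive_cTwist.tOp_commute_twistedOp I.isHeckeFamily_τ hi

theorem tInd_commute_eInd {i : ℕ} (hi₀ : 0 < i) (hi : i < n) : Commute (I.tInd i) I.eInd := by
  obtain ⟨i, rfl⟩ := Nat.exists_eq_add_one.mpr hi₀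
  exact I.isInvolutive_eTwist.tOp_commute_twistedOp I.isHeckeFamily_τ hi

theorem cInd_anticommute_cInd :
    Anticommute I.cInd (I.tInd 0 * I.cInd * (I.tInd 0 - ξ • 1)) :=
  I.cTwist_anticommutesWithConj_cTwist.anticommute I.isHeckeFamily_τ I.n_pos
    I.isInvolutive_cTwist I.isInvolutive_cTwist

theorem eInd_anticommute_cInd :
    Anticommute I.eInd (I.tInd 0 * I.cInd * (I.tInd 0 - ξ • 1)) :=
  I.eTwist_anticommutesWithConj_cTwist.anticommute I.isHeckeFamily_τ I.n_pos
    I.isInvolutive_eTwist I.isInvolutive_cTwist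

theorem eInd_anticommute_eInd :
    Anticommute I.eInd (I.tInd 0 * I.eInd * (I.tInd 0 - ξ • 1)) :=
  I.eTwist_anticommutesWithConj_eTwist.anticommute I.isHeckeFamily_τ I.n_pos
    I.isInvolutive_eTwist I.isInvolutive_eTwist

theorem commute_conj_inv_eInd :
    Commute (I.cInd * I.eInd) ((I.tInd 0 - ξ • 1) * I.eInd * I.tInd 0) := by
  let T := unitOfQuadratic ξ (I.tInd 0) (I.isHeckeFamily_tInd.t_mul_t 0 (by simpa using I.n_pos))
  have conj_inv (Q : Module.End F (CosetSpace n (K ⊗[F] A))) :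
      SemiconjBy (T⁻¹ : (Module.End F _)ˣ).val (I.tInd 0 * Q * (I.tInd 0 - ξ • 1)) Q :=
    (Units.mk_semiconjBy T Q).units_inv_symm_left
  have inv_conj : SemiconjBy (T⁻¹ : (Module.End F _)ˣ).val I.eInd
      ((I.tInd 0 - ξ • 1) * I.eInd * I.tInd 0) := Units.mk_semiconjBy T⁻¹ I.eInd
  exact (I.eInd_anticommute_cInd.of_semiconjBy_unit inv_conj (conj_inv I.cInd)).symm.mul_commute
    (I.eInd_anticommute_eInd.of_semiconjBy_unit inv_conj (conj_inv I.eInd)).symm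

/-- The operator `f(X_1)` on the induced space. -/
noncomputable def polyInd : Module.End F (CosetSpace n (K ⊗[F] A)) :=
  ∑ i ∈ Finset.range (d + 1), aa i • (I.cInd * I.eInd) ^ i

theorem commute_polyInd {P : Module.End F (CosetSpace n (K ⊗[F] A))}
    (h : Commute (I.cInd * I.eInd) P) : Commute I.polyInd P :=
  Commute.sum_left _ _ _ fun i _ => (h.pow_left i).smul_left _

theorem polyInd_cosetVec_zero (u : K ⊗[F] A) : I.polyInd (cosetVec F 0 u) = 0 := by
  induction u with
  | zero => simp
  | add u v hu hv => rw [map_add, map_add, hu, hv, add_zero]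
  | tmul p a =>
    have poly := sum_pow_apply (d := d) (aa := aa) (P := I.cInd * I.eInd) (y := I.cK * I.eK)
      (f := cosetVec F 0 ∘ₗ (TensorProduct.mk F K A).flip a) (fun p => by
        simp [cInd, eInd, twistedOp_cosetVec_zero, cTwist, eTwist, twist_χ_tmul, mul_assoc]) p
    simpa [I.systemK.poly, polyInd] using poly

theorem polyInd_cosetVec_one_one_tmul (a : A) :
    I.polyInd (cosetVec F 1 ((1 : K) ⊗ₜ a)) = 0 := by
  have c_apply (u : K ⊗[F] A) : I.cInd ((I.tInd 0 - ξ • 1) (cosetVec F 0 u)) =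
      (I.tInd 0 - ξ • 1) (cosetVec F 0 (I.cTwist.γ u)) :=
    twistedOp_tOp_sub_cosetVec_zero I.n_pos (by simp [Twist.ρ, cTwist, twist])
  have e_apply (a : A) : I.eInd ((I.tInd 0 - ξ • 1) (cosetVec F 0 ((1 : K) ⊗ₜ a))) =
      (I.tInd 0 - ξ • 1) (cosetVec F 0 (I.eTwist.γ (1 ⊗ₜ a))) :=
    twistedOp_tOp_sub_cosetVec_zero I.n_pos
      (by simp [Twist.ρ, eTwist, twist, absorb_tmul, oddMul_tmul])
  have poly := sum_pow_apply (d := d) (aa := aa) (P := I.cInd * I.eInd) (y := I.c * I.e)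
    (f := (I.tInd 0 - ξ • 1) ∘ₗ cosetVec F 0 ∘ₗ TensorProduct.mk F K A 1) (fun a => by
      simp only [LinearMap.comp_apply, Module.End.mul_apply, TensorProduct.mk_apply, e_apply,
        c_apply, cTwist, eTwist, twist, oddMul_tmul, map_one, mul_assoc]) a
  rw [I.system.poly, zero_mul, map_zero] at poly
  simpa [tInd, tOp_cosetVec_self, ← polyInd.eq_1, polyInd_cosetVec_zero] using poly

theorem polyInd_cosetVec_one_cTwist_χ {u : K ⊗[F] A} (hu : I.polyInd (cosetVec F 1 u) = 0) :
    I.polyInd (cosetVec F 1 (I.cTwist.χ u)) = 0 := by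
  have comm := I.commute_polyInd (I.cInd_anticommute_cInd.mul_commute I.eInd_anticommute_cInd)
  have comm_apply := end_apply_comm comm (cosetVec F 1 u)
  rw [hu, map_zero] at comm_apply
  rw [← comm_apply]
  exact congrArg _ (conjOp_twistedOp_cosetVec_one I.n_pos I.cTwist u).symm

theorem polyInd_cosetVec_one_eTwist_χ {u : K ⊗[F] A} (hu : I.polyInd (cosetVec F 1 u) = 0) :
    I.polyInd (cosetVec F 1 (I.eTwist.χ u)) = 0 := by
  have comm_apply := end_apply_comm (I.commute_polyInd I.commute_conj_inv_eInd)
    ((I.tInd 0 - ξ • 1) (cosetVec F 0 u))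
  have t_apply : I.tInd 0 ((I.tInd 0 - ξ • 1) (cosetVec F 0 u)) = cosetVec F 0 u :=
    LinearMap.congr_fun (unitOfQuadratic ξ (I.tInd 0)
      (I.isHeckeFamily_tInd.t_mul_t 0 (Nat.succ_lt_succ I.n_pos))).mul_inv _
  have e_apply : I.eInd (cosetVec F 0 u) = cosetVec F 0 (I.eTwist.χ u) :=
    twistedOp_cosetVec_zero I.eTwist u
  have poly_apply (u : K ⊗[F] A) : I.polyInd ((I.tInd 0 - ξ • 1) (cosetVec F 0 u)) =
      I.polyInd (cosetVec F 1 u) := by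
    rw [tInd, tOp_sub_cosetVec_zero, map_sub, map_smul, I.polyInd_cosetVec_zero, smul_zero,
      sub_zero]
  rwa [Module.End.mul_apply, Module.End.mul_apply, t_apply, e_apply, poly_apply, poly_apply, hu,
    map_zero] at comm_apply

theorem polyInd_cosetVec_one (u : K ⊗[F] A) : I.polyInd (cosetVec F 1 u) = 0 := by
  have all_p : (⨅ a : A, LinearMap.ker (I.polyInd ∘ₗ cosetVec F 1 ∘ₗ
      (TensorProduct.mk F K A).flip a)) = ⊤ := by
    refine I.generates.submodule_eq_top _ ?_ ?_ ?_ fun i hi => by omega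
    · simpa [Submodule.mem_iInf] using I.polyInd_cosetVec_one_one_tmul
    · intro p hp
      simp only [Submodule.mem_iInf] at hp ⊢
      exact fun a => I.polyInd_cosetVec_one_cTwist_χ (hp a)
    · intro p hp
      simp only [Submodule.mem_iInf] at hp ⊢
      exact fun a => I.polyInd_cosetVec_one_eTwist_χ (hp a)
  induction u with
  | zero => simp
  | add u v hu hv => rw [map_add, map_add, hu, hv, add_zero]
  | tmul p a =>
    have mem := all_p.ge (Submodule.mem_top (x := p))
    exact (Submodule.mem_iInf _).mp mem a

theorem polyInd_eq_zero : I.polyInd = 0 := by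
  refine cosetSpace_hom_ext fun k hk u => ?_
  rw [LinearMap.zero_apply]
  induction k with
  | zero => exact I.polyInd_cosetVec_zero u
  | succ k ih =>
    rcases Nat.eq_zero_or_pos k with rfl | hk₀
    · exact I.polyInd_cosetVec_one u
    · have comm : Commute I.polyInd (I.tInd k) :=
        I.commute_polyInd
          ((I.tInd_commute_cInd hk₀ hk).symm.mul_left (I.tInd_commute_eInd hk₀ hk).symm)
      have comm_apply := end_apply_comm comm (cosetVec F k u)
      rwa [ih (by omega), map_zero, tInd, tOp_cosetVec_self (by omega)] at comm_apply

theorem inducedSystem : HeckeCliffordSystem ξ d aa (n + 1) I.tInd I.cInd I.eInd where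
  c_mul_c := I.isInvolutive_cTwist.twistedOp_mul_self
  e_mul_e := I.isInvolutive_eTwist.twistedOp_mul_self
  poly := I.polyInd_eq_zero
  t_mul_t := I.isHeckeFamily_tInd.t_mul_t
  t_braid := I.isHeckeFamily_tInd.t_braid
  t_comm := I.isHeckeFamily_tInd.t_comm
  t_mul_c i hi₀ hi := I.tInd_commute_cInd hi₀ (by omega)
  t_mul_e i hi₀ hi := I.tInd_commute_eInd hi₀ (by omega)
  c_anticommute_c _ := I.cInd_anticommute_cInd
  e_anticommute_e _ := I.eInd_anticommute_eInd
  e_anticommute_c _ := I.eInd_anticommute_cInd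

end InductionDatum

end Induction

/-! ### The regular representation -/

section AscendingProduct

variable {F} {E : Type*} [Ring E] [Algebra F E] {ξ : F} {n : ℕ} {t : ℕ → E}

/-- The product `t_0 ⋯ t_{j-1}`. -/
def ascProd (t : ℕ → E) (j : ℕ) : E := ((List.range j).map t).prod

theorem ascProd_succ (t : ℕ → E) (j : ℕ) : ascProd t (j + 1) = ascProd t j * t j :=
  List.prod_range_succ t j

theorem ascProd_succ' (t : ℕ → E) (j : ℕ) :
    ascProd t (j + 1) = t 0 * ascProd (fun i => t (i + 1)) j :=
  List.prod_range_succ' t j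

theorem commute_ascProd {x : E} {j : ℕ} (h : ∀ i < j, Commute x (t i)) :
    Commute x (ascProd t j) :=
  Commute.list_prod_right _ _ (by simpa using h)

theorem isUnit_ascProd {j : ℕ} (h : ∀ i < j, IsUnit (t i)) : IsUnit (ascProd t j) :=
  List.prod_isUnit (by simpa using h)

theorem IsHeckeFamily.isUnit (ht : IsHeckeFamily ξ n t) {i : ℕ} (hi : i + 1 < n) :
    IsUnit (t i) :=
  (unitOfQuadratic ξ (t i) (ht.t_mul_t i hi)).isUnit

theorem IsHeckeFamily.semiconjBy_ascProd (ht : IsHeckeFamily ξ n t) {i j : ℕ}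
    (hij : i + 2 ≤ j) (hj : j < n) : SemiconjBy (ascProd t j) (t i) (t (i + 1)) := by
  induction j, hij using Nat.le_induction with
  | base =>
    have braid : SemiconjBy (t i * t (i + 1)) (t i) (t (i + 1)) := by
      rw [SemiconjBy, ht.t_braid i hj, mul_assoc]
    have comm : Commute (ascProd t i) (t (i + 1)) :=
      (commute_ascProd fun k hk => (ht.t_comm k (i + 1) (by omega) hj).symm).symm
    simpa only [ascProd_succ, mul_assoc] using SemiconjBy.mul_left comm braid
  | succ j hij ih =>
    rw [ascProd_succ]
    exact (ih (by omega)).mul_left (ht.t_comm i j hij hj).symm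

end AscendingProduct

section RegularRepresentation

open scoped TensorProduct

variable {F} {ξ : F} {d : ℕ} {aa : ℕ → F} {n : ℕ} {K A E : Type*} [Ring K] [Algebra F K] [Ring A]
  [Algebra F A] [Ring E] [Algebra F E]

namespace InductionDatum

variable (I : InductionDatum ξ d aa n K A) (J : InductionDatum ξ d aa (n + 1) K E) (ι : A →ₐ[F] E)

theorem c_mul_t_mul_κ_mul_t (hn : 1 < n) (p : K) :
    I.c * (I.t 0 - ξ • 1) * I.κ p * I.t 0 = (I.t 0 - ξ • 1) * I.κ (I.σ p) * I.t 0 * I.c := by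
  have inv_mul : (I.t 0 - ξ • 1) * I.t 0 = 1 := I.system.t_inv_mul_t hn
  calc I.c * (I.t 0 - ξ • 1) * I.κ p * I.t 0
      = (I.t 0 - ξ • 1) * (I.t 0 * I.c * (I.t 0 - ξ • 1) * I.κ p) * I.t 0 := by
        simp only [← mul_assoc, inv_mul, one_mul]
    _ = _ := by
        rw [(I.conj_c_semiconjBy_κ hn p).eq]
        simp only [mul_assoc, inv_mul, mul_one]

theorem e_mul_t_mul_κ_mul_t (hn : 1 < n) (p : K) :
    I.e * I.t 0 * I.κ p * (I.t 0 - ξ • 1) = I.t 0 * I.κ (I.σ p) * (I.t 0 - ξ • 1) * I.e := by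
  have mul_inv : I.t 0 * (I.t 0 - ξ • 1) = 1 :=
    (unitOfQuadratic ξ (I.t 0) (I.system.t_mul_t 0 hn)).mul_inv
  calc I.e * I.t 0 * I.κ p * (I.t 0 - ξ • 1)
      = I.t 0 * ((I.t 0 - ξ • 1) * I.e * I.t 0 * I.κ p) * (I.t 0 - ξ • 1) := by
        simp only [← mul_assoc, mul_inv, one_mul]
    _ = _ := by
        rw [(I.conj_inv_e_semiconjBy_κ hn p).eq]
        simp only [mul_assoc, mul_inv, mul_one]

/-- The map `ι` identifies the system of `I` with the restriction of the system of `J` to rank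
`n`, compatibly with the rank one algebra. -/
structure IsRestriction : Prop where
  map_t : ∀ i, i + 1 < n → ι (I.t i) = J.t i
  map_c : ι I.c = J.c
  map_e : ι I.e = J.e
  map_κ : ∀ p, ι (I.κ p) = J.κ p
  cK_eq : I.cK = J.cK
  eK_eq : I.eK = J.eK
  σ_eq : I.σ = J.σ

/-- The map `p ⊗ a ↦ p T_1 ⋯ T_n a` from `K ⊗ A` to the algebra of rank `n + 1`: conjugation by
`T_1 ⋯ T_n` moves `A` to the last `n` strands, away from `K`. -/
noncomputable def base : K ⊗[F] A →ₗ[F] E :=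
  LinearMap.mul' F E ∘ₗ
    TensorProduct.map J.κ.toLinearMap (LinearMap.mulLeft F (ascProd J.t n) ∘ₗ ι.toLinearMap)

theorem base_tmul (p : K) (a : A) : J.base ι (p ⊗ₜ a) = J.κ p * (ascProd J.t n * ι a) := rfl

/-- The evaluation of the induced space in the algebra of rank `n + 1`. -/
noncomputable def evaluate : CosetSpace n (K ⊗[F] A) →ₗ[F] E :=
  cosetLift fun k => LinearMap.mulLeft F (descProd J.t k) ∘ₗ J.base ι

theorem evaluate_cosetVec {k : ℕ} (hk : k ≤ n) (u : K ⊗[F] A) :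
    J.evaluate ι (cosetVec F k u) = descProd J.t k * J.base ι u := by
  rw [evaluate, cosetLift_cosetVec _ hk]
  rfl

theorem exists_ascProd_eq_mul (hn : 0 < n) : ∃ u, ascProd J.t n = J.t 0 * u ∧
    ∀ x, (∀ i, 0 < i → i + 1 < n + 1 → Commute (J.t i) x) → Commute x u := by
  obtain ⟨n, rfl⟩ := Nat.exists_eq_add_one.mpr hn
  exact ⟨_, ascProd_succ' _ _, fun x hx =>
    commute_ascProd fun i hi => (hx (i + 1) (by omega) (by omega)).symm⟩

theorem base_twist_χ {k : K} {x : A} {π : Module.End F (K ⊗[F] A)} (u : K ⊗[F] A) :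
    J.base ι ((I.twist k x π).χ u) = J.κ k * J.base ι u := by
  suffices J.base ι ∘ₗ (I.twist k x π).χ = LinearMap.mulLeft F (J.κ k) ∘ₗ J.base ι from
    LinearMap.congr_fun this u
  exact TensorProduct.ext' fun p a => by simp [base_tmul, twist_χ_tmul, mul_assoc]

namespace IsRestriction

variable {I J ι} (R : I.IsRestriction J ι)
include R

theorem base_τ {i : ℕ} (hi : i + 1 < n) (u : K ⊗[F] A) :
    J.base ι (I.τ i u) = J.t (i + 1) * J.base ι u := by
  suffices J.base ι ∘ₗ I.τ i = LinearMap.mulLeft F (J.t (i + 1)) ∘ₗ J.base ι from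
    LinearMap.congr_fun this u
  refine TensorProduct.ext' fun p a => ?_
  simp only [LinearMap.comp_apply, LinearMap.mulLeft_apply, τ, evenMul_tmul, base_tmul, map_mul,
    R.map_t i hi]
  rw [← mul_assoc (ascProd J.t n), J.system.isHeckeFamily.semiconjBy_ascProd hi n.lt_succ_self,
    mul_assoc, ← mul_assoc, ← J.t_commute_κ (Nat.succ_pos i) (by omega), mul_assoc]

theorem evaluate_tInd {i : ℕ} (hi : i < n) (v : CosetSpace n (K ⊗[F] A)) :
    J.evaluate ι (I.tInd i v) = J.t i * J.evaluate ι v := by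
  have ht := J.system.isHeckeFamily
  suffices J.evaluate ι ∘ₗ I.tInd i = LinearMap.mulLeft F (J.t i) ∘ₗ J.evaluate ι from
    LinearMap.congr_fun this v
  refine cosetSpace_hom_ext fun k hk u => ?_
  simp only [LinearMap.comp_apply, LinearMap.mulLeft_apply, J.evaluate_cosetVec ι hk, tInd]
  obtain h | rfl | rfl | h : k < i ∨ k = i ∨ k = i + 1 ∨ i + 1 < k := by omega
  · obtain ⟨i, rfl⟩ := Nat.exists_eq_add_one_of_ne_zero (Nat.ne_zero_of_lt h)
    rw [tOp_succ_cosetVec hk (Nat.le_of_lt_succ h), J.evaluate_cosetVec ι hk, R.base_τ hi,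
      ← mul_assoc, ← mul_assoc, ht.commute_descProd h (by omega)]
  · rw [tOp_cosetVec_self hk, J.evaluate_cosetVec ι hi, descProd, mul_assoc]
  · rw [tOp_cosetVec_succ hk, map_add, map_smul, J.evaluate_cosetVec ι hk,
      J.evaluate_cosetVec ι hi.le, descProd, ← mul_assoc, ← mul_assoc, ht.t_mul_t i (by omega)]
    simp only [add_mul, smul_mul_assoc, one_mul, add_comm]
  · rw [tOp_cosetVec_of_lt hk h, J.evaluate_cosetVec ι hk, R.base_τ (by omega), ← mul_assoc,
      ← mul_assoc, ht.semiconjBy_descProd h (by omega)]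

-- As `T_k ⋯ T_1 = (T_k ⋯ T_2) T_1`, only the first two copies need to be checked.
theorem evaluate_apply_of_commute {P : Module.End F (CosetSpace n (K ⊗[F] A))} {x : E}
    (hP : ∀ i, 0 < i → i < n → Commute (I.tInd i) P)
    (hx : ∀ i, 0 < i → i + 1 < n + 1 → J.t i * x = x * J.t i)
    (zero : ∀ u, J.evaluate ι (P (cosetVec F 0 u)) = x * J.evaluate ι (cosetVec F 0 u))
    (one : ∀ u, J.evaluate ι (P (cosetVec F 1 u)) = x * J.evaluate ι (cosetVec F 1 u))
    (v : CosetSpace n (K ⊗[F] A)) : J.evaluate ι (P v) = x * J.evaluate ι v := by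
  suffices J.evaluate ι ∘ₗ P = LinearMap.mulLeft F x ∘ₗ J.evaluate ι from
    LinearMap.congr_fun this v
  refine cosetSpace_hom_ext fun k hk u => ?_
  simp only [LinearMap.comp_apply, LinearMap.mulLeft_apply]
  induction k with
  | zero => exact zero u
  | succ k ih =>
    rcases Nat.eq_zero_or_pos k with rfl | hk₀
    · exact one u
    · have cosetVec_succ : cosetVec F (k + 1) u = I.tInd k (cosetVec F k u) :=
        (tOp_cosetVec_self (by omega) u).symm
      rw [cosetVec_succ, ← end_apply_comm (hP k hk₀ hk), R.evaluate_tInd hk, ih (by omega),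
        R.evaluate_tInd hk, ← mul_assoc, ← mul_assoc, hx k hk₀ (by omega)]

theorem t_mul_base_cTwist_γ (hn : 0 < n) (u : K ⊗[F] A) :
    (J.t 0 - ξ • 1) * J.base ι (I.cTwist.γ u) = J.c * ((J.t 0 - ξ • 1) * J.base ι u) := by
  suffices LinearMap.mulLeft F (J.t 0 - ξ • 1) ∘ₗ J.base ι ∘ₗ I.cTwist.γ =
      LinearMap.mulLeft F J.c ∘ₗ LinearMap.mulLeft F (J.t 0 - ξ • 1) ∘ₗ J.base ι from
    LinearMap.congr_fun this u
  refine TensorProduct.ext' fun p a => ?_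
  obtain ⟨u, hu, comm⟩ := J.exists_ascProd_eq_mul hn
  have relation := J.c_mul_t_mul_κ_mul_t (Nat.succ_lt_succ hn) p
  simp only [LinearMap.comp_apply, LinearMap.mulLeft_apply, cTwist, twist, oddMul_tmul, base_tmul,
    map_mul, R.map_c, R.σ_eq, hu]
  simp only [← mul_assoc, relation]
  simp only [mul_assoc, (comm J.c J.system.t_mul_c).left_comm]

theorem t_mul_base_eTwist_γ (hn : 0 < n) (u : K ⊗[F] A) :
    J.t 0 * J.base ι (I.eTwist.γ u) - ξ • J.base ι (I.absorb (I.eTwist.γ u)) =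
      J.e * (J.t 0 * J.base ι u - ξ • J.base ι (I.absorb u)) := by
  let D := LinearMap.mulLeft F (J.t 0) ∘ₗ J.base ι - ξ • J.base ι ∘ₗ I.absorb
  suffices D ∘ₗ I.eTwist.γ = LinearMap.mulLeft F J.e ∘ₗ D from LinearMap.congr_fun this u
  refine TensorProduct.ext' fun p a => ?_
  obtain ⟨u, hu, comm⟩ := J.exists_ascProd_eq_mul hn
  have comm_κ (p : K) : Commute (J.κ p) u := comm _ fun i hi₀ hi => J.t_commute_κ hi₀ hi p
  have D_tmul (p : K) (a : A) :
      D (p ⊗ₜ a) = J.t 0 * J.κ p * (J.t 0 - ξ • 1) * (u * ι a) := by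
    simp only [D, LinearMap.sub_apply, LinearMap.smul_apply, LinearMap.comp_apply,
      LinearMap.mulLeft_apply, absorb_tmul, base_tmul, map_one, one_mul, map_mul, R.map_κ, hu]
    simp only [mul_assoc, sub_mul, mul_sub, smul_mul_assoc, mul_smul_comm, one_mul,
      (comm_κ p).left_comm]
  have relation := J.e_mul_t_mul_κ_mul_t (Nat.succ_lt_succ hn) p
  simp only [LinearMap.comp_apply, LinearMap.mulLeft_apply, eTwist, twist, oddMul_tmul, D_tmul,
    map_mul, R.map_e, R.σ_eq, ← mul_assoc, relation]
  simp only [mul_assoc, (comm J.e J.system.t_mul_e).left_comm]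

theorem evaluate_cInd (v : CosetSpace n (K ⊗[F] A)) :
    J.evaluate ι (I.cInd v) = J.c * J.evaluate ι v := by
  have base_χ (u : K ⊗[F] A) : J.base ι (I.cTwist.χ u) = J.c * J.base ι u := by
    rw [cTwist, I.base_twist_χ J ι, R.cK_eq, J.κ_cK]
  refine R.evaluate_apply_of_commute (fun i => I.tInd_commute_cInd) J.system.t_mul_c
    (fun u => ?_) (fun u => ?_) v
  · simp only [cInd, twistedOp_cosetVec_zero, J.evaluate_cosetVec ι (Nat.zero_le n), descProd,
      one_mul, base_χ]
  · have relation := R.t_mul_base_cTwist_γ I.n_pos u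
    have ρ_apply : I.cTwist.ρ u = I.cTwist.χ u - I.cTwist.γ u := by simp [Twist.ρ, cTwist, twist]
    simp only [sub_mul, mul_sub, smul_mul_assoc, mul_smul_comm, one_mul] at relation
    simp only [cInd, twistedOp_cosetVec_succ I.cTwist I.n_pos (k := 0),
      J.evaluate_cosetVec ι I.n_pos, J.evaluate_cosetVec ι (Nat.zero_le n), descProd, one_mul,
      mul_one, map_add, map_sub, map_smul, Module.End.one_apply, ρ_apply, base_χ]
    linear_combination (norm := module) relation

theorem evaluate_eInd (v : CosetSpace n (K ⊗[F] A)) :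
    J.evaluate ι (I.eInd v) = J.e * J.evaluate ι v := by
  have base_χ (u : K ⊗[F] A) : J.base ι (I.eTwist.χ u) = J.e * J.base ι u := by
    rw [eTwist, I.base_twist_χ J ι, R.eK_eq, J.κ_eK]
  refine R.evaluate_apply_of_commute (fun i => I.tInd_commute_eInd) J.system.t_mul_e
    (fun u => ?_) (fun u => ?_) v
  · simp only [eInd, twistedOp_cosetVec_zero, J.evaluate_cosetVec ι (Nat.zero_le n), descProd,
      one_mul, base_χ]
  · have relation := R.t_mul_base_eTwist_γ I.n_pos u
    have ρ_apply : I.eTwist.ρ u = I.eTwist.χ (I.absorb u) - I.absorb (I.eTwist.γ u) := rfl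
    simp only [mul_sub, mul_smul_comm] at relation
    simp only [eInd, twistedOp_cosetVec_succ I.eTwist I.n_pos (k := 0),
      J.evaluate_cosetVec ι I.n_pos, J.evaluate_cosetVec ι (Nat.zero_le n), descProd, one_mul,
      mul_one, map_add, map_sub, map_smul, Module.End.one_apply, ρ_apply, base_χ]
    linear_combination (norm := module) relation

end IsRestriction

end InductionDatum

end RegularRepresentation

section InductionTower

open scoped TensorProduct

variable {F} {q : F} {d : ℕ} {aa : ℕ → F}

variable (q d aa) in
/-- The grading automorphism of `H_{m+1}^f`, which fixes the `X_i` and `T_i` and negates the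
`C_i`. -/
noncomputable def grading (m : ℕ) : CycAlg F q d aa (m + 1) →ₐ[F] CycAlg F q d aa (m + 1) :=
  (heckeCliffordSystem_cycAlg q d aa m).neg.lift

theorem grading_tGen {m i : ℕ} (hi : i < m) :
    grading q d aa m (tGen i) = tGen i :=
  HeckeCliffordSystem.lift_tGen _ (by omega)

theorem grading_cGen (m : ℕ) : grading q d aa m cGen = -cGen := HeckeCliffordSystem.lift_cGen _

theorem grading_eGen (m : ℕ) : grading q d aa m eGen = -eGen := HeckeCliffordSystem.lift_eGen _

variable (q d aa) in
/-- The induction datum from rank `m + 1` to rank `m + 2`. -/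
noncomputable def cycDatum (m : ℕ) : InductionDatum (q - q⁻¹) d aa (m + 1) (CycAlg F q d aa 1)
    (CycAlg F q d aa (m + 1)) where
  cK := cGen
  eK := eGen
  tK := tGen
  t := tGen
  c := cGen
  e := eGen
  σ := grading q d aa 0
  κ := ((heckeCliffordSystem_cycAlg q d aa m).of_le (by omega)).lift
  generates := generates_cycAlg q d aa 0
  systemK := heckeCliffordSystem_cycAlg q d aa 0
  system := heckeCliffordSystem_cycAlg q d aa m
  σ_cK := grading_cGen 0
  σ_eK := grading_eGen 0
  κ_cK := HeckeCliffordSystem.lift_cGen _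
  κ_eK := HeckeCliffordSystem.lift_eGen _
  n_pos := m.succ_pos

variable (q d aa) in
/-- The canonical map from `H_{m+1}^f` to `H_{m+2}^f`. -/
noncomputable def cycIncl (m : ℕ) : CycAlg F q d aa (m + 1) →ₐ[F] CycAlg F q d aa (m + 2) :=
  ((heckeCliffordSystem_cycAlg q d aa (m + 1)).of_le (by omega)).lift

theorem isRestriction_cycDatum (m : ℕ) :
    (cycDatum q d aa m).IsRestriction (cycDatum q d aa (m + 1)) (cycIncl q d aa m) where
  map_t _ hi := HeckeCliffordSystem.lift_tGen _ hi
  map_c := HeckeCliffordSystem.lift_cGen _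
  map_e := HeckeCliffordSystem.lift_eGen _
  map_κ := DFunLike.congr_fun <| (generates_cycAlg q d aa 0).hom_ext
    (φ := (cycIncl q d aa m).comp (cycDatum q d aa m).κ)
    ((congrArg _ (cycDatum q d aa m).κ_cK).trans (HeckeCliffordSystem.lift_cGen _ |>.trans
      (cycDatum q d aa (m + 1)).κ_cK.symm))
    ((congrArg _ (cycDatum q d aa m).κ_eK).trans (HeckeCliffordSystem.lift_eGen _ |>.trans
      (cycDatum q d aa (m + 1)).κ_eK.symm))
    fun i hi => absurd hi (by omega)
  cK_eq := rfl
  eK_eq := rfl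
  σ_eq := rfl

variable (q d aa) in
/-- The regular representation of `H_{m+2}^f`, realised on the space induced from
`H_{m+1}^f`. -/
noncomputable def regularRep (m : ℕ) : CycAlg F q d aa (m + 2) →ₐ[F]
    Module.End F (CosetSpace (m + 1) (CycAlg F q d aa 1 ⊗[F] CycAlg F q d aa (m + 1))) :=
  (cycDatum q d aa m).inducedSystem.lift

theorem regularRep_tGen {m i : ℕ} (hi : i < m + 1) :
    regularRep q d aa m (tGen i) = (cycDatum q d aa m).tInd i :=
  HeckeCliffordSystem.lift_tGen _ (by omega)

theorem regularRep_cGen (m : ℕ) : regularRep q d aa m cGen = (cycDatum q d aa m).cInd :=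
  HeckeCliffordSystem.lift_cGen _

theorem regularRep_eGen (m : ℕ) : regularRep q d aa m eGen = (cycDatum q d aa m).eInd :=
  HeckeCliffordSystem.lift_eGen _

theorem evaluate_regularRep (m : ℕ) (h : CycAlg F q d aa (m + 2))
    (v : CosetSpace (m + 1) (CycAlg F q d aa 1 ⊗[F] CycAlg F q d aa (m + 1))) :
    (cycDatum q d aa (m + 1)).evaluate (cycIncl q d aa m) (regularRep q d aa m h v) =
      h * (cycDatum q d aa (m + 1)).evaluate (cycIncl q d aa m) v := by
  have R := isRestriction_cycDatum (q := q) (d := d) (aa := aa) m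
  let W : Submodule F (CycAlg F q d aa (m + 2)) :=
    { carrier := {h | ∀ v, (cycDatum q d aa (m + 1)).evaluate (cycIncl q d aa m)
        (regularRep q d aa m h v) =
          h * (cycDatum q d aa (m + 1)).evaluate (cycIncl q d aa m) v}
      add_mem' := fun hx hy v => by simp [hx v, hy v, add_mul]
      zero_mem' := fun v => by simp
      smul_mem' := fun r x hx v => by simp [hx v] }
  have W_eq_top : W = ⊤ := by
    refine (generates_cycAlg q d aa (m + 1)).submodule_eq_top W (fun v => by simp)
      (fun w hw v => ?_) (fun w hw v => ?_) (fun i hi w hw v => ?_) <;>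
      rw [map_mul, Module.End.mul_apply, mul_assoc, ← hw v]
    · rw [regularRep_cGen]
      exact R.evaluate_cInd _
    · rw [regularRep_eGen]
      exact R.evaluate_eInd _
    · rw [regularRep_tGen (by omega)]
      exact R.evaluate_tInd (by omega) _
  exact W_eq_top.ge (Submodule.mem_top (x := h)) v

theorem eq_zero_of_regularRep_apply_eq_zero {m : ℕ} {h : CycAlg F q d aa (m + 2)}
    (h₀ : regularRep q d aa m h (cosetVec F 0 (1 ⊗ₜ 1)) = 0) : h = 0 := by
  let J := cycDatum q d aa (m + 1)
  have isUnit_ascProd_t : IsUnit (ascProd J.t (m + 1)) :=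
    isUnit_ascProd fun i hi => J.system.isHeckeFamily.isUnit (by omega)
  have evaluate_eq := evaluate_regularRep m h (cosetVec F 0 (1 ⊗ₜ 1))
  rw [h₀, map_zero, J.evaluate_cosetVec _ (Nat.zero_le _), J.base_tmul, map_one, map_one, mul_one,
    one_mul, descProd, one_mul] at evaluate_eq
  exact isUnit_ascProd_t.mul_left_eq_zero.mp evaluate_eq.symm

end InductionTower

section Coordinates

variable {F} {U : Type*} [AddCommGroup U] [Module F U] {ξ : F} {n : ℕ} {τ : ℕ → Module.End F U}

variable (F) in
/-- The `k`-th coordinate on the induced space, which is `0` for `k > n`. -/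
def cosetCoord (k : ℕ) : CosetSpace n U →ₗ[F] U :=
  if h : k < n + 1 then LinearMap.proj ⟨k, h⟩ else 0

theorem cosetCoord_fin (k : Fin (n + 1)) (y : CosetSpace n U) : cosetCoord F k y = y k := by
  rw [cosetCoord, dif_pos k.2, LinearMap.proj_apply]

theorem cosetCoord_cosetVec_self {k : ℕ} (hk : k ≤ n) (u : U) :
    cosetCoord F k (cosetVec F k u : CosetSpace n U) = u := by
  rw [cosetVec_eq_single (Nat.lt_succ_of_le hk)]
  exact (cosetCoord_fin ⟨k, Nat.lt_succ_of_le hk⟩ _).trans (Pi.single_eq_same ..)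

theorem cosetCoord_cosetVec_of_ne {j k : ℕ} (h : j ≠ k) (u : U) :
    cosetCoord F k (cosetVec F j u : CosetSpace n U) = 0 := by
  unfold cosetCoord cosetVec
  split_ifs with hk hj
  · simp [h.symm]
  all_goals simp

theorem cosetCoord_tOp {k : ℕ} (hk : k + 1 ≤ n) (y : CosetSpace n U) :
    cosetCoord F k (tOp ξ n τ k y) = cosetCoord F (k + 1) y := by
  suffices cosetCoord F k ∘ₗ tOp ξ n τ k = cosetCoord F (k + 1) from LinearMap.congr_fun this y
  refine cosetSpace_hom_ext fun j hj u => ?_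
  rw [LinearMap.comp_apply]
  obtain h | rfl | rfl | h : j < k ∨ j = k ∨ j = k + 1 ∨ k + 1 < j := by omega
  · obtain ⟨k, rfl⟩ := Nat.exists_eq_add_one_of_ne_zero (Nat.ne_zero_of_lt h)
    rw [tOp_succ_cosetVec hj (Nat.le_of_lt_succ h), cosetCoord_cosetVec_of_ne (by omega),
      cosetCoord_cosetVec_of_ne (by omega)]
  · rw [tOp_cosetVec_self hj, cosetCoord_cosetVec_of_ne (by omega),
      cosetCoord_cosetVec_of_ne (by omega)]
  · rw [tOp_cosetVec_succ hj, map_add, map_smul, cosetCoord_cosetVec_self (by omega),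
      cosetCoord_cosetVec_of_ne (by omega), cosetCoord_cosetVec_self hj, smul_zero, add_zero]
  · rw [tOp_cosetVec_of_lt hj h, cosetCoord_cosetVec_of_ne (by omega),
      cosetCoord_cosetVec_of_ne (by omega)]

theorem cosetCoord_zero_tOp_succ (i : ℕ) (y : CosetSpace n U) :
    cosetCoord F 0 (tOp ξ n τ (i + 1) y) = τ i (cosetCoord F 0 y) := by
  suffices cosetCoord F 0 ∘ₗ tOp ξ n τ (i + 1) = τ i ∘ₗ cosetCoord F 0 from
    LinearMap.congr_fun this y
  refine cosetSpace_hom_ext fun j hj u => ?_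
  rw [LinearMap.comp_apply, LinearMap.comp_apply]
  rcases Nat.eq_zero_or_pos j with rfl | hj₀
  · rw [tOp_succ_cosetVec hj (Nat.zero_le i), cosetCoord_cosetVec_self hj,
      cosetCoord_cosetVec_self hj]
  rw [cosetCoord_cosetVec_of_ne hj₀.ne', map_zero]
  obtain h | rfl | rfl | h : j ≤ i ∨ j = i + 1 ∨ j = i + 1 + 1 ∨ i + 1 + 1 < j := by omega
  · rw [tOp_succ_cosetVec hj h, cosetCoord_cosetVec_of_ne hj₀.ne']
  · rw [tOp_cosetVec_self hj, cosetCoord_cosetVec_of_ne (by omega)]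
  · rw [tOp_cosetVec_succ hj, map_add, map_smul, cosetCoord_cosetVec_of_ne (by omega),
      cosetCoord_cosetVec_of_ne (by omega), smul_zero, add_zero]
  · rw [tOp_cosetVec_of_lt hj h, cosetCoord_cosetVec_of_ne (by omega)]

theorem cosetCoord_succ_twistedOp (W : Twist F U) (k : ℕ) (y : CosetSpace n U) :
    cosetCoord F (k + 1) (twistedOp ξ n τ W y) = W.γ (cosetCoord F (k + 1) y) := by
  suffices cosetCoord F (k + 1) ∘ₗ twistedOp ξ n τ W = W.γ ∘ₗ cosetCoord F (k + 1) from
    LinearMap.congr_fun this y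
  refine cosetSpace_hom_ext fun j hj u => ?_
  rw [LinearMap.comp_apply, LinearMap.comp_apply]
  rcases j with _ | j
  · rw [twistedOp_cosetVec_zero, cosetCoord_cosetVec_of_ne (by omega),
      cosetCoord_cosetVec_of_ne (by omega), map_zero]
  rw [twistedOp_cosetVec_succ W hj, map_add, map_smul,
    cosetCoord_cosetVec_of_ne (show 0 ≠ k + 1 by omega), smul_zero, add_zero]
  by_cases h : j = k
  · rw [h] at hj ⊢
    rw [cosetCoord_cosetVec_self hj, cosetCoord_cosetVec_self hj]
  · rw [cosetCoord_cosetVec_of_ne (by omega), cosetCoord_cosetVec_of_ne (by omega), map_zero]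

theorem cosetCoord_zero_twistedOp (W : Twist F U) (y : CosetSpace n U) :
    cosetCoord F 0 (twistedOp ξ n τ W y) = W.χ (cosetCoord F 0 y) +
      ξ • ∑ k ∈ Finset.range n, descProd τ k (W.ρ (cosetCoord F (k + 1) y)) := by
  suffices cosetCoord F 0 ∘ₗ twistedOp ξ n τ W = W.χ ∘ₗ cosetCoord F 0 +
      ξ • ∑ k ∈ Finset.range n, descProd τ k ∘ₗ W.ρ ∘ₗ cosetCoord F (k + 1) by
    simpa using LinearMap.congr_fun this y
  refine cosetSpace_hom_ext fun j hj u => ?_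
  simp only [LinearMap.comp_apply, LinearMap.add_apply, LinearMap.smul_apply, LinearMap.sum_apply]
  rcases j with _ | j
  · rw [twistedOp_cosetVec_zero, cosetCoord_cosetVec_self hj, cosetCoord_cosetVec_self hj,
      Finset.sum_eq_zero, smul_zero, add_zero]
    intro k _
    rw [cosetCoord_cosetVec_of_ne (by omega), map_zero, map_zero]
  · rw [twistedOp_cosetVec_succ W hj, map_add, map_smul, cosetCoord_cosetVec_of_ne (by omega),
      cosetCoord_cosetVec_self (Nat.zero_le n), cosetCoord_cosetVec_of_ne (by omega), map_zero,
      Finset.sum_eq_single j, cosetCoord_cosetVec_self hj]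
    · intro k _ hk
      rw [cosetCoord_cosetVec_of_ne (by omega), map_zero, map_zero]
    · exact fun h => absurd (Finset.mem_range.2 (by omega)) h

theorem descProd_tOp_cosetVec_zero {j : ℕ} (hj : j ≤ n) (u : U) :
    descProd (tOp ξ n τ) j (cosetVec F 0 u) = cosetVec F j u := by
  induction j with
  | zero => rfl
  | succ j ih => rw [descProd, Module.End.mul_apply, ih (by omega), tOp_cosetVec_self (by omega)]

theorem descProd_tOp_cosetVec_succ {j k : ℕ} (hjk : j ≤ k) (hk : k + 1 ≤ n) (u : U) :
    descProd (tOp ξ n τ) j (cosetVec F (k + 1) u) = cosetVec F (k + 1) (descProd τ j u) := by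
  induction j with
  | zero => rfl
  | succ j ih =>
    rw [descProd, Module.End.mul_apply, ih (by omega), tOp_cosetVec_of_lt hk (by omega), descProd,
      Module.End.mul_apply]

theorem exists_descProd_tOp_cosetVec_succ {j k : ℕ} (hkj : k + 1 ≤ j) (hj : j ≤ n) (u : U) :
    ∃ v, descProd (tOp ξ n τ) j (cosetVec F (k + 1) u) =
      cosetVec F k v + ξ • cosetVec F j (descProd τ k u) := by
  induction j, hkj using Nat.le_induction with
  | base =>
    exact ⟨descProd τ k u, by rw [descProd, Module.End.mul_apply,
      descProd_tOp_cosetVec_succ le_rfl hj, tOp_cosetVec_succ hj]⟩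
  | succ j hkj ih =>
    obtain ⟨v, hv⟩ := ih (by omega)
    obtain ⟨j, rfl⟩ := Nat.exists_eq_add_one_of_ne_zero (Nat.ne_zero_of_lt hkj)
    exact ⟨τ j v, by rw [descProd, Module.End.mul_apply, hv, map_add, map_smul,
      tOp_succ_cosetVec (by omega) (by omega), tOp_cosetVec_self (by omega)]⟩

theorem cosetCoord_descProd_tOp (y : CosetSpace n U) :
    cosetCoord F n (descProd (tOp ξ n τ) n y) = cosetCoord F 0 y +
      ξ • ∑ k ∈ Finset.range n, descProd τ k (cosetCoord F (k + 1) y) := by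
  suffices cosetCoord F n ∘ₗ descProd (tOp ξ n τ) n = cosetCoord F 0 +
      ξ • ∑ k ∈ Finset.range n, descProd τ k ∘ₗ cosetCoord F (k + 1) by
    simpa using LinearMap.congr_fun this y
  refine cosetSpace_hom_ext fun j hj u => ?_
  simp only [LinearMap.comp_apply, LinearMap.add_apply, LinearMap.smul_apply, LinearMap.sum_apply]
  rcases j with _ | j
  · rw [descProd_tOp_cosetVec_zero le_rfl, cosetCoord_cosetVec_self le_rfl,
      cosetCoord_cosetVec_self hj, Finset.sum_eq_zero, smul_zero, add_zero]
    intro k _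
    rw [cosetCoord_cosetVec_of_ne (by omega), map_zero]
  · obtain ⟨v, hv⟩ := exists_descProd_tOp_cosetVec_succ (ξ := ξ) (τ := τ) hj le_rfl u
    rw [hv, map_add, map_smul, cosetCoord_cosetVec_of_ne (by omega),
      cosetCoord_cosetVec_self le_rfl, cosetCoord_cosetVec_of_ne (by omega),
      Finset.sum_eq_single j, cosetCoord_cosetVec_self hj]
    · intro k _ hk
      rw [cosetCoord_cosetVec_of_ne (by omega), map_zero]
    · exact fun h => absurd (Finset.mem_range.2 (by omega)) h

/-- This reflects the relation `C_{n+1} = (T_n ⋯ T_1) C_1 (T_n ⋯ T_1)⁻¹`. -/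
theorem Twist.IsInvolutive.cosetCoord_descProd_tOp_twistedOp {W : Twist F U}
    (hW : W.IsInvolutive n τ) (hπ : W.π = 1) (y : CosetSpace n U) :
    cosetCoord F n (descProd (tOp ξ n τ) n (twistedOp ξ n τ W y)) =
      W.χ (cosetCoord F n (descProd (tOp ξ n τ) n y)) := by
  have ρ_add_γ (u : U) : W.ρ u + W.γ u = W.χ u := by simp [Twist.ρ, hπ]
  simp only [cosetCoord_descProd_tOp, cosetCoord_zero_twistedOp, cosetCoord_succ_twistedOp,
    add_assoc, ← smul_add, ← Finset.sum_add_distrib, ← map_add, ρ_add_γ]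
  rw [map_add, map_smul, map_sum]
  refine congrArg _ (congrArg _ (Finset.sum_congr rfl fun k hk => ?_))
  exact end_apply_comm (hW.commute_descProd (Finset.mem_range.1 hk)) _

end Coordinates

/-! ### Nondegeneracy -/

section Contraction

open scoped TensorProduct

variable {F} {K A : Type*} [Ring K] [Algebra F K] [Ring A] [Algebra F A]

variable (A) in
/-- The contraction `p ⊗ a ↦ θ(p) a` of the first tensor factor by a functional `θ`. -/
noncomputable def contract : Module.Dual F K →ₗ[F] K ⊗[F] A →ₗ[F] A :=
  LinearMap.compRight F (TensorProduct.lid F A).toLinearMap ∘ₗ LinearMap.rTensorHom A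

theorem contract_tmul (θ : Module.Dual F K) (p : K) (a : A) :
    contract A θ (p ⊗ₜ a) = θ p • a := rfl

theorem contract_comp_mulLeft (θ : Module.Dual F K) (k : K) (u : K ⊗[F] A) :
    contract A (θ ∘ₗ LinearMap.mulLeft F k) u =
      contract A θ ((LinearMap.mulLeft F k).rTensor A u) := by
  suffices contract A (θ ∘ₗ LinearMap.mulLeft F k) =
      contract A θ ∘ₗ (LinearMap.mulLeft F k).rTensor A from LinearMap.congr_fun this u
  exact TensorProduct.ext' fun p a => rfl

theorem contract_evenMul (θ : Module.Dual F K) (x : A) (u : K ⊗[F] A) :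
    contract A θ (evenMul F K x u) = x * contract A θ u := by
  suffices contract A θ ∘ₗ evenMul F K x = LinearMap.mulLeft F x ∘ₗ contract A θ from
    LinearMap.congr_fun this u
  exact TensorProduct.ext' fun p a => by simp [evenMul_tmul, contract_tmul]

theorem eq_zero_of_contract {φ : Module.Dual F K} (hφ : ∀ p, (∀ k, φ (k * p) = 0) → p = 0)
    {u : K ⊗[F] A} (hu : ∀ k, contract A (φ ∘ₗ LinearMap.mulLeft F k) u = 0) : u = 0 := by
  classical
  let b := Module.Basis.ofVectorSpace F A
  let coeff := TensorProduct.equivFinsuppOfBasisRight (M := K) b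
  have repr_contract (θ : Module.Dual F K) (v : K ⊗[F] A) (i) :
      b.repr (contract A θ v) i = θ (coeff v i) := by
    induction v using TensorProduct.induction_on with
    | zero => simp
    | tmul p a => simp [contract_tmul, coeff, mul_comm]
    | add v w hv hw => simp [hv, hw]
  refine coeff.map_eq_zero_iff.1 (Finsupp.ext fun i => hφ _ fun k => ?_)
  simpa [hu k] using (repr_contract (φ ∘ₗ LinearMap.mulLeft F k) u i).symm

end Contraction

section Nondegeneracy

open scoped TensorProduct

variable {F} {ξ : F} {d : ℕ} {aa : ℕ → F} {n : ℕ} {K A : Type*} [Ring K] [Algebra F K] [Ring A]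
  [Algebra F A]

namespace InductionDatum

section

variable (I : InductionDatum ξ d aa n K A)

theorem contract_oddMul (θ : Module.Dual F K) (x : A) (u : K ⊗[F] A) :
    contract A θ (I.oddMul x u) = x * contract A (θ ∘ₗ I.σ.toLinearMap) u := by
  suffices contract A θ ∘ₗ I.oddMul x =
      LinearMap.mulLeft F x ∘ₗ contract A (θ ∘ₗ I.σ.toLinearMap) from LinearMap.congr_fun this u
  exact TensorProduct.ext' fun p a => by simp [oddMul_tmul, contract_tmul]

theorem contract_descProd_τ (θ : Module.Dual F K) (j : ℕ) (u : K ⊗[F] A) :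
    contract A θ (descProd I.τ j u) = descProd I.t j * contract A θ u := by
  induction j with
  | zero => rw [descProd, descProd, Module.End.one_apply, one_mul]
  | succ j ih =>
    rw [descProd, descProd, Module.End.mul_apply, τ, contract_evenMul, ih, mul_assoc]

theorem contract_eTwist_ρ {θ : Module.Dual F K} (hone : θ 1 = 0) (he : θ I.eK = 0)
    (u : K ⊗[F] A) : contract A θ (I.eTwist.ρ u) = 0 := by
  suffices contract A θ ∘ₗ I.eTwist.ρ = 0 from LinearMap.congr_fun this u
  exact TensorProduct.ext' fun p a => by
    simp [Twist.ρ, eTwist, twist, absorb_tmul, oddMul_tmul, contract_tmul, hone, he]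

/-- Invariance of a subspace of the induced space under the induced system. -/
structure IsInvariant (U : Submodule F (CosetSpace n (K ⊗[F] A))) : Prop where
  tInd_mem : ∀ i < n, ∀ y ∈ U, I.tInd i y ∈ U
  cInd_mem : ∀ y ∈ U, I.cInd y ∈ U
  eInd_mem : ∀ y ∈ U, I.eInd y ∈ U

end

/-- The functionals on `K` that annihilate the `k`-th coordinates of all elements of `U`. -/
noncomputable def coordAnnihilator (k : ℕ) (U : Submodule F (CosetSpace n (K ⊗[F] A))) :
    Submodule F (Module.Dual F K) :=
  ⨅ y ∈ U, LinearMap.ker ((contract A).flip (cosetCoord F k y))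

theorem mem_coordAnnihilator {k : ℕ} {U : Submodule F (CosetSpace n (K ⊗[F] A))}
    {θ : Module.Dual F K} :
    θ ∈ coordAnnihilator k U ↔ ∀ y ∈ U, contract A θ (cosetCoord F k y) = 0 := by
  simp [coordAnnihilator, Submodule.mem_iInf]

namespace IsInvariant

variable {I : InductionDatum ξ d aa n K A} {U : Submodule F (CosetSpace n (K ⊗[F] A))}
  (hU : I.IsInvariant U)
include hU

theorem exists_tInd_apply_eq {i : ℕ} (hi : i < n) {y : CosetSpace n (K ⊗[F] A)} (hy : y ∈ U) :
    ∃ z ∈ U, I.tInd i z = y :=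
  ⟨(I.tInd i - ξ • 1) y, U.sub_mem (hU.tInd_mem i hi y hy) (U.smul_mem _ hy),
    LinearMap.congr_fun (unitOfQuadratic ξ (I.tInd i)
      (I.isHeckeFamily_tInd.t_mul_t i (Nat.succ_lt_succ hi))).mul_inv y⟩

theorem exists_descProd_tInd_apply_eq {j : ℕ} (hj : j ≤ n) {y : CosetSpace n (K ⊗[F] A)}
    (hy : y ∈ U) : ∃ z ∈ U, descProd I.tInd j z = y := by
  induction j generalizing y with
  | zero => exact ⟨y, hy, rfl⟩
  | succ j ih =>
    obtain ⟨x, hx, rfl⟩ := hU.exists_tInd_apply_eq hj hy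
    obtain ⟨z, hz, rfl⟩ := ih (by omega) hx
    exact ⟨z, hz, rfl⟩

theorem descProd_tInd_mem {j : ℕ} (hj : j ≤ n) {y : CosetSpace n (K ⊗[F] A)} (hy : y ∈ U) :
    descProd I.tInd j y ∈ U := by
  induction j with
  | zero => exact hy
  | succ j ih => exact hU.tInd_mem j hj _ (ih (by omega))

theorem coordAnnihilator_eq {k : ℕ} (hk : k ≤ n) : coordAnnihilator k U = coordAnnihilator 0 U := by
  induction k with
  | zero => rfl
  | succ k ih =>
    rw [← ih (by omega)]
    ext θ
    rw [mem_coordAnnihilator, mem_coordAnnihilator]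
    refine ⟨fun h y hy => ?_, fun h y hy => ?_⟩
    · obtain ⟨z, hz, rfl⟩ := hU.exists_tInd_apply_eq hk hy
      rw [tInd, cosetCoord_tOp hk]
      exact h z hz
    · rw [← cosetCoord_tOp hk]
      exact h _ (hU.tInd_mem k hk y hy)

theorem comp_mulLeft_cK_mem {θ : Module.Dual F K} (hθ : θ ∈ coordAnnihilator 0 U) :
    θ ∘ₗ LinearMap.mulLeft F I.cK ∈ coordAnnihilator 0 U := by
  rw [← hU.coordAnnihilator_eq le_rfl, mem_coordAnnihilator] at hθ ⊢
  intro y hy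
  obtain ⟨z, hz, rfl⟩ := hU.exists_descProd_tInd_apply_eq le_rfl hy
  have c_apply : cosetCoord F n (descProd I.tInd n (I.cInd z)) =
      (LinearMap.mulLeft F I.cK).rTensor A (cosetCoord F n (descProd I.tInd n z)) :=
    I.isInvolutive_cTwist.cosetCoord_descProd_tOp_twistedOp rfl z
  rw [contract_comp_mulLeft, ← c_apply]
  exact hθ _ (hU.descProd_tInd_mem le_rfl (hU.cInd_mem z hz))

theorem comp_mulLeft_eK_mem {θ : Module.Dual F K} (hθ : θ ∈ coordAnnihilator 0 U) (hone : θ 1 = 0)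
    (he : θ I.eK = 0) : θ ∘ₗ LinearMap.mulLeft F I.eK ∈ coordAnnihilator 0 U := by
  rw [mem_coordAnnihilator] at hθ ⊢
  intro y hy
  have eInd_apply := hθ _ (hU.eInd_mem y hy)
  rw [eInd, cosetCoord_zero_twistedOp, map_add, map_smul, map_sum, Finset.sum_eq_zero, smul_zero,
    add_zero] at eInd_apply
  · rw [contract_comp_mulLeft]
    exact eInd_apply
  · intro k _
    rw [I.contract_descProd_τ, I.contract_eTwist_ρ hone he, mul_zero]

theorem residue_mem_coordAnnihilator {res : Module.Dual F K} {lam : Module.Dual F A}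
    (hσ : res ∘ₗ I.σ.toLinearMap = res) (hgen : Generates F n I.t I.c I.e)
    (hlam : ∀ a, (∀ b, lam (b * a) = 0) → a = 0)
    (hU₀ : ∀ y ∈ U, lam (contract A res (cosetCoord F 0 y)) = 0) :
    res ∈ coordAnnihilator 0 U := by
  let V := U.map (contract A res ∘ₗ cosetCoord F 0)
  have odd_mul_mem {W : Twist F (K ⊗[F] A)} {x : A} (hγ : W.γ = I.oddMul x)
      (hW : ∀ y ∈ U, twistedOp ξ n I.τ W y ∈ U) : ∀ w ∈ V, x * w ∈ V := by
    rintro _ ⟨y, hy, rfl⟩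
    obtain ⟨z, hz, rfl⟩ := hU.exists_tInd_apply_eq I.n_pos hy
    refine ⟨_, hU.tInd_mem 0 I.n_pos _ (hW z hz), ?_⟩
    rw [LinearMap.comp_apply, LinearMap.comp_apply, tInd, cosetCoord_tOp I.n_pos,
      cosetCoord_tOp I.n_pos, cosetCoord_succ_twistedOp, hγ, I.contract_oddMul, hσ]
  have t_mul_mem (i : ℕ) (hi : i + 1 < n) : ∀ w ∈ V, I.t i * w ∈ V := by
    rintro _ ⟨y, hy, rfl⟩
    refine ⟨_, hU.tInd_mem (i + 1) hi y hy, ?_⟩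
    rw [LinearMap.comp_apply, LinearMap.comp_apply, tInd, cosetCoord_zero_tOp_succ, τ,
      contract_evenMul]
  have lam_eq_zero : ∀ w ∈ V, lam w = 0 := by
    rintro _ ⟨y, hy, rfl⟩
    exact hU₀ y hy
  refine mem_coordAnnihilator.2 fun y hy => hlam _ fun b => lam_eq_zero _ ?_
  exact hgen.mul_mem (odd_mul_mem (W := I.cTwist) rfl hU.cInd_mem)
    (odd_mul_mem (W := I.eTwist) rfl hU.eInd_mem) t_mul_mem b ⟨y, hy, rfl⟩

theorem comp_mulLeft_mem {res : Module.Dual F K} (hres : IsResidue d I.cK I.eK res)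
    (hspan : Submodule.span F (rankOneMonomials d I.cK I.eK) = ⊤)
    (h : res ∈ coordAnnihilator 0 U) (p : K) :
    res ∘ₗ LinearMap.mulLeft F p ∈ coordAnnihilator 0 U := by
  have pow_mem (m : ℕ) (hm : m < d) :
      res ∘ₗ LinearMap.mulLeft F ((I.cK * I.eK) ^ m) ∈ coordAnnihilator 0 U := by
    induction m with
    | zero => rwa [pow_zero, LinearMap.mulLeft_one, LinearMap.comp_id]
    | succ m ih =>
      rw [pow_succ, LinearMap.mulLeft_mul, LinearMap.mulLeft_mul, ← LinearMap.comp_assoc,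
        ← LinearMap.comp_assoc]
      refine hU.comp_mulLeft_eK_mem (hU.comp_mulLeft_cK_mem (ih (by omega))) ?_ ?_
      · simpa using hres.pow_mul m (by omega)
      · simpa [pow_succ, mul_assoc] using hres.pow (m + 1) m.succ_pos hm
  let multiples := (coordAnnihilator 0 U).comap ((LinearMap.mul F K).compr₂ res)
  have multiples_eq_top : multiples = ⊤ := by
    rw [eq_top_iff, ← hspan, Submodule.span_le]
    rintro _ ⟨m, hm, rfl | rfl⟩
    · exact pow_mem m hm
    · change res ∘ₗ LinearMap.mulLeft F ((I.cK * I.eK) ^ m * I.cK) ∈ coordAnnihilator 0 U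
      rw [LinearMap.mulLeft_mul, ← LinearMap.comp_assoc]
      exact hU.comp_mulLeft_cK_mem (pow_mem m hm)
  exact multiples_eq_top.ge (Submodule.mem_top (x := p))

-- The functionals `res (p · -)` separate `K ⊗ A`, so only the coordinate `0` matters: the
-- `T_i` move every coordinate there, `C_1` and `C_1 X_1` multiply `res` by generators of `K`.
theorem eq_zero (hf : GoodPoly F d aa) {res : Module.Dual F K} (hres : IsResidue d I.cK I.eK res)
    (hgen : Generates F n I.t I.c I.e) {lam : Module.Dual F A}
    (hlam : ∀ a, (∀ b, lam (b * a) = 0) → a = 0)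
    (hU₀ : ∀ y ∈ U, lam (contract A res (cosetCoord F 0 y)) = 0)
    {y : CosetSpace n (K ⊗[F] A)} (hy : y ∈ U) : y = 0 := by
  have hspan := I.systemK.span_rankOneMonomials hf I.generates
  have hσ : res ∘ₗ I.σ.toLinearMap = res :=
    LinearMap.ext (hres.apply_neg_hom hspan I.σ_cK I.σ_eK)
  have res_mem := hU.residue_mem_coordAnnihilator hσ hgen hlam hU₀
  funext k
  refine eq_zero_of_contract (fun _ => hres.nondegenerate I.systemK hf I.generates) fun p => ?_
  have mem := hU.comp_mulLeft_mem hres hspan res_mem p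
  rw [← hU.coordAnnihilator_eq (Nat.le_of_lt_succ k.2)] at mem
  rw [← cosetCoord_fin (F := F) k y]
  exact mem_coordAnnihilator.1 mem y hy

end IsInvariant

end InductionDatum

end Nondegeneracy

section Parity

open scoped TensorProduct

variable {F}

section Coordinatewise

variable {U : Type*} [AddCommGroup U] [Module F U] {ξ : F} {n : ℕ} {τ : ℕ → Module.End F U}
  {ε : Module.End F U}

theorem compLeft_cosetVec (ε : Module.End F U) (k : ℕ) (u : U) :
    ε.compLeft (Fin (n + 1)) (cosetVec F k u) = cosetVec F k (ε u) := by
  unfold cosetVec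
  split_ifs with hk
  · exact funext fun j => Pi.apply_single (fun _ => ε) (fun _ => map_zero ε) _ u j
  · exact map_zero _

theorem cosetCoord_compLeft (ε : Module.End F U) (k : ℕ) (y : CosetSpace n U) :
    cosetCoord F k (ε.compLeft (Fin (n + 1)) y) = ε (cosetCoord F k y) := by
  unfold cosetCoord
  split_ifs
  · rfl
  · exact (map_zero ε).symm

theorem commute_compLeft_tOp (hτ : ∀ i, i + 1 < n → Commute ε (τ i)) {i : ℕ} (hi : i < n) :
    Commute (ε.compLeft (Fin (n + 1))) (tOp ξ n τ i) := by
  refine cosetSpace_hom_ext fun k hk u => ?_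
  simp only [Module.End.mul_apply]
  obtain h | rfl | rfl | h : k < i ∨ k = i ∨ k = i + 1 ∨ i + 1 < k := by omega
  · obtain ⟨i, rfl⟩ := Nat.exists_eq_add_one_of_ne_zero (Nat.ne_zero_of_lt h)
    simp only [tOp_succ_cosetVec hk (Nat.le_of_lt_succ h), compLeft_cosetVec,
      end_apply_comm (hτ i hi)]
  · simp only [tOp_cosetVec_self hk, compLeft_cosetVec]
  · simp only [tOp_cosetVec_succ hk, map_add, map_smul, compLeft_cosetVec]
  · simp only [tOp_cosetVec_of_lt hk h, compLeft_cosetVec,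
      end_apply_comm (hτ i (by omega))]

theorem anticommute_compLeft_twistedOp {W : Twist F U} (hτ : ∀ i, i + 1 < n → Commute ε (τ i))
    (hχ : Anticommute ε W.χ) (hγ : Anticommute ε W.γ) (hπ : Commute ε W.π) :
    Anticommute (ε.compLeft (Fin (n + 1))) (twistedOp ξ n τ W) := by
  have comm_descProd {k : ℕ} (hk : k < n) : Commute ε (descProd τ k) := by
    induction k with
    | zero => exact Commute.one_right _
    | succ k ih => exact (hτ k hk).mul_right (ih (by omega))
  have ε_ρ (u : U) : ε (W.ρ u) = -W.ρ (ε u) := by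
    simp only [Twist.ρ, LinearMap.sub_apply, Module.End.mul_apply, map_sub, hχ.apply,
      end_apply_comm hπ, hγ.apply, map_neg]
    abel
  refine cosetSpace_hom_ext fun k hk u => ?_
  simp only [Module.End.mul_apply, LinearMap.neg_apply]
  rcases k with _ | k
  · simp only [twistedOp_cosetVec_zero, compLeft_cosetVec, hχ.apply, map_neg]
  · simp only [twistedOp_cosetVec_succ W hk, compLeft_cosetVec, map_add, map_smul, hγ.apply,
      end_apply_comm (comm_descProd hk), ε_ρ, map_neg]
    module

end Coordinatewise

variable {ξ : F} {d : ℕ} {aa : ℕ → F} {n : ℕ} {K A : Type*} [Ring K] [Algebra F K] [Ring A]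
  [Algebra F A]

theorem contract_map {θ : Module.Dual F K} {σK : K →ₐ[F] K} (hθ : θ ∘ₗ σK.toLinearMap = θ)
    (σA : A →ₐ[F] A) (u : K ⊗[F] A) :
    contract A θ (TensorProduct.map σK.toLinearMap σA.toLinearMap u) =
      σA (contract A θ u) := by
  suffices contract A θ ∘ₗ TensorProduct.map σK.toLinearMap σA.toLinearMap =
      σA.toLinearMap ∘ₗ contract A θ from LinearMap.congr_fun this u
  refine TensorProduct.ext' fun p a => ?_
  have apply_σ : θ (σK p) = θ p := LinearMap.congr_fun hθ p
  simp [contract_tmul, apply_σ]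

namespace InductionDatum

variable (I : InductionDatum ξ d aa n K A)

/-- The parity operator of `K ⊗ A`, for a grading automorphism `σA` of `A`. -/
noncomputable def parity (σA : A →ₐ[F] A) : Module.End F (K ⊗[F] A) :=
  TensorProduct.map I.σ.toLinearMap σA.toLinearMap

theorem parity_tmul (σA : A →ₐ[F] A) (p : K) (a : A) :
    I.parity σA (p ⊗ₜ a) = I.σ p ⊗ₜ σA a := rfl

/-- The parity operator of the induced space, for a grading automorphism `σA` of `A`. -/
noncomputable def parityInd (σA : A →ₐ[F] A) : Module.End F (CosetSpace n (K ⊗[F] A)) :=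
  (I.parity σA).compLeft (Fin (n + 1))

variable {I} {σA : A →ₐ[F] A}

theorem commute_parity_τ {i : ℕ} (h : σA (I.t i) = I.t i) : Commute (I.parity σA) (I.τ i) :=
  TensorProduct.ext' fun p a => by simp [parity_tmul, τ, evenMul_tmul, h]

theorem anticommute_parity_twist_χ {k : K} {x : A} {π : Module.End F (K ⊗[F] A)}
    (h : I.σ k = -k) : Anticommute (I.parity σA) (I.twist k x π).χ :=
  TensorProduct.ext' fun p a => by
    simp [parity_tmul, twist_χ_tmul, h, TensorProduct.neg_tmul]

theorem anticommute_parity_oddMul {x : A} (h : σA x = -x) :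
    Anticommute (I.parity σA) (I.oddMul x) :=
  TensorProduct.ext' fun p a => by
    simp [parity_tmul, oddMul_tmul, h, TensorProduct.tmul_neg]

theorem commute_parity_absorb (h : ∀ p, σA (I.κ p) = I.κ (I.σ p)) :
    Commute (I.parity σA) I.absorb :=
  TensorProduct.ext' fun p a => by simp [parity_tmul, absorb_tmul, h]

theorem commute_parityInd_tInd (ht : ∀ i, i + 1 < n → σA (I.t i) = I.t i) {i : ℕ} (hi : i < n) :
    Commute (I.parityInd σA) (I.tInd i) :=
  commute_compLeft_tOp (fun j hj => commute_parity_τ (ht j hj)) hi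

theorem anticommute_parityInd_cInd (ht : ∀ i, i + 1 < n → σA (I.t i) = I.t i)
    (hc : σA I.c = -I.c) : Anticommute (I.parityInd σA) I.cInd :=
  anticommute_compLeft_twistedOp (fun i hi => commute_parity_τ (ht i hi))
    (anticommute_parity_twist_χ I.σ_cK) (anticommute_parity_oddMul hc) (Commute.one_right _)

theorem anticommute_parityInd_eInd (ht : ∀ i, i + 1 < n → σA (I.t i) = I.t i)
    (he : σA I.e = -I.e) (hκ : ∀ p, σA (I.κ p) = I.κ (I.σ p)) :
    Anticommute (I.parityInd σA) I.eInd :=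
  anticommute_compLeft_twistedOp (fun i hi => commute_parity_τ (ht i hi))
    (anticommute_parity_twist_χ I.σ_eK) (anticommute_parity_oddMul he) (commute_parity_absorb hκ)

end InductionDatum

variable {q : F}

theorem grading_κ (m : ℕ) (p : CycAlg F q d aa 1) :
    grading q d aa m ((cycDatum q d aa m).κ p) =
      (cycDatum q d aa m).κ ((cycDatum q d aa m).σ p) := by
  let I := cycDatum q d aa m
  suffices (grading q d aa m).comp I.κ = I.κ.comp I.σ from DFunLike.congr_fun this p
  refine I.generates.hom_ext ?_ ?_ fun i hi => absurd hi (by omega)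
  · rw [AlgHom.comp_apply, AlgHom.comp_apply, I.σ_cK, map_neg, I.κ_cK]
    exact grading_cGen m
  · rw [AlgHom.comp_apply, AlgHom.comp_apply, I.σ_eK, map_neg, I.κ_eK]
    exact grading_eGen m

theorem semiconjBy_parityInd_regularRep (m : ℕ) (h : CycAlg F q d aa (m + 2)) :
    SemiconjBy ((cycDatum q d aa m).parityInd (grading q d aa m)) (regularRep q d aa m h)
      (regularRep q d aa m (grading q d aa (m + 1) h)) := by
  have ht (i : ℕ) (hi : i + 1 < m + 1) :
      grading q d aa m ((cycDatum q d aa m).t i) = (cycDatum q d aa m).t i :=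
    grading_tGen (by omega)
  refine (generates_cycAlg q d aa (m + 1)).semiconjBy (φ := regularRep q d aa m)
    (ψ := (regularRep q d aa m).comp (grading q d aa (m + 1))) ?_ ?_ (fun i hi => ?_) h
  · rw [AlgHom.comp_apply, grading_cGen, map_neg, regularRep_cGen]
    exact (InductionDatum.anticommute_parityInd_cInd ht (grading_cGen m)).semiconjBy_neg
  · rw [AlgHom.comp_apply, grading_eGen, map_neg, regularRep_eGen]
    exact (InductionDatum.anticommute_parityInd_eInd ht (grading_eGen m)
      (grading_κ m)).semiconjBy_neg
  · rw [AlgHom.comp_apply, grading_tGen (by omega), regularRep_tGen (by omega)]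
    exact InductionDatum.commute_parityInd_tInd ht (by omega)

end Parity

/-! ### Frobenius forms -/

section FrobeniusForm

variable {F}

/-- An even Frobenius form on a superalgebra `A` with grading automorphism `δ`: an even functional
whose kernel contains no nonzero left ideal. -/
structure IsFrobeniusForm {A : Type*} [Ring A] [Algebra F A] (δ : A →ₐ[F] A)
    (lam : Module.Dual F A) : Prop where
  even : ∀ x, lam (δ x) = lam x
  nondegenerate : ∀ x, (∀ h, lam (h * x) = 0) → x = 0

theorem IsFrobeniusForm.exists_dual_equiv {A : Type*} [Ring A] [Algebra F A] [Module.Finite F A]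
    {δ : A →ₐ[F] A} {lam : Module.Dual F A} (hlam : IsFrobeniusForm δ lam)
    (hδ : Function.Involutive δ) :
    ∃ Φ : A ≃ₗ[F] (A →ₗ[F] F), (∀ a x b : A, Φ (a * x) b = Φ x (b * a)) ∧
      ∀ x b : A, Φ (δ x) b = Φ x (δ b) := by
  let φ : A →ₗ[F] (A →ₗ[F] F) := (LinearMap.mul F A).flip.compr₂ lam
  have φ_apply (x b : A) : φ x b = lam (b * x) := rfl
  have injective : Function.Injective φ := (injective_iff_map_eq_zero φ).2 fun x hx =>
    hlam.nondegenerate x fun h => by rw [← φ_apply, hx, LinearMap.zero_apply]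
  refine ⟨LinearEquiv.ofInjectiveOfFinrankEq φ injective Subspace.dual_finrank_eq.symm,
    fun a x b => ?_, fun x b => ?_⟩
  · change φ (a * x) b = φ x (b * a)
    rw [φ_apply, φ_apply, mul_assoc]
  · change φ (δ x) b = φ x (δ b)
    rw [φ_apply, φ_apply, ← hlam.even, map_mul, hδ x]

end FrobeniusForm

section InducedForm

open scoped TensorProduct

variable {F} {q : F} {d : ℕ} {aa : ℕ → F} {m : ℕ} {res : Module.Dual F (CycAlg F q d aa 1)}
  {lam : Module.Dual F (CycAlg F q d aa (m + 1))}

theorem finite_cycAlg_succ (q : F) (hf : GoodPoly F d aa) (m : ℕ) :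
    Module.Finite F (CycAlg F q d aa (m + 1)) := by
  induction m with
  | zero => exact finite_cycAlg_one q hf
  | succ m ih =>
    have := finite_cycAlg_one q hf
    let orbitMap := LinearMap.applyₗ
      (cosetVec F 0 (1 ⊗ₜ 1) :
        CosetSpace (m + 1) (CycAlg F q d aa 1 ⊗[F] CycAlg F q d aa (m + 1))) ∘ₗ
      (regularRep q d aa m).toLinearMap
    exact Module.Finite.of_injective orbitMap
      ((injective_iff_map_eq_zero orbitMap).2 fun _ => eq_zero_of_regularRep_apply_eq_zero)

/-- The functional on the space induced from `H_{m+1}^f` that applies `res ⊗ lam` to the zeroth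
coordinate. -/
noncomputable def cosetForm (res : Module.Dual F (CycAlg F q d aa 1))
    (lam : Module.Dual F (CycAlg F q d aa (m + 1))) :
    Module.Dual F (CosetSpace (m + 1) (CycAlg F q d aa 1 ⊗[F] CycAlg F q d aa (m + 1))) :=
  lam ∘ₗ contract _ res ∘ₗ cosetCoord F 0

/-- The functional on `H_{m+2}^f` induced from a functional on `H_{m+1}^f`. -/
noncomputable def inducedForm (res : Module.Dual F (CycAlg F q d aa 1))
    (lam : Module.Dual F (CycAlg F q d aa (m + 1))) : Module.Dual F (CycAlg F q d aa (m + 2)) :=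
  cosetForm res lam ∘ₗ LinearMap.applyₗ (cosetVec F 0 (1 ⊗ₜ 1)) ∘ₗ (regularRep q d aa m).toLinearMap

theorem inducedForm_apply (h : CycAlg F q d aa (m + 2)) : inducedForm res lam h =
    cosetForm res lam (regularRep q d aa m h (cosetVec F 0 (1 ⊗ₜ 1))) := rfl

theorem cosetForm_parityInd (hres : res ∘ₗ (cycDatum q d aa m).σ.toLinearMap = res)
    (hlam : ∀ x, lam (grading q d aa m x) = lam x)
    (v : CosetSpace (m + 1) (CycAlg F q d aa 1 ⊗[F] CycAlg F q d aa (m + 1))) :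
    cosetForm res lam ((cycDatum q d aa m).parityInd (grading q d aa m) v) =
      cosetForm res lam v := by
  simp only [cosetForm, LinearMap.comp_apply, InductionDatum.parityInd, cosetCoord_compLeft,
    InductionDatum.parity, contract_map hres, hlam]

theorem inducedForm_grading (hres : res ∘ₗ (cycDatum q d aa m).σ.toLinearMap = res)
    (hlam : ∀ x, lam (grading q d aa m x) = lam x) (h : CycAlg F q d aa (m + 2)) :
    inducedForm res lam (grading q d aa (m + 1) h) = inducedForm res lam h := by
  have parityInd_one : (cycDatum q d aa m).parityInd (grading q d aa m) (cosetVec F 0 (1 ⊗ₜ 1)) =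
      cosetVec F 0 (1 ⊗ₜ 1) := by
    rw [InductionDatum.parityInd, compLeft_cosetVec, InductionDatum.parity_tmul, map_one, map_one]
  have parityInd_orbit := LinearMap.congr_fun (semiconjBy_parityInd_regularRep m h).eq
    (cosetVec F 0 (1 ⊗ₜ 1))
  rw [Module.End.mul_apply, Module.End.mul_apply, parityInd_one] at parityInd_orbit
  rw [inducedForm_apply, inducedForm_apply, ← parityInd_orbit, cosetForm_parityInd hres hlam]

theorem eq_zero_of_cosetForm_regularRep (hf : GoodPoly F d aa) (hres : IsResidue d cGen eGen res)
    (hlam : ∀ a, (∀ b, lam (b * a) = 0) → a = 0)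
    {y : CosetSpace (m + 1) (CycAlg F q d aa 1 ⊗[F] CycAlg F q d aa (m + 1))}
    (hy : ∀ h, cosetForm res lam (regularRep q d aa m h y) = 0) : y = 0 := by
  let U := ⨅ h, LinearMap.ker (cosetForm res lam ∘ₗ regularRep q d aa m h)
  have mem_U {v} : v ∈ U ↔ ∀ h, cosetForm res lam (regularRep q d aa m h v) = 0 := by
    simp [U, Submodule.mem_iInf]
  have regularRep_mem (g v) (hv : v ∈ U) : regularRep q d aa m g v ∈ U := by
    rw [mem_U] at hv ⊢
    intro h
    rw [← Module.End.mul_apply, ← map_mul]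
    exact hv (h * g)
  have hU : (cycDatum q d aa m).IsInvariant U :=
    { tInd_mem := fun i hi => regularRep_tGen (q := q) hi ▸ regularRep_mem (tGen i)
      cInd_mem := regularRep_cGen (q := q) m ▸ regularRep_mem cGen
      eInd_mem := regularRep_eGen (q := q) m ▸ regularRep_mem eGen }
  refine hU.eq_zero hf hres (generates_cycAlg q d aa m) hlam (fun v hv => ?_) (mem_U.2 hy)
  have := mem_U.1 hv 1
  rwa [map_one] at this

theorem IsResidue.isFrobeniusForm (hres : IsResidue d (cGen : CycAlg F q d aa 1) eGen res)
    (hf : GoodPoly F d aa) : IsFrobeniusForm (grading q d aa 0) res where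
  even := hres.apply_neg_hom ((heckeCliffordSystem_cycAlg q d aa 0).span_rankOneMonomials hf
    (generates_cycAlg q d aa 0)) (grading_cGen 0) (grading_eGen 0)
  nondegenerate _ := hres.nondegenerate (heckeCliffordSystem_cycAlg q d aa 0) hf
    (generates_cycAlg q d aa 0)

theorem IsFrobeniusForm.inducedForm (hf : GoodPoly F d aa) (hres : IsResidue d cGen eGen res)
    (hlam : IsFrobeniusForm (grading q d aa m) lam) :
    IsFrobeniusForm (grading q d aa (m + 1)) (inducedForm res lam) where
  even := inducedForm_grading (LinearMap.ext (hres.isFrobeniusForm hf).even) hlam.even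
  nondegenerate x hx := by
    refine eq_zero_of_regularRep_apply_eq_zero
      (eq_zero_of_cosetForm_regularRep hf hres hlam.nondegenerate fun h => ?_)
    rw [← Module.End.mul_apply, ← map_mul, ← inducedForm_apply, hx h]

theorem exists_isFrobeniusForm_grading (q : F) (hf : GoodPoly F d aa) (m : ℕ) :
    ∃ lam, IsFrobeniusForm (grading q d aa m) lam := by
  obtain ⟨res, hres⟩ := exists_isResidue q hf
  induction m with
  | zero => exact ⟨res, hres.isFrobeniusForm hf⟩
  | succ m ih =>
    obtain ⟨lam, hlam⟩ := ih
    exact ⟨inducedForm res lam, hlam.inducedForm hf hres⟩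

end InducedForm

section Frobenius

variable {F} {q : F} {d : ℕ} {aa : ℕ → F} {n m : ℕ}

theorem IsCycGrading.involutive {δ : CycAlg F q d aa n →ₐ[F] CycAlg F q d aa n}
    (hδ : IsCycGrading F q n d aa δ) : Function.Involutive δ := by
  obtain ⟨hX, hXinv, hC, hT⟩ : (∀ i, δ (cycX i) = cycX i) ∧ (∀ i, δ (cycXinv i) = cycXinv i) ∧
    (∀ i, δ (cycC i) = -cycC i) ∧ ∀ i, δ (cycT i) = cycT i := hδ
  have eq_top := subalgebra_cycAlg_eq_top (AlgHom.equalizer (δ.comp δ) (AlgHom.id F _))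
    (fun i => by simp [hX]) (fun i => by simp [hXinv]) (fun i => by simp [hC])
    (fun i => by simp [hT])
  exact fun x => eq_top.ge (Algebra.mem_top (x := x))

theorem IsCycGrading.eq_grading {δ : CycAlg F q d aa (m + 1) →ₐ[F] CycAlg F q d aa (m + 1)}
    (hδ : IsCycGrading F q (m + 1) d aa δ) : δ = grading q d aa m := by
  obtain ⟨hX, -, hC, hT⟩ : (∀ i, δ (cycX i) = cycX i) ∧ (∀ i, δ (cycXinv i) = cycXinv i) ∧
    (∀ i, δ (cycC i) = -cycC i) ∧ ∀ i, δ (cycT i) = cycT i := hδ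
  refine (generates_cycAlg q d aa m).hom_ext ?_ ?_ fun i hi => ?_
  · rw [grading_cGen]
    exact hC 0
  · rw [grading_eGen, eGen, map_mul, hC, hX, neg_mul]
  · rw [grading_tGen (by omega), tGen_eq_cycT (by omega)]
    exact hT _

theorem bijective_algebraMap_cycAlg_zero (q : F) (d : ℕ) (aa : ℕ → F) :
    Function.Bijective (algebraMap F (CycAlg F q d aa 0)) := by
  let freeAug : FA F 0 →ₐ[F] F := FreeAlgebra.lift F fun _ => 0
  let affineAug : H F q 0 →ₐ[F] F := RingQuot.liftAlgHom F ⟨freeAug, fun _ _ h => by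
    cases h <;> exact Fin.elim0 ‹Fin 0›⟩
  let aug : CycAlg F q d aa 0 →ₐ[F] F :=
    RingQuot.liftAlgHom F (s := CycRel F q 0 d aa) ⟨affineAug, fun _ _ h => by
      cases h
      simp [felem]⟩
  refine ⟨Function.LeftInverse.injective aug.commutes, ?_⟩
  exact Algebra.surjective_algebraMap_iff.2 (subalgebra_cycAlg_eq_top ⊥ (fun i => i.elim0)
    (fun i => i.elim0) (fun i => i.elim0) fun i => i.elim0).symm

theorem IsFrobeniusForm.exists_of_bijective_algebraMap {A : Type*} [Ring A] [Algebra F A]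
    (hA : Function.Bijective (algebraMap F A)) (δ : A →ₐ[F] A) : ∃ lam, IsFrobeniusForm δ lam := by
  let scalar := (AlgEquiv.ofBijective (Algebra.ofId F A) hA).symm
  refine ⟨scalar.toLinearMap, fun x => ?_, fun x hx => ?_⟩
  · obtain ⟨r, rfl⟩ := hA.surjective x
    rw [AlgHom.commutes]
  · refine (map_eq_zero_iff scalar scalar.injective).1 ?_
    rw [← one_mul x]
    exact hx 1

theorem finite_cycAlg (q : F) (hf : GoodPoly F d aa) (n : ℕ) :
    Module.Finite F (CycAlg F q d aa n) := by
  rcases n with _ | m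
  · exact .of_surjective (Algebra.linearMap F _)
      (bijective_algebraMap_cycAlg_zero q d aa).surjective
  · exact finite_cycAlg_succ q hf m

theorem IsCycGrading.exists_isFrobeniusForm (hf : GoodPoly F d aa)
    {δ : CycAlg F q d aa n →ₐ[F] CycAlg F q d aa n} (hδ : IsCycGrading F q n d aa δ) :
    ∃ lam, IsFrobeniusForm δ lam := by
  rcases n with _ | m
  · exact IsFrobeniusForm.exists_of_bijective_algebraMap
      (bijective_algebraMap_cycAlg_zero q d aa) δ
  · rw [hδ.eq_grading]
    exact exists_isFrobeniusForm_grading q hf m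

theorem cyclotomic_frobenius_general (q : Fˣ) (n d : ℕ) (aa : ℕ → F) (hf : GoodPoly F d aa)
    (δf : Hf F q n d aa →ₐ[F] Hf F q n d aa) (hδ : IsCycGrading F q n d aa δf) :
    ∃ Φ : Hf F q n d aa ≃ₗ[F] (Hf F q n d aa →ₗ[F] F),
      (∀ a x b : Hf F q n d aa, Φ (a * x) b = Φ x (b * a)) ∧
        ∀ x b : Hf F q n d aa, Φ (δf x) b = Φ x (δf b) := by
  have finite := finite_cycAlg (q : F) hf n
  obtain ⟨lam, hlam⟩ := hδ.exists_isFrobeniusForm hf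
  have dual_equiv := hlam.exists_dual_equiv hδ.involutive
  exact dual_equiv

end Frobenius

/-- **`H_n^f` is a Frobenius superalgebra** (Corollary to Theorem `indcoind` of
Brundan–Kleshchev): there is an even isomorphism of left `H_n^f`-modules between the
left regular module and the `F`-linear dual of the right regular module (the left
action on the dual being `(a · φ)(b) = φ(b a)`; evenness is expressed via the grading
automorphism `δ`). -/
theorem cyclotomic_frobenius
    (F : Type) [Field F] [IsAlgClosed F] (h2 : (2 : F) ≠ 0)
    (q : F) (hq : GoodParam F q) (n : ℕ)
    (d : ℕ) (aa : ℕ → F) (hf : GoodPoly F d aa)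
    (δf : Hf F q n d aa →ₐ[F] Hf F q n d aa) (hδ : IsCycGrading F q n d aa δf) :
    ∃ Φ : Hf F q n d aa ≃ₗ[F] (Hf F q n d aa →ₗ[F] F),
      (∀ a x b : Hf F q n d aa, Φ (a * x) b = Φ x (b * a)) ∧
      ∀ x b : Hf F q n d aa, Φ (δf x) b = Φ x (δf b) :=
  cyclotomic_frobenius_general (Units.mk0 q hq.1) n d aa hf δf hδ

end HC
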